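/- arXiv:2404.08954 — 2 statements merged into one kernel-verified Lean document; each statement's English description precedes it below -/
import Mathlib

section
/- Let F be an algebraically closed field, G ⊆ GL_n(F) a closed subgroup acting irreducibly on F^n with G/Z(G) connected, and suppose Z(G) is finite of order N. Then every element of G can be written as ζ·g with ζ an N-th root of unity (viewed as a scalar matrix) and g in the derived group G^der of G°, and the component group G/G° has order dividing N. -/
open Matrix

noncomputable section

variable {F : Type*} [Field F] {n : ℕ}

/-- Zariski-closed subsets of the space of `n × n` matrices: common zero loci of
families of polynomials in the matrix entries. -/
def MatZClosed (S : Set (Matrix (Fin n) (Fin n) F)) : Prop :=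
  ∃ I : Set (MvPolynomial (Fin n × Fin n) F),
    S = {A | ∀ p ∈ I, MvPolynomial.eval (fun q => A q.1 q.2) p = 0}

/-- Zariski-closed subsets of `GL_n(F)`: traces on `GL_n` of Zariski-closed sets
of matrices. -/
def GLZClosed (S : Set (GL (Fin n) F)) : Prop :=
  ∃ C : Set (Matrix (Fin n) (Fin n) F), MatZClosed C ∧
    S = {g : GL (Fin n) F | (g : Matrix (Fin n) (Fin n) F) ∈ C}

/-- A subset of `GL_n(F)` is connected for the Zariski topology:
it cannot be split by two relatively closed sets. -/
def GLZConnected (S : Set (GL (Fin n) F)) : Prop :=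
  S.Nonempty ∧ ∀ U V : Set (GL (Fin n) F), GLZClosed U → GLZClosed V →
    S ⊆ U ∪ V → (S ∩ U).Nonempty → (S ∩ V).Nonempty → (S ∩ (U ∩ V)).Nonempty

/-- Zariski closure of a subset of `GL_n(F)`. -/
def glZClosure (S : Set (GL (Fin n) F)) : Set (GL (Fin n) F) :=
  ⋂₀ {C : Set (GL (Fin n) F) | GLZClosed C ∧ S ⊆ C}

/-- The scalar matrix `c • 1` as an element of `GL_n(F)`. -/
def scalarGL (n : ℕ) (c : Fˣ) : GL (Fin n) F :=
  Units.map (Matrix.scalar (Fin n)).toMonoidHom c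

/-- The group `𝔾_m` of scalar matrices inside `GL_n(F)`. -/
def IsScalarGL (g : GL (Fin n) F) : Prop := ∃ c : Fˣ, g = scalarGL n c

/-- The tautological action of a subgroup `G ⊆ GL_n(F)` on `F^n` is irreducible. -/
def IrredOn (G : Subgroup (GL (Fin n) F)) : Prop :=
  0 < n ∧ ∀ W : Submodule F (Fin n → F),
    (∀ g ∈ G, ∀ v ∈ W, Matrix.mulVec (g : Matrix (Fin n) (Fin n) F) v ∈ W) → W = ⊥ ∨ W = ⊤

/-- The center of a subset of `GL_n(F)`. -/
def centerSet (S : Set (GL (Fin n) F)) : Set (GL (Fin n) F) :=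
  {z ∈ S | ∀ g ∈ S, z * g = g * z}

/-- The saturation of a subset of `GL_n(F)` by the scalar matrices `𝔾_m`.  For a
subgroup `G` whose tautological representation is irreducible (so that
`Z(G) = G ∩ 𝔾_m`), connectedness of this set is equivalent to connectedness of
`G/Z(G)` (the image of `G` in `PGL_n`), since the fibres `g·𝔾_m` are connected. -/
def scalarSaturation (S : Set (GL (Fin n) F)) : Set (GL (Fin n) F) :=
  {x | ∃ g ∈ S, ∃ c : Fˣ, x = scalarGL n c * g}

/-- The identity component of a subgroup `G ⊆ GL_n(F)` for the Zariski topology: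
the union of all Zariski-connected subsets of `G` containing `1`. -/
def identityComponent (G : Subgroup (GL (Fin n) F)) : Set (GL (Fin n) F) :=
  ⋃₀ {S : Set (GL (Fin n) F) | S ⊆ G ∧ GLZConnected S ∧ (1 : GL (Fin n) F) ∈ S}

/-- The identity component of `G`, as a subgroup (the subgroup it generates). -/
def idCompSubgroup (G : Subgroup (GL (Fin n) F)) : Subgroup (GL (Fin n) F) :=
  Subgroup.closure (identityComponent G)

/-- The derived group `G^der` of the identity component of `G`. -/
def derSubgroup (G : Subgroup (GL (Fin n) F)) : Subgroup (GL (Fin n) F) :=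
  ⁅idCompSubgroup G, idCompSubgroup G⁆

/-- A subset of `GL_n(F)` is (linearly) reductive: its tautological representation on
`F^n` is completely reducible. -/
def LinearlyReductiveOn (S : Set (GL (Fin n) F)) : Prop :=
  ∀ W : Submodule F (Fin n → F),
    (∀ g ∈ S, ∀ v ∈ W, Matrix.mulVec (g : Matrix (Fin n) (Fin n) F) v ∈ W) →
    ∃ W' : Submodule F (Fin n → F),
      (∀ g ∈ S, ∀ v ∈ W', Matrix.mulVec (g : Matrix (Fin n) (Fin n) F) v ∈ W') ∧ IsCompl W W'

/-- A subset of `GL_n(F)` is semisimple: reductive with finite center. -/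
def IsSemisimpleOn (S : Set (GL (Fin n) F)) : Prop :=
  LinearlyReductiveOn S ∧ (centerSet S).Finite

end


theorem chev_points {σ F B : Type*} [Finite σ] [Field F] [IsAlgClosed F] [CommRing B]
    [Algebra F B] [Algebra.FiniteType F B] (φ : MvPolynomial σ F →ₐ[F] B)
    (hp : (RingHom.ker (φ : MvPolynomial σ F →+* B)).IsPrime) :
    ∃ a : MvPolynomial σ F, φ a ≠ 0 ∧ ∀ y : σ → F,
      (∀ p, φ p = 0 → MvPolynomial.eval y p = 0) → MvPolynomial.eval y a ≠ 0 →
      ∃ ψ : B →ₐ[F] F, ∀ p, ψ (φ p) = MvPolynomial.eval y p := by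
  have hft : (φ : MvPolynomial σ F →+* B).FiniteType := by
    have : (algebraMap F B).FiniteType := RingHom.finiteType_algebraMap.mpr inferInstance
    rw [← φ.comp_algebraMap] at this
    exact RingHom.FiniteType.of_comp_finiteType this
  have hfp : (φ : MvPolynomial σ F →+* B).FinitePresentation :=
    RingHom.FinitePresentation.of_finiteType.mp hft
  have hc := PrimeSpectrum.isConstructible_range_comap hfp
  obtain ⟨S, hS⟩ := PrimeSpectrum.exists_constructibleSetData_iff.mpr hc
  set P : PrimeSpectrum (MvPolynomial σ F) := ⟨_, hp⟩ with hP
  have hPm : P ∈ Set.range (PrimeSpectrum.comap (φ : MvPolynomial σ F →+* B)) := by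
    have : P.asIdeal ∈ (RingHom.ker (φ : MvPolynomial σ F →+* B)).minimalPrimes := by
      simp [hP, Ideal.minimalPrimes_eq_subsingleton_self]
    obtain ⟨q, hq, h⟩ := Ideal.exists_comap_eq_of_mem_minimalPrimes
      (f := (φ : MvPolynomial σ F →+* B)) (I := ⊥) P.asIdeal (by simpa [RingHom.ker] using this)
    exact ⟨⟨q, hq⟩, PrimeSpectrum.ext h.2⟩
  rw [← hS] at hPm
  simp only [PrimeSpectrum.ConstructibleSetData.toSet, Set.mem_iUnion] at hPm
  obtain ⟨C, hC, hPC⟩ := hPm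
  refine ⟨C.f, ?_, ?_⟩
  · intro h0
    apply hPC.2
    simpa [hP, RingHom.mem_ker] using h0
  intro y hy hya
  let m : PrimeSpectrum (MvPolynomial σ F) :=
    ⟨RingHom.ker (MvPolynomial.eval y), RingHom.ker_isPrime _⟩
  have hm : m ∈ Set.range (PrimeSpectrum.comap (φ : MvPolynomial σ F →+* B)) := by
    rw [← hS]
    simp only [PrimeSpectrum.ConstructibleSetData.toSet, Set.mem_iUnion]
    refine ⟨C, hC, ?_, ?_⟩
    · have h1 := hPC.1
      rw [PrimeSpectrum.mem_zeroLocus] at h1 ⊢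
      exact fun x hx => hy x (h1 hx)
    · rw [PrimeSpectrum.mem_zeroLocus]
      intro h
      exact hya (h rfl)
  obtain ⟨q, hq⟩ := hm
  obtain ⟨M, hM, hqM⟩ := Ideal.exists_le_maximal q.asIdeal q.2.ne_top
  have hmy : ∀ p, MvPolynomial.eval y p = 0 → φ p ∈ M := by
    intro p hp
    apply hqM
    have : p ∈ m.asIdeal := hp
    rw [← hq] at this
    exact this
  let := Ideal.Quotient.field M
  have hfin : Module.Finite F (B ⧸ M) := finite_of_finite_type_of_isJacobsonRing F (B ⧸ M)
  have hbij : Function.Bijective (algebraMap F (B ⧸ M)) :=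
    IsAlgClosed.algebraMap_bijective_of_isIntegral
  let e : F ≃ₐ[F] (B ⧸ M) := AlgEquiv.ofBijective (Algebra.ofId F (B ⧸ M)) hbij
  refine ⟨(e.symm : (B ⧸ M) →ₐ[F] F).comp (Ideal.Quotient.mkₐ F M), ?_⟩
  intro p
  have h1 := hmy (p - MvPolynomial.C (MvPolynomial.eval y p)) (by simp)
  have h2 : Ideal.Quotient.mkₐ F M (φ p) = algebraMap F (B ⧸ M) (MvPolynomial.eval y p) := by
    rw [map_sub] at h1
    have h3 := (Ideal.Quotient.eq).mpr h1
    rw [Ideal.Quotient.mkₐ_eq_mk, h3]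
    have : φ (MvPolynomial.C (MvPolynomial.eval y p)) = algebraMap F B (MvPolynomial.eval y p) :=
      φ.commutes _
    rw [this]; rfl
  simp only [AlgHom.comp_apply]
  rw [h2]
  exact e.symm.commutes _


namespace ZG

noncomputable section Topo
variable {F : Type*} [Field F] {n : ℕ}

/-- evaluation of a polynomial at a group element -/
def evG (g : GL (Fin n) F) : MvPolynomial (Fin n × Fin n) F →+* F :=
  MvPolynomial.eval (fun q => (g : Matrix (Fin n) (Fin n) F) q.1 q.2)

/-- the point of the spectrum -/
def pt (g : GL (Fin n) F) : PrimeSpectrum (MvPolynomial (Fin n × Fin n) F) :=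
  ⟨RingHom.ker (evG g), RingHom.ker_isPrime _⟩

instance zarTop : TopologicalSpace (GL (Fin n) F) :=
  TopologicalSpace.induced pt inferInstance

theorem glz_iff (S : Set (GL (Fin n) F)) :
    GLZClosed S ↔ ∃ I : Set (MvPolynomial (Fin n × Fin n) F),
      S = {g | ∀ p ∈ I, evG g p = 0} := by
  constructor
  · rintro ⟨C, ⟨I, rfl⟩, rfl⟩
    exact ⟨I, rfl⟩
  · rintro ⟨I, rfl⟩
    exact ⟨_, ⟨I, rfl⟩, rfl⟩

theorem isClosed_iff_glz (S : Set (GL (Fin n) F)) : IsClosed S ↔ GLZClosed S := by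
  rw [glz_iff, isClosed_induced_iff]
  constructor
  · rintro ⟨t, ht, rfl⟩
    obtain ⟨I, rfl⟩ := (PrimeSpectrum.isClosed_iff_zeroLocus t).mp ht
    refine ⟨I, ?_⟩
    ext g
    simp [pt, PrimeSpectrum.mem_zeroLocus, Set.subset_def, RingHom.mem_ker]
  · rintro ⟨I, rfl⟩
    refine ⟨_, PrimeSpectrum.isClosed_zeroLocus I, ?_⟩
    ext g
    simp [pt, PrimeSpectrum.mem_zeroLocus, Set.subset_def, RingHom.mem_ker]

instance : TopologicalSpace.NoetherianSpace (GL (Fin n) F) :=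
  Topology.IsInducing.noetherianSpace (i := pt) ⟨rfl⟩

/-- Regular functions on `GL_n`. -/
def Reg (F : Type*) [Field F] (n : ℕ) : Subalgebra F (GL (Fin n) F → F) :=
  Algebra.adjoin F (Set.range (fun (q : Fin n × Fin n) (g : GL (Fin n) F) =>
      (g : Matrix (Fin n) (Fin n) F) q.1 q.2) ∪
    {fun g : GL (Fin n) F => ((g : Matrix (Fin n) (Fin n) F).det)⁻¹})

theorem det_ne (g : GL (Fin n) F) : (g : Matrix (Fin n) (Fin n) F).det ≠ 0 := by
  have := (Matrix.isUnit_iff_isUnit_det _).mp g.isUnit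
  exact this.ne_zero

theorem Reg_entry (i j : Fin n) :
    (fun g : GL (Fin n) F => (g : Matrix (Fin n) (Fin n) F) i j) ∈ Reg F n :=
  Algebra.subset_adjoin (Or.inl ⟨(i, j), rfl⟩)

theorem Reg_detinv :
    (fun g : GL (Fin n) F => ((g : Matrix (Fin n) (Fin n) F).det)⁻¹) ∈ Reg F n :=
  Algebra.subset_adjoin (Or.inr rfl)

/-- The determinant polynomial -/
def detP (F : Type*) [Field F] (n : ℕ) : MvPolynomial (Fin n × Fin n) F :=
  Matrix.det (Matrix.of fun i j => MvPolynomial.X (i, j))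

theorem evG_detP (g : GL (Fin n) F) : evG g (detP F n) = (g : Matrix (Fin n) (Fin n) F).det := by
  rw [detP, RingHom.map_det]
  congr 1
  ext i j
  simp [evG]

theorem Reg_num {φ : GL (Fin n) F → F} (h : φ ∈ Reg F n) :
    ∃ (k : ℕ) (p : MvPolynomial (Fin n × Fin n) F),
      ∀ g : GL (Fin n) F, φ g * (g : Matrix (Fin n) (Fin n) F).det ^ k = evG g p := by
  induction h using Algebra.adjoin_induction with
  | mem x hx =>
    rcases hx with ⟨q, rfl⟩ | hx
    · exact ⟨0, MvPolynomial.X q, fun g => by simp [evG]⟩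
    · rw [Set.mem_singleton_iff] at hx
      subst hx
      exact ⟨1, 1, fun g => by simp [det_ne g]⟩
  | algebraMap r => exact ⟨0, MvPolynomial.C r, fun g => by simp [evG]⟩
  | add x y hx hy hx1 hy1 =>
    obtain ⟨k, p, hp⟩ := hx1
    obtain ⟨l, q, hq⟩ := hy1
    refine ⟨k + l, p * detP F n ^ l + q * detP F n ^ k, fun g => ?_⟩
    rw [map_add, map_mul, map_mul, map_pow, map_pow, evG_detP, ← hp, ← hq]
    simp only [Pi.add_apply]
    ring
  | mul x y hx hy hx1 hy1 =>
    obtain ⟨k, p, hp⟩ := hx1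
    obtain ⟨l, q, hq⟩ := hy1
    refine ⟨k + l, p * q, fun g => ?_⟩
    rw [map_mul, ← hp, ← hq]
    simp only [Pi.mul_apply]
    ring

theorem Reg_isClosed {φ : GL (Fin n) F → F} (h : φ ∈ Reg F n) : IsClosed {g | φ g = 0} := by
  obtain ⟨k, p, hp⟩ := Reg_num h
  rw [isClosed_iff_glz, glz_iff]
  refine ⟨{p}, ?_⟩
  ext g
  simp [← hp, det_ne g]

/-- A matrix-valued function with regular entries -/
def RegM (T : GL (Fin n) F → Matrix (Fin n) (Fin n) F) : Prop :=
  ∀ i j, (fun g => T g i j) ∈ Reg F n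

theorem RegM.mul {T U : GL (Fin n) F → Matrix (Fin n) (Fin n) F} (hT : RegM T) (hU : RegM U) :
    RegM (fun g => T g * U g) := by
  intro i j
  have : (fun g => (T g * U g) i j) = ∑ k, (fun g => T g i k) * (fun g => U g k j) := by
    ext g
    simp [Matrix.mul_apply]
  rw [this]
  exact Subalgebra.sum_mem _ fun k _ => Subalgebra.mul_mem _ (hT i k) (hU k j)

theorem RegM.const (A : Matrix (Fin n) (Fin n) F) : RegM (fun _ => A) := by
  intro i j
  exact (Reg F n).algebraMap_mem (A i j)

theorem RegM.id : RegM (fun g : GL (Fin n) F => (g : Matrix (Fin n) (Fin n) F)) :=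
  fun i j => Reg_entry i j

theorem Reg_poly {T : GL (Fin n) F → GL (Fin n) F}
    (hT : RegM fun g => (T g : Matrix (Fin n) (Fin n) F)) (p : MvPolynomial (Fin n × Fin n) F) :
    (fun g => evG (T g) p) ∈ Reg F n := by
  induction p using MvPolynomial.induction_on with
  | C a =>
    simp only [evG, MvPolynomial.eval_C]
    exact (Reg F n).algebraMap_mem a
  | add p q hp hq =>
    simp only [map_add]
    exact Subalgebra.add_mem _ hp hq
  | mul_X p q hp =>
    have := Subalgebra.mul_mem _ hp (hT q.1 q.2)
    simp only [evG, map_mul, MvPolynomial.eval_X]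
    exact this

theorem Reg_det : (fun g : GL (Fin n) F => (g : Matrix (Fin n) (Fin n) F).det) ∈ Reg F n := by
  have := Reg_poly (T := fun g => g) RegM.id (detP F n)
  simpa [evG_detP] using this

theorem RegM.inv : RegM (fun g : GL (Fin n) F => ((g⁻¹ : GL (Fin n) F) : Matrix (Fin n) (Fin n) F)) := by
  intro i j
  let q : MvPolynomial (Fin n × Fin n) F :=
    Matrix.adjugate (Matrix.of fun i j => MvPolynomial.X (i, j)) i j
  have hq : ∀ g : GL (Fin n) F, evG g q = (g : Matrix (Fin n) (Fin n) F).adjugate i j := by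
    intro g
    have : (evG g).mapMatrix (Matrix.of fun i j => MvPolynomial.X (i, j)) =
        (g : Matrix (Fin n) (Fin n) F) := by
      ext i j
      simp [evG]
    rw [← this, ← RingHom.map_adjugate]
    rfl
  have : (fun g : GL (Fin n) F => ((g⁻¹ : GL (Fin n) F) : Matrix (Fin n) (Fin n) F) i j) =
      (fun g : GL (Fin n) F => ((g : Matrix (Fin n) (Fin n) F).det)⁻¹) * fun g => evG g q := by
    ext g
    rw [Matrix.coe_units_inv, Matrix.inv_def]
    simp [hq]
  rw [this]
  exact Subalgebra.mul_mem _ Reg_detinv (Reg_poly (T := fun g => g) RegM.id q)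

theorem RegM.continuous {T : GL (Fin n) F → GL (Fin n) F}
    (hT : RegM fun g => (T g : Matrix (Fin n) (Fin n) F)) : Continuous T := by
  rw [continuous_iff_isClosed]
  intro S hS
  obtain ⟨I, rfl⟩ := (glz_iff S).mp ((isClosed_iff_glz S).mp hS)
  have : T ⁻¹' {g | ∀ p ∈ I, evG g p = 0} = ⋂ p ∈ I, {g | evG (T g) p = 0} := by
    ext g
    simp
  rw [this]
  exact isClosed_biInter fun p _ => Reg_isClosed (Reg_poly hT p)

theorem cont_mul_left (a : GL (Fin n) F) : Continuous fun g : GL (Fin n) F => a * g := by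
  apply RegM.continuous
  simpa using (RegM.const _).mul RegM.id

theorem cont_mul_right (a : GL (Fin n) F) : Continuous fun g : GL (Fin n) F => g * a := by
  apply RegM.continuous
  simpa using RegM.id.mul (RegM.const _)

theorem cont_inv : Continuous fun g : GL (Fin n) F => g⁻¹ :=
  RegM.continuous RegM.inv

theorem cont_comm_left (a : GL (Fin n) F) : Continuous fun g : GL (Fin n) F => a * g * a⁻¹ * g⁻¹ := by
  apply RegM.continuous
  have := (((RegM.const (a : Matrix (Fin n) (Fin n) F)).mul RegM.id).mul
    (RegM.const ((a⁻¹ : GL (Fin n) F) : Matrix (Fin n) (Fin n) F))).mul RegM.inv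
  exact this

theorem cont_comm_right (a : GL (Fin n) F) : Continuous fun g : GL (Fin n) F => g * a * g⁻¹ * a⁻¹ := by
  apply RegM.continuous
  have := ((RegM.id.mul (RegM.const (a : Matrix (Fin n) (Fin n) F))).mul RegM.inv).mul
    (RegM.const ((a⁻¹ : GL (Fin n) F) : Matrix (Fin n) (Fin n) F))
  exact this

theorem irr_image2 {X Y Z : Type*} [TopologicalSpace X] [TopologicalSpace Y] [TopologicalSpace Z]
    (f : X → Y → Z) (h1 : ∀ x, Continuous (f x)) (h2 : ∀ y, Continuous fun x => f x y)
    {S : Set X} {T : Set Y} (hS : IsIrreducible S) (hT : IsIrreducible T) :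
    IsIrreducible (Set.image2 f S T) := by
  refine ⟨hS.1.image2 hT.1, ?_⟩
  rw [isPreirreducible_iff_isClosed_union_isClosed]
  intro A B hA hB hAB
  have key : ∀ t ∈ T, (∀ s ∈ S, f s t ∈ A) ∨ (∀ s ∈ S, f s t ∈ B) := by
    intro t ht
    exact (isPreirreducible_iff_isClosed_union_isClosed.mp hS.2) _ _
      (hA.preimage (h2 t)) (hB.preimage (h2 t)) fun s hs => hAB ⟨s, hs, t, ht, rfl⟩
  have hcl : ∀ {A : Set Z}, IsClosed A → IsClosed {t | ∀ s ∈ S, f s t ∈ A} := by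
    intro A hA
    have : {t | ∀ s ∈ S, f s t ∈ A} = ⋂ s ∈ S, (f s) ⁻¹' A := by
      ext t; simp
    rw [this]
    exact isClosed_biInter fun s _ => hA.preimage (h1 s)
  rcases (isPreirreducible_iff_isClosed_union_isClosed.mp hT.2) _ _ (hcl hA) (hcl hB)
    (fun t ht => key t ht) with h | h
  · left
    rintro _ ⟨s, hs, t, ht, rfl⟩
    exact h ht s hs
  · right
    rintro _ ⟨s, hs, t, ht, rfl⟩
    exact h ht s hs

theorem irr_of_conn (S : Subgroup (GL (Fin n) F)) (hS : IsPreconnected (S : Set (GL (Fin n) F))) :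
    IsIrreducible (S : Set (GL (Fin n) F)) := by
  have : PreconnectedSpace S := Subtype.preconnectedSpace hS
  have hN : TopologicalSpace.NoetherianSpace S :=
    Topology.IsInducing.subtypeVal.noetherianSpace
  have hfin := TopologicalSpace.NoetherianSpace.finite_irreducibleComponents (α := S)
  have huniq : ∀ Y ∈ irreducibleComponents S, ∀ Y' ∈ irreducibleComponents S,
      ∀ x : S, x ∈ Y → x ∈ Y' → Y = Y' := by
    intro Y hY Y' hY' x hx hx'
    let f : S → S → S := fun y y' => y * x⁻¹ * y'
    have h1 : ∀ y, Continuous (f y) := fun y => by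
      apply Continuous.subtype_mk
      exact (cont_mul_left _).comp continuous_subtype_val
    have h2 : ∀ y', Continuous (fun y => f y y') := fun y' => by
      apply Continuous.subtype_mk
      have := (cont_mul_right ((x⁻¹ * y' : S) : GL (Fin n) F)).comp
        (continuous_subtype_val (p := fun g => g ∈ S))
      convert this using 2
      simp [mul_assoc]
    have hI := irr_image2 f h1 h2 hY.1 hY'.1
    have e1 : Y ⊆ Set.image2 f Y Y' := fun y hy => ⟨y, hy, x, hx', by simp [f]⟩
    have e2 : Y' ⊆ Set.image2 f Y Y' := fun y hy => ⟨x, hx, y, hy, by simp [f]⟩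
    exact (subset_antisymm e1 (hY.2 hI e1)).trans (subset_antisymm e2 (hY'.2 hI e2)).symm
  let Z := irreducibleComponent (1 : S)
  have hZ : Z ∈ irreducibleComponents S := irreducibleComponent_mem_irreducibleComponents 1
  have hZcl : IsClosed Z := isClosed_of_mem_irreducibleComponents Z hZ
  have hcompl : Zᶜ = ⋃ Y ∈ irreducibleComponents S \ {Z}, Y := by
    ext x
    simp only [Set.mem_compl_iff, Set.mem_iUnion, Set.mem_sdiff, Set.mem_singleton_iff]
    constructor
    · intro hx
      refine ⟨irreducibleComponent x, ⟨irreducibleComponent_mem_irreducibleComponents x, ?_⟩,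
        mem_irreducibleComponent⟩
      intro h
      exact hx (h ▸ mem_irreducibleComponent)
    · rintro ⟨Y, ⟨hY, hne⟩, hxY⟩ hxZ
      exact hne (huniq Y hY Z hZ x hxY hxZ)
  have hZopen : IsOpen Z := by
    rw [← isClosed_compl_iff, hcompl]
    exact (hfin.subset Set.sdiff_subset).isClosed_biUnion fun Y hY =>
      isClosed_of_mem_irreducibleComponents Y hY.1
  have hZu : Z = Set.univ :=
    IsClopen.eq_univ ⟨hZcl, hZopen⟩ ⟨1, mem_irreducibleComponent⟩
  have hirr : IsIrreducible (Set.univ : Set S) := hZu ▸ hZ.1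
  have := hirr.image (Subtype.val) continuous_subtype_val.continuousOn
  simpa using this

end Topo
end ZG


namespace ZG

noncomputable section Param
universe u
variable {F : Type u} [Field F] {n : ℕ}

/-- A finitely generated algebra of functions all of whose points are evaluations. -/
def Good (T : Type u) (B : Subalgebra F (T → F)) : Prop :=
  B.FG ∧ ∀ ψ : B →ₐ[F] F, ∃ t, ∀ b : B, ψ b = b.1 t

/-- evaluation at a point as an algebra map -/
def evT {T : Type u} (t : T) : (T → F) →ₐ[F] F := Pi.evalAlgHom F (fun _ => F) t

/-- pull back of functions -/
def pull {T T' : Type u} (f : T → T') : (T' → F) →ₐ[F] (T → F) where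
  toFun b := b ∘ f
  map_one' := rfl
  map_mul' _ _ := rfl
  map_zero' := rfl
  map_add' _ _ := rfl
  commutes' _ := rfl

theorem ae_ev {σ : Type*} (x : σ → F) (p : MvPolynomial σ F) :
    MvPolynomial.aeval x p = MvPolynomial.eval x p := by
  rw [MvPolynomial.aeval_eq_eval₂Hom]; rfl

theorem alg_ext {T : Type u} {B : Subalgebra F (T → F)} (S : Set (T → F))
    (hB : B = Algebra.adjoin F S) (ψ : B →ₐ[F] F) (t : T)
    (h : ∀ b : B, b.1 ∈ S → ψ b = b.1 t) (b : B) : ψ b = b.1 t := by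
  subst hB
  have : ψ = (evT t).comp (Subalgebra.val _) := by
    apply AlgHom.adjoin_ext
    intro x hx
    exact h ⟨x, Algebra.subset_adjoin hx⟩ hx
  rw [this]
  rfl

theorem good_prod {T T' : Type u} {B : Subalgebra F (T → F)} {B' : Subalgebra F (T' → F)}
    (h : Good T B) (h' : Good T' B') : ∃ Bprod : Subalgebra F (T × T' → F), Good (T × T') Bprod ∧
      (∀ b ∈ B, (fun x : T × T' => b x.1) ∈ Bprod) ∧
      (∀ b ∈ B', (fun x : T × T' => b x.2) ∈ Bprod) := by
  let i1 : (T → F) →ₐ[F] (T × T' → F) := pull Prod.fst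
  let i2 : (T' → F) →ₐ[F] (T × T' → F) := pull Prod.snd
  have m1 : ∀ b ∈ B, i1 b ∈ B.map i1 ⊔ B'.map i2 := fun b hb =>
    (le_sup_left : B.map i1 ≤ _) ⟨b, hb, rfl⟩
  have m2 : ∀ b ∈ B', i2 b ∈ B.map i1 ⊔ B'.map i2 := fun b hb =>
    (le_sup_right : B'.map i2 ≤ _) ⟨b, hb, rfl⟩
  refine ⟨B.map i1 ⊔ B'.map i2, ⟨(h.1.map _).sup (h'.1.map _), ?_⟩, m1, m2⟩
  intro ψ
  let ψ1 : B →ₐ[F] F := ψ.comp ((i1.comp B.val).codRestrict _ fun b => m1 b b.2)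
  let ψ2 : B' →ₐ[F] F := ψ.comp ((i2.comp B'.val).codRestrict _ fun b => m2 b b.2)
  obtain ⟨t, ht⟩ := h.2 ψ1
  obtain ⟨t', ht'⟩ := h'.2 ψ2
  refine ⟨(t, t'), ?_⟩
  apply alg_ext (S := (B.map i1 : Set (T × T' → F)) ∪ B'.map i2)
  · rw [Algebra.adjoin_union, Algebra.adjoin_eq, Algebra.adjoin_eq]
  · rintro ⟨b, hb⟩ (hb' | hb')
    · obtain ⟨c, hc, rfl⟩ := hb'
      exact ht ⟨c, hc⟩
    · obtain ⟨c, hc, rfl⟩ := hb'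
      exact ht' ⟨c, hc⟩

/-- A parametrized set -/
def ParM (W : Set (GL (Fin n) F)) : Prop :=
  ∃ (T : Type u) (B : Subalgebra F (T → F)) (w : T → GL (Fin n) F), Good T B ∧ W = Set.range w ∧
    (∀ i j, (fun t => (w t : Matrix (Fin n) (Fin n) F) i j) ∈ B) ∧
    (∀ i j, (fun t => ((w t)⁻¹ : GL (Fin n) F) i j) ∈ B)

theorem mem_mul_entries {T : Type u} (B : Subalgebra F (T → F))
    {M N : T → Matrix (Fin n) (Fin n) F} (hM : ∀ i j, (fun t => M t i j) ∈ B)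
    (hN : ∀ i j, (fun t => N t i j) ∈ B) : ∀ i j, (fun t => (M t * N t) i j) ∈ B := by
  intro i j
  have : (fun g => (M g * N g) i j) = ∑ k, (fun g => M g i k) * (fun g => N g k j) := by
    ext g
    simp [Matrix.mul_apply]
  rw [this]
  exact Subalgebra.sum_mem _ fun k _ => Subalgebra.mul_mem _ (hM i k) (hN k j)

theorem ParM.mul {W W' : Set (GL (Fin n) F)} (h : ParM W) (h' : ParM W') :
    ParM (Set.image2 (fun a b => a * b) W W') := by
  obtain ⟨T, B, w, hg, rfl, h1, h2⟩ := h
  obtain ⟨T', B', w', hg', rfl, h1', h2'⟩ := h'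
  obtain ⟨Bprod, hgprod, m1, m2⟩ := good_prod hg hg'
  refine ⟨T × T', Bprod, fun x => w x.1 * w' x.2, hgprod, ?_, ?_, ?_⟩
  · ext g; simp only [Set.mem_image2, Set.mem_range, Prod.exists, exists_exists_eq_and]
  · simp only [Units.val_mul]
    exact mem_mul_entries Bprod (fun i j => m1 _ (h1 i j)) (fun i j => m2 _ (h1' i j))
  · simp only [_root_.mul_inv_rev, Units.val_mul]
    exact mem_mul_entries Bprod (fun i j => m2 _ (h2' i j)) (fun i j => m1 _ (h2 i j))

theorem ParM.comm {W W' : Set (GL (Fin n) F)} (h : ParM W) (h' : ParM W') :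
    ParM (Set.image2 (fun a b => a * b * a⁻¹ * b⁻¹) W W') := by
  obtain ⟨T, B, w, hg, rfl, h1, h2⟩ := h
  obtain ⟨T', B', w', hg', rfl, h1', h2'⟩ := h'
  obtain ⟨Bprod, hgprod, m1, m2⟩ := good_prod hg hg'
  refine ⟨T × T', Bprod, fun x => w x.1 * w' x.2 * (w x.1)⁻¹ * (w' x.2)⁻¹, hgprod, ?_, ?_, ?_⟩
  · ext g; simp only [Set.mem_image2, Set.mem_range, Prod.exists, exists_exists_eq_and]
  · simp only [Units.val_mul]
    exact mem_mul_entries Bprod (mem_mul_entries Bprod (mem_mul_entries Bprod (fun i j => m1 _ (h1 i j))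
      (fun i j => m2 _ (h1' i j))) (fun i j => m1 _ (h2 i j))) (fun i j => m2 _ (h2' i j))
  · simp only [_root_.mul_inv_rev, inv_inv, Units.val_mul]
    exact mem_mul_entries Bprod (fun i j => m2 _ (h1' i j)) (mem_mul_entries Bprod
      (fun i j => m1 _ (h1 i j)) (mem_mul_entries Bprod
      (fun i j => m2 _ (h2' i j)) (fun i j => m1 _ (h2 i j))))

theorem ParM.of_closed {H : Set (GL (Fin n) F)} (hH : IsClosed H) : ParM H := by
  obtain ⟨I, hI⟩ := (glz_iff H).mp ((isClosed_iff_glz H).mp hH)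
  let i : (GL (Fin n) F → F) →ₐ[F] (H → F) := pull Subtype.val
  have hmap : (Reg F n).map i = Algebra.adjoin F (i '' _) := AlgHom.map_adjoin i _
  have hmem : ∀ φ ∈ Reg F n, (fun h : H => φ h.1) ∈ (Reg F n).map i := fun φ hφ => ⟨φ, hφ, rfl⟩
  refine ⟨H, (Reg F n).map i, Subtype.val, ⟨?_, ?_⟩, by simp, ?_, ?_⟩
  · apply Subalgebra.FG.map
    exact Subalgebra.fg_def.mpr ⟨_, (Set.finite_range _).union (Set.finite_singleton _), rfl⟩
  · intro ψ
    let ψ' : Reg F n →ₐ[F] F := ψ.comp ((i.comp (Subalgebra.val _)).codRestrict _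
      fun b => hmem b b.2)
    let A : Matrix (Fin n) (Fin n) F := Matrix.of fun i j => ψ' ⟨_, Reg_entry i j⟩
    have hpoly : ∀ p : MvPolynomial (Fin n × Fin n) F,
        ψ' ⟨_, Reg_poly (T := fun g => g) RegM.id p⟩ = MvPolynomial.eval (fun q => A q.1 q.2) p := by
      intro p
      let α : MvPolynomial (Fin n × Fin n) F →ₐ[F] Reg F n :=
        MvPolynomial.aeval fun q => ⟨_, Reg_entry q.1 q.2⟩
      have hα : ∀ p, α p = ⟨_, Reg_poly (T := fun g => g) RegM.id p⟩ := by
        intro p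
        apply Subtype.ext
        funext g
        let e : Reg F n →ₐ[F] F := (evT g).comp (Subalgebra.val _)
        have : (e.comp α : MvPolynomial (Fin n × Fin n) F →ₐ[F] F) =
            MvPolynomial.aeval (fun q => (g : Matrix (Fin n) (Fin n) F) q.1 q.2) := by
          ext q
          simp only [AlgHom.comp_apply, α, MvPolynomial.aeval_X]
          rfl
        have h2 := DFunLike.congr_fun this p
        rw [ae_ev] at h2
        exact h2
      rw [← hα]
      have : (ψ'.comp α : MvPolynomial (Fin n × Fin n) F →ₐ[F] F) =
            MvPolynomial.aeval (fun q => A q.1 q.2) := by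
        ext q
        simp only [AlgHom.comp_apply, α, MvPolynomial.aeval_X]
        rfl
      have h2 := DFunLike.congr_fun this p
      rw [ae_ev] at h2
      exact h2
    have hdet : ψ' ⟨_, Reg_detinv⟩ * A.det = 1 := by
      have h1 := hpoly (detP F n)
      have h3 : MvPolynomial.eval (fun q => A q.1 q.2) (detP F n) = A.det := by
        rw [detP, RingHom.map_det]
        congr 1
        ext i j
        simp
      rw [h3] at h1
      rw [← h1, ← map_mul, ← map_one ψ']
      congr 1
      apply Subtype.ext
      funext g
      simp [evG_detP, det_ne g]
    have hA0 : A.det ≠ 0 := fun h => by simp [h] at hdet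
    let g : GL (Fin n) F := Matrix.GeneralLinearGroup.mkOfDetNeZero A hA0
    have hgA : (g : Matrix (Fin n) (Fin n) F) = A := rfl
    have hgH : g ∈ H := by
      rw [hI]
      intro p hp
      have : evG g p = ψ' ⟨_, Reg_poly (T := fun g => g) RegM.id p⟩ := by
        rw [hpoly]; rfl
      rw [this]
      have h0 : ((i.comp (Subalgebra.val (Reg F n))).codRestrict ((Reg F n).map i)
        fun b => hmem b b.2) ⟨_, Reg_poly (T := fun g => g) RegM.id p⟩ = 0 := by
        apply Subtype.ext
        funext h
        have hh : h.1 ∈ {g | ∀ p ∈ I, evG g p = 0} := hI ▸ h.2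
        exact hh p hp
      exact (congrArg ψ h0).trans (map_zero ψ)
    refine ⟨⟨g, hgH⟩, ?_⟩
    refine alg_ext _ hmap ψ _ ?_
    rintro ⟨b, hb⟩ ⟨c, hc, rfl⟩
    rcases hc with ⟨q, rfl⟩ | hc
    · rfl
    · rw [Set.mem_singleton_iff] at hc
      subst hc
      have : ψ' ⟨_, Reg_detinv⟩ = A.det⁻¹ := eq_inv_of_mul_eq_one_left hdet
      exact this
  · intro i j
    exact hmem _ (Reg_entry i j)
  · intro i j
    exact hmem _ (RegM.inv i j)

theorem ParM.chev [IsAlgClosed F] {W : Set (GL (Fin n) F)} (h : ParM W) (hW : IsIrreducible W) :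
    ∃ a : MvPolynomial (Fin n × Fin n) F, (∃ g ∈ W, evG g a ≠ 0) ∧ ∀ g : GL (Fin n) F,
      (∀ p, (∀ w ∈ W, evG w p = 0) → evG g p = 0) → evG g a ≠ 0 → g ∈ W := by
  obtain ⟨T, B, w, hg, rfl, h1, h2⟩ := h
  let φ : MvPolynomial (Fin n × Fin n) F →ₐ[F] B := MvPolynomial.aeval fun q => ⟨_, h1 q.1 q.2⟩
  have hφ : ∀ p t, (φ p).1 t = evG (w t) p := by
    intro p t
    let e : B →ₐ[F] F := (evT t).comp (Subalgebra.val _)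
    have : (e.comp φ : MvPolynomial (Fin n × Fin n) F →ₐ[F] F) =
        MvPolynomial.aeval (fun q => (w t : Matrix (Fin n) (Fin n) F) q.1 q.2) := by
      ext q
      simp only [AlgHom.comp_apply, φ, MvPolynomial.aeval_X]
      rfl
    have h2 := DFunLike.congr_fun this p
    rw [ae_ev] at h2
    exact h2
  have hφ0 : ∀ p, φ p = 0 ↔ ∀ t, evG (w t) p = 0 := by
    intro p
    constructor
    · intro h t
      rw [← hφ, h]; rfl
    · intro h
      apply Subtype.ext
      funext t
      rw [hφ, h]; rfl
  have : Algebra.FiniteType F B := (Subalgebra.fg_iff_finiteType B).mp hg.1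
  have hprime : (RingHom.ker (φ : MvPolynomial (Fin n × Fin n) F →+* B)).IsPrime := by
    obtain ⟨⟨_, ⟨t0, rfl⟩⟩, hpre⟩ := hW
    constructor
    · intro h
      have h1 : (1 : MvPolynomial (Fin n × Fin n) F) ∈
        RingHom.ker (φ : MvPolynomial (Fin n × Fin n) F →+* B) := h ▸ Submodule.mem_top
      have := (hφ0 1).mp h1 t0
      simp at this
    · intro p q hpq
      have hpq' := (hφ0 _).mp hpq
      have hcl : ∀ p, IsClosed {g : GL (Fin n) F | evG g p = 0} := fun p =>
        Reg_isClosed (Reg_poly (T := fun g => g) RegM.id p)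
      rcases (isPreirreducible_iff_isClosed_union_isClosed.mp hpre) _ _ (hcl p) (hcl q) (by
        rintro _ ⟨t, rfl⟩
        have := hpq' t
        rw [map_mul] at this
        exact mul_eq_zero.mp this) with h | h
      · left
        exact (hφ0 p).mpr fun t => h ⟨t, rfl⟩
      · right
        exact (hφ0 q).mpr fun t => h ⟨t, rfl⟩
  obtain ⟨a, ha, hpts⟩ := chev_points φ hprime
  refine ⟨a, ?_, ?_⟩
  · by_contra hcon
    push Not at hcon
    exact ha ((hφ0 a).mpr fun t => hcon _ ⟨t, rfl⟩)
  · intro g hgv hga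
    obtain ⟨ψ, hψ⟩ := hpts (fun q => (g : Matrix (Fin n) (Fin n) F) q.1 q.2)
      (fun p hp => hgv p (by rintro _ ⟨t, rfl⟩; exact (hφ0 p).mp hp t)) hga
    obtain ⟨t, ht⟩ := hg.2 ψ
    refine ⟨t, ?_⟩
    apply Units.ext
    ext i j
    have e1 := hψ (MvPolynomial.X (i, j))
    rw [ht, hφ] at e1
    simpa [evG] using e1

end Param
end ZG


namespace ZG

noncomputable section Dense
universe u
variable {F : Type u} [Field F] {n : ℕ}

theorem closed_zero (p : MvPolynomial (Fin n × Fin n) F) :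
    IsClosed {g : GL (Fin n) F | evG g p = 0} :=
  Reg_isClosed (Reg_poly (T := fun g => g) RegM.id p)

/-- vanishing ideal -/
def van (S : Set (GL (Fin n) F)) : Ideal (MvPolynomial (Fin n × Fin n) F) where
  carrier := {p | ∀ g ∈ S, evG g p = 0}
  add_mem' := fun {a b} ha hb g hg => by rw [map_add, ha g hg, hb g hg, add_zero]
  zero_mem' := fun g _ => map_zero _
  smul_mem' := fun c x hx g hg => by rw [smul_eq_mul, map_mul, hx g hg, mul_zero]

theorem mem_van {S : Set (GL (Fin n) F)} {p} : p ∈ van S ↔ ∀ g ∈ S, evG g p = 0 := Iff.rfl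

theorem van_prime {S : Set (GL (Fin n) F)} (h : IsIrreducible S) : (van S).IsPrime := by
  obtain ⟨⟨g0, h0⟩, hpre⟩ := h
  constructor
  · intro h
    have h1 : (1 : MvPolynomial (Fin n × Fin n) F) ∈ van S := h ▸ Submodule.mem_top
    have := h1 g0 h0
    simp at this
  · intro p q hpq
    rcases (isPreirreducible_iff_isClosed_union_isClosed.mp hpre) _ _ (closed_zero p)
      (closed_zero q) (by
        intro t ht
        have := hpq t ht
        rw [map_mul] at this
        exact mul_eq_zero.mp this) with h | h
    · left
      exact fun t ht => h ht
    · right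
      exact fun t ht => h ht

theorem scalarGL_coe (c : Fˣ) :
    ((scalarGL n c : GL (Fin n) F) : Matrix (Fin n) (Fin n) F) = (c : F) • 1 := by
  rw [Matrix.smul_one_eq_diagonal]; rfl

theorem scalarGL_comm (c : Fˣ) (g : GL (Fin n) F) : scalarGL n c * g = g * scalarGL n c := by
  apply Units.ext
  rw [Units.val_mul, Units.val_mul, scalarGL_coe]
  simp

theorem scalarGL_mul (c d : Fˣ) : (scalarGL n (c * d) : GL (Fin n) F) = scalarGL n c * scalarGL n d :=
  map_mul _ _ _

theorem scalarGL_one : (scalarGL n 1 : GL (Fin n) F) = 1 := map_one _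

theorem scalarGL_inv (c : Fˣ) : (scalarGL n c⁻¹ : GL (Fin n) F) = (scalarGL n c)⁻¹ := map_inv _ _

theorem scal_closed (hn : 0 < n) : IsClosed (Set.range (scalarGL n : Fˣ → GL (Fin n) F)) := by
  have : Set.range (scalarGL n : Fˣ → GL (Fin n) F) =
      ⋂ (q : Fin n × Fin n), {g : GL (Fin n) F | evG g (MvPolynomial.X q -
        if q.1 = q.2 then MvPolynomial.X (⟨0, hn⟩, ⟨0, hn⟩) else 0) = 0} := by
    ext g
    simp only [Set.mem_range, Set.mem_iInter, Set.mem_ofPred_eq]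
    constructor
    · rintro ⟨c, rfl⟩ ⟨i, j⟩
      by_cases h : i = j
      · subst h; simp [evG, scalarGL_coe]
      · simp [evG, scalarGL_coe, h]
    · intro h
      have hg : (g : Matrix (Fin n) (Fin n) F) = ((g : Matrix (Fin n) (Fin n) F) ⟨0, hn⟩ ⟨0, hn⟩) • 1 := by
        ext i j
        have := h (i, j)
        by_cases hij : i = j
        · subst hij
          simp [evG, sub_eq_zero] at this
          simp [this]
        · simp [evG, hij] at this
          simp [this, hij]
      have hne : (g : Matrix (Fin n) (Fin n) F) ⟨0, hn⟩ ⟨0, hn⟩ ≠ 0 := by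
        intro h0
        rw [h0, zero_smul] at hg
        apply det_ne g
        haveI : Nonempty (Fin n) := ⟨⟨0, hn⟩⟩
        rw [hg, Matrix.det_zero]
      refine ⟨Units.mk0 _ hne, ?_⟩
      apply Units.ext
      rw [scalarGL_coe, Units.val_mk0, ← hg]
  rw [this]
  exact isClosed_iInter fun q => closed_zero _

/-- restriction of a polynomial to scalars times a matrix -/
def resS (g : GL (Fin n) F) : MvPolynomial (Fin n × Fin n) F →ₐ[F] Polynomial F :=
  MvPolynomial.aeval fun q => Polynomial.C ((g : Matrix (Fin n) (Fin n) F) q.1 q.2) * Polynomial.X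

theorem resS_eval (g : GL (Fin n) F) (c : Fˣ) (p) :
    (resS g p).eval (c : F) = evG (scalarGL n c * g) p := by
  have : ((Polynomial.aeval (c : F)).comp (resS g)) =
      MvPolynomial.aeval (fun q => ((scalarGL n c * g : GL (Fin n) F) : Matrix (Fin n) (Fin n) F) q.1 q.2) := by
    ext q
    simp only [resS, AlgHom.comp_apply, MvPolynomial.aeval_X, map_mul, Polynomial.aeval_X,
      Polynomial.aeval_C, Units.val_mul, scalarGL_coe, Matrix.smul_mul, one_mul, Matrix.smul_apply,
      smul_eq_mul]
    rw [mul_comm]; rfl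
  have h2 := DFunLike.congr_fun this p
  rw [ae_ev] at h2
  rw [← Polynomial.coe_aeval_eq_eval]
  exact h2

theorem poly_zero_units [Infinite F] {p : Polynomial F} (h : ∀ c : Fˣ, p.eval (c : F) = 0) : p = 0 := by
  apply Polynomial.eq_zero_of_infinite_isRoot
  apply Set.Infinite.mono (s := {x : F | x ≠ 0})
  · intro x hx
    exact h (Units.mk0 x hx)
  · have : {x : F | x ≠ 0} = {0}ᶜ := rfl
    rw [this]
    exact (Set.finite_singleton (0:F)).infinite_compl

theorem scal_irr [Infinite F] : IsIrreducible (Set.range (scalarGL n : Fˣ → GL (Fin n) F)) := by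
  refine ⟨⟨_, 1, rfl⟩, ?_⟩
  rw [isPreirreducible_iff_isClosed_union_isClosed]
  intro z1 z2 h1 h2 hsub
  obtain ⟨I, hI⟩ := (glz_iff z1).mp ((isClosed_iff_glz z1).mp h1)
  obtain ⟨J, hJ⟩ := (glz_iff z2).mp ((isClosed_iff_glz z2).mp h2)
  by_contra hcon
  push Not at hcon
  obtain ⟨hc1, hc2⟩ := hcon
  obtain ⟨_, ⟨c, rfl⟩, hc⟩ := Set.not_subset.mp hc1
  obtain ⟨_, ⟨d, rfl⟩, hd⟩ := Set.not_subset.mp hc2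
  rw [hI] at hc
  rw [hJ] at hd
  simp only [Set.mem_ofPred_eq, not_forall] at hc hd
  obtain ⟨p, hp, hpc⟩ := hc
  obtain ⟨q, hq, hqd⟩ := hd
  have : resS (1 : GL (Fin n) F) p * resS 1 q = 0 := by
    apply poly_zero_units
    intro c
    rw [Polynomial.eval_mul, resS_eval, resS_eval, mul_one]
    rcases hsub ⟨c, rfl⟩ with h | h
    · rw [hI] at h
      rw [h p hp, zero_mul]
    · rw [hJ] at h
      rw [h q hq, mul_zero]
  rcases mul_eq_zero.mp this with h | h
  · apply hpc
    rw [← mul_one (scalarGL n c), ← resS_eval, h, Polynomial.eval_zero]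
  · apply hqd
    rw [← mul_one (scalarGL n d), ← resS_eval, h, Polynomial.eval_zero]

/-- The sets of products of a scalar and `m` commutators. -/
def WW (H : Set (GL (Fin n) F)) : ℕ → Set (GL (Fin n) F)
  | 0 => Set.range (scalarGL n : Fˣ → GL (Fin n) F)
  | m + 1 => Set.image2 (fun a b => a * b) (WW H m) (Set.image2 (fun a b => a * b * a⁻¹ * b⁻¹) H H)

theorem WW_irr [Infinite F] {H : Set (GL (Fin n) F)} (hH : IsIrreducible H) (m : ℕ) :
    IsIrreducible (WW H m) := by
  induction m with
  | zero => exact scal_irr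
  | succ m ih =>
    exact irr_image2 _ (fun a => cont_mul_left a) (fun b => cont_mul_right b) ih
      (irr_image2 _ (fun a => cont_comm_left a) (fun b => cont_comm_right b) hH hH)

theorem WW_par (hn : 0 < n) {H : Set (GL (Fin n) F)} (hH : IsClosed H) (m : ℕ) :
    ParM (WW H m) := by
  induction m with
  | zero => exact ParM.of_closed (scal_closed hn)
  | succ m ih => exact ih.mul ((ParM.of_closed hH).comm (ParM.of_closed hH))

theorem WW_mono {H : Subgroup (GL (Fin n) F)} : Monotone (WW (H : Set (GL (Fin n) F))) := by
  apply monotone_nat_of_le_succ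
  intro m x hx
  exact ⟨x, hx, 1, ⟨1, H.one_mem, 1, H.one_mem, by simp⟩, by simp⟩

theorem WW_union {H : Subgroup (GL (Fin n) F)} (c : Fˣ) {d : GL (Fin n) F} (hd : d ∈ ⁅H, H⁆) :
    ∃ m, scalarGL n c * d ∈ WW (H : Set (GL (Fin n) F)) m := by
  rw [Subgroup.commutator_def] at hd
  induction hd using Subgroup.closure_induction_right with
  | one => exact ⟨0, c, by simp⟩
  | mul_right x y hx hy ih =>
    obtain ⟨m, hm⟩ := ih
    obtain ⟨a, ha, b, hb, rfl⟩ := hy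
    refine ⟨m + 1, _, hm, _, ⟨a, ha, b, hb, rfl⟩, ?_⟩
    simp [commutatorElement_def, mul_assoc]
  | mul_inv_cancel x y hx hy ih =>
    obtain ⟨m, hm⟩ := ih
    obtain ⟨a, ha, b, hb, rfl⟩ := hy
    refine ⟨m + 1, _, hm, _, ⟨b, hb, a, ha, rfl⟩, ?_⟩
    simp [commutatorElement_def, mul_assoc]

theorem WW_sub {H : Subgroup (GL (Fin n) F)} (m : ℕ) {x : GL (Fin n) F}
    (hx : x ∈ WW (H : Set (GL (Fin n) F)) m) : ∃ c : Fˣ, ∃ d ∈ ⁅H, H⁆, x = scalarGL n c * d := by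
  induction m generalizing x with
  | zero =>
    obtain ⟨c, rfl⟩ := hx
    exact ⟨c, 1, one_mem _, by simp⟩
  | succ m ih =>
    obtain ⟨y, hy, _, ⟨a, ha, b, hb, rfl⟩, rfl⟩ := hx
    obtain ⟨c, d, hd, rfl⟩ := ih hy
    exact ⟨c, d * (a * b * a⁻¹ * b⁻¹), mul_mem hd (Subgroup.commutator_mem_commutator ha hb),
      by simp [mul_assoc]⟩

theorem part2 [IsAlgClosed F] (hn : 0 < n) (H : Subgroup (GL (Fin n) F))
    (hc : IsClosed (H : Set (GL (Fin n) F))) (hirr : IsIrreducible (H : Set (GL (Fin n) F)))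
    (hs : ∀ c : Fˣ, scalarGL n c ∈ H)
    (hdense : ∀ p, (∀ c : Fˣ, ∀ d ∈ ⁅H, H⁆, evG (scalarGL n c * d) p = 0) → ∀ h ∈ H, evG h p = 0) :
    ∀ h ∈ H, ∃ c : Fˣ, ∃ d ∈ ⁅H, H⁆, h = scalarGL n c * d := by
  have : Infinite F := IsAlgClosed.instInfinite
  let V : ℕ → Ideal (MvPolynomial (Fin n × Fin n) F) := fun m => van (WW H m)
  have hV : ∀ m, (V m).IsPrime := fun m => van_prime (WW_irr hirr m)
  obtain ⟨m, hm⟩ : ∃ m, ∀ m' , (V m).height ≤ (V m').height := by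
    obtain ⟨_, ⟨m, rfl⟩, hm⟩ := WellFounded.has_min (wellFounded_lt (α := ℕ∞))
      (Set.range fun m => (V m).height) ⟨_, 0, rfl⟩
    exact ⟨m, fun m' => not_lt.mp (hm _ ⟨m', rfl⟩)⟩
  have hanti : ∀ k l, k ≤ l → V l ≤ V k := fun k l hkl p hp g hg => hp g (WW_mono hkl hg)
  have hstab : ∀ m', m ≤ m' → V m' = V m := by
    intro m' hmm'
    by_contra hne
    have hlt := lt_of_le_of_ne (hanti _ _ hmm') hne
    haveI := hV m
    haveI := hV m'
    have := Ideal.height_strict_mono_of_isPrime_of_isPrime hlt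
    exact absurd (hm m') (not_le.mpr this)
  have hVH : ∀ p ∈ V m, ∀ h ∈ H, evG h p = 0 := by
    intro p hp
    apply hdense
    intro c d hd
    obtain ⟨k, hk⟩ := WW_union c hd
    rcases le_total k m with h | h
    · exact hp _ (WW_mono h hk)
    · rw [← hstab k h] at hp
      exact hp _ hk
  obtain ⟨a, ⟨g, hg, hga⟩, hsub⟩ := (WW_par hn hc m).chev (WW_irr hirr m)
  have hWH : ∀ x, (∃ c : Fˣ, ∃ d ∈ ⁅H, H⁆, x = scalarGL n c * d) → x ∈ H := by
    rintro x ⟨c, d, hd, rfl⟩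
    exact mul_mem (hs c) (Subgroup.commutator_le_self H hd)
  intro h hh
  -- the two open sets
  have hgH : g ∈ H := hWH g (WW_sub m hg)
  have key : ∃ x ∈ H, evG x a ≠ 0 ∧ evG (h * x⁻¹) a ≠ 0 := by
    have o1 : IsOpen {x : GL (Fin n) F | evG x a ≠ 0} := (closed_zero a).isOpen_compl
    have o2 : IsOpen {x : GL (Fin n) F | evG (h * x⁻¹) a ≠ 0} :=
      o1.preimage ((cont_mul_left h).comp cont_inv)
    obtain ⟨x, hx1, hx2, hx3⟩ := hirr.2 _ _ o1 o2 ⟨g, hgH, hga⟩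
      ⟨g⁻¹ * h, mul_mem (inv_mem hgH) hh, by simpa using hga⟩
    exact ⟨x, hx1, hx2, hx3⟩
  obtain ⟨x, hxH, hx1, hx2⟩ := key
  obtain ⟨c, d, hd, e1⟩ := WW_sub m (hsub x (fun p hp => hVH p hp x hxH) hx1)
  obtain ⟨c', d', hd', e2⟩ := WW_sub m (hsub (h * x⁻¹)
    (fun p hp => hVH p hp _ (mul_mem hh (inv_mem hxH))) hx2)
  refine ⟨c' * c, d' * d, mul_mem hd' hd, ?_⟩
  calc h = (h * x⁻¹) * x := by simp
    _ = _ := by rw [e2, e1, scalarGL_mul]; simp only [mul_assoc]; rw [← mul_assoc d', ← scalarGL_comm c d']; simp only [mul_assoc]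

end Dense
end ZG


namespace ZG

noncomputable section Act
open MvPolynomial
variable {R : Type*} [CommRing R] {n : ℕ} {ι : Type*}

/-- `f(X) ↦ f(A X)` -/
def act (A : Matrix (Fin n) (Fin n) R) :
    MvPolynomial (Fin n × ι) R →ₐ[R] MvPolynomial (Fin n × ι) R :=
  aeval fun q => ∑ l, C (A q.1 l) * X (l, q.2)

@[simp] theorem act_X (A : Matrix (Fin n) (Fin n) R) (q : Fin n × ι) :
    act A (X q) = ∑ l, C (A q.1 l) * X (l, q.2) := by
  simp [act]

theorem act_comp (A B : Matrix (Fin n) (Fin n) R) :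
    (act A).comp (act B) = (act (B * A) : MvPolynomial (Fin n × ι) R →ₐ[R] _) := by
  ext1 q
  simp only [AlgHom.comp_apply, act_X, map_sum, map_mul, algHom_C, Matrix.mul_apply, Finset.sum_mul,
    Finset.mul_sum]
  rw [Finset.sum_comm]
  simp [mul_assoc, algebraMap_eq]

theorem act_act (A B : Matrix (Fin n) (Fin n) R) (p : MvPolynomial (Fin n × ι) R) :
    act A (act B p) = act (B * A) p := DFunLike.congr_fun (act_comp A B) p

@[simp] theorem act_one (p : MvPolynomial (Fin n × ι) R) : act 1 p = p := by
  have : (act 1 : MvPolynomial (Fin n × ι) R →ₐ[R] _) = AlgHom.id R _ := by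
    ext1 q
    simp [Matrix.one_apply]
  rw [this]; rfl

theorem act_map {S : Type*} [CommRing S] (φ : R →+* S) (A : Matrix (Fin n) (Fin n) R)
    (p : MvPolynomial (Fin n × ι) R) : map φ (act A p) = act (A.map φ) (map φ p) := by
  induction p using MvPolynomial.induction_on with
  | C a => simp [act]
  | add p q hp hq => simp [hp, hq]
  | mul_X p q hp => simp [hp]

theorem act_eval (A : Matrix (Fin n) (Fin n) R) (x : Fin n × ι → R)
    (p : MvPolynomial (Fin n × ι) R) :
    eval x (act A p) = eval (fun q => ∑ l, A q.1 l * x (l, q.2)) p := by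
  induction p using MvPolynomial.induction_on with
  | C a => simp [act]
  | add p q hp hq => simp [hp, hq]
  | mul_X p q hp => simp [hp]

theorem act_hom (A : Matrix (Fin n) (Fin n) R) {p : MvPolynomial (Fin n × ι) R} {N : ℕ}
    (hp : p.IsHomogeneous N) : (act A p).IsHomogeneous N := by
  have := hp.aeval (fun q : Fin n × ι => ∑ l, C (A q.1 l) * X (R := R) (l, q.2)) (n := 1) (fun q => by
    apply IsHomogeneous.sum
    intro l _
    have := (isHomogeneous_C (Fin n × ι) (A q.1 l)).mul (isHomogeneous_X R (l, q.2))
    simpa using this)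
  simpa [act] using this

theorem act_inj {A B : Matrix (Fin n) (Fin n) R} (h : B * A = 1) {p : MvPolynomial (Fin n × ι) R}
    (hp : act B p = 0) : p = 0 := by
  have := act_act A B p
  rw [hp, h, map_zero, act_one] at this
  exact this.symm


/-- the weight of a monomial -/
def wt (lam : Fin n → ℝ) (β : Fin n × ι →₀ ℕ) : ℝ := Finsupp.weight (fun q : Fin n × ι => lam q.1) β

/-- all weights at least `c` -/
def WtGe (lam : Fin n → ℝ) (c : ℝ) (p : MvPolynomial (Fin n × ι) R) : Prop :=
  ∀ β, coeff β p ≠ 0 → c ≤ wt lam β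

theorem wt_add (lam : Fin n → ℝ) (β β' : Fin n × ι →₀ ℕ) : wt lam (β + β') = wt lam β + wt lam β' :=
  map_add _ _ _

theorem WtGe.mono {lam : Fin n → ℝ} {c d : ℝ} {p : MvPolynomial (Fin n × ι) R} (h : WtGe lam d p)
    (hcd : c ≤ d) : WtGe lam c p := fun β hβ => hcd.trans (h β hβ)

theorem WtGe.mul {lam : Fin n → ℝ} {c d : ℝ} {p q : MvPolynomial (Fin n × ι) R} (hp : WtGe lam c p)
    (hq : WtGe lam d q) : WtGe lam (c + d) (p * q) := by
  classical
  intro β hβ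
  rw [coeff_mul] at hβ
  obtain ⟨x, hx, hne⟩ := Finset.exists_ne_zero_of_sum_ne_zero hβ
  rw [Finset.HasAntidiagonal.mem_antidiagonal] at hx
  rw [← hx, wt_add]
  exact add_le_add (hp _ (left_ne_zero_of_mul hne)) (hq _ (right_ne_zero_of_mul hne))

theorem WtGe.sum {lam : Fin n → ℝ} {c : ℝ} {α : Type*} (s : Finset α) (p : α → MvPolynomial (Fin n × ι) R)
    (hp : ∀ a ∈ s, WtGe lam c (p a)) : WtGe lam c (∑ a ∈ s, p a) := by
  intro β hβ
  rw [coeff_sum] at hβ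
  obtain ⟨x, hx, hne⟩ := Finset.exists_ne_zero_of_sum_ne_zero hβ
  exact hp x hx β hne

theorem WtGe.C {lam : Fin n → ℝ} (a : R) : WtGe lam 0 (C a : MvPolynomial (Fin n × ι) R) := by
  classical
  intro β hβ
  rw [coeff_C] at hβ
  have : 0 = β := by
    by_contra h
    simp [h] at hβ
  rw [← this]
  simp [wt]

theorem WtGe.X {lam : Fin n → ℝ} (q : Fin n × ι) :
    WtGe lam (lam q.1) (X q : MvPolynomial (Fin n × ι) R) := by
  classical
  intro β hβ
  rw [coeff_X] at hβ
  have : Finsupp.single q 1 = β := by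
    by_contra h
    simp [h] at hβ
  rw [← this]
  simp [wt, Finsupp.weight_apply]

theorem WtGe.pow {lam : Fin n → ℝ} {c : ℝ} {p : MvPolynomial (Fin n × ι) R} (hp : WtGe lam c p)
    (m : ℕ) : WtGe lam (m • c) (p ^ m) := by
  induction m with
  | zero => simpa using WtGe.C (R := R) (ι := ι) (lam := lam) 1
  | succ m ih =>
    rw [pow_succ, succ_nsmul]
    exact ih.mul hp

theorem WtGe.prod {lam : Fin n → ℝ} {α : Type*} (s : Finset α) (c : α → ℝ)
    (p : α → MvPolynomial (Fin n × ι) R)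
    (hp : ∀ a ∈ s, WtGe lam (c a) (p a)) : WtGe lam (∑ a ∈ s, c a) (∏ a ∈ s, p a) := by
  classical
  induction s using Finset.induction_on with
  | empty => simpa using WtGe.C (R := R) (ι := ι) (lam := lam) 1
  | insert a s ha ih =>
    rw [Finset.sum_insert ha, Finset.prod_insert ha]
    exact (hp a (by simp)).mul (ih fun b hb => hp b (by simp [hb]))

theorem WtGe.act {lam lam' : Fin n → ℝ} {c : ℝ} {p : MvPolynomial (Fin n × ι) R}
    {U : Matrix (Fin n) (Fin n) R}
    (hp : WtGe lam' c p) (hU : ∀ i l, U i l ≠ 0 → lam' i ≤ lam l) : WtGe lam c (act U p) := by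
  classical
  have key : ∀ q : Fin n × ι, WtGe lam (lam' q.1) (∑ l, MvPolynomial.C (U q.1 l) *
      MvPolynomial.X (R := R) (l, q.2)) := by
    intro q
    apply WtGe.sum
    intro l _
    by_cases h : U q.1 l = 0
    · rw [h]
      intro β hβ
      simp at hβ
    · have := (WtGe.C (lam := lam) (ι := ι) (U q.1 l)).mul (WtGe.X (R := R) (lam := lam) (l, q.2))
      exact this.mono (by simpa using hU _ _ h)
  rw [p.as_sum, map_sum]
  apply WtGe.sum
  intro β hβ
  rw [mem_support_iff] at hβ
  rw [monomial_eq, map_mul]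
  have h1 : ZG.act U (MvPolynomial.C (coeff β p) : MvPolynomial (Fin n × ι) R) = MvPolynomial.C (coeff β p) := by
    simp [ZG.act]
  rw [h1, Finsupp.prod, map_prod]
  have h2 := WtGe.prod (R := R) (lam := lam) β.support (fun q => (β q) • lam' q.1)
    (fun q => ZG.act U (MvPolynomial.X q ^ β q)) (fun q _ => by
      rw [map_pow, act_X]
      exact (key q).pow _)
  refine ((WtGe.C (R := R) (lam := lam) (ι := ι) (coeff β p)).mul h2).mono ?_
  rw [zero_add]
  refine (hp β hβ).trans (le_of_eq ?_)
  rw [wt, Finsupp.weight_apply, Finsupp.sum]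

end Act
end ZG


namespace ZG

noncomputable section Elim
variable {K : Type*} [Field K] {n : ℕ}

/-- row elimination matrix -/
def elL (s : Fin n) (v : Fin n → K) : Matrix (Fin n) (Fin n) K :=
  Matrix.of fun r m => if m = s then (if r = s then 1 else v r) else if r = m then 1 else 0

theorem elL_mul (s : Fin n) (v : Fin n → K) (g : Matrix (Fin n) (Fin n) K) (r l : Fin n) :
    (elL s v * g) r l = g r l + (if r = s then 0 else v r * g s l) := by
  rw [Matrix.mul_apply]
  have : ∀ m, elL s v r m * g m l = (if r = m then g m l else 0) +
      (if m = s then (if r = s then 0 else v r * g s l) else 0) := by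
    intro m
    simp only [elL, Matrix.of_apply]
    by_cases hm : m = s
    · subst hm
      by_cases hr : r = m <;> simp [hr]
    · by_cases hr : r = m <;> simp [hr, hm]
  simp [this, Finset.sum_add_distrib]

/-- column elimination matrix -/
def elR (j : Fin n) (v : Fin n → K) : Matrix (Fin n) (Fin n) K := (elL j v)ᵀ

theorem mul_elR (j : Fin n) (v : Fin n → K) (g : Matrix (Fin n) (Fin n) K) (r l : Fin n) :
    (g * elR j v) r l = g r l + (if l = j then 0 else v l * g r j) := by
  have : (g * elR j v) = (elL j v * gᵀ)ᵀ := by rw [Matrix.transpose_mul, transpose_transpose]; rfl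
  rw [this, transpose_apply, elL_mul]
  simp

theorem elL_det (s : Fin n) (v : Fin n → K) : (elL s v).det = 1 := by
  have : elL s v = Matrix.updateCol 1 s (fun r => if r = s then 1 else v r) := by
    ext r m
    simp only [elL, Matrix.of_apply, Matrix.updateCol_apply, Matrix.one_apply]
  rw [this, ← Matrix.cramer_apply, Matrix.cramer_one]
  simp

theorem elR_det (s : Fin n) (v : Fin n → K) : (elR s v).det = 1 := by
  rw [elR, det_transpose, elL_det]

/-- processed row -/
def Proc (g : Matrix (Fin n) (Fin n) K) (i j : Fin n) : Prop :=
  g i j ≠ 0 ∧ (∀ j', j' ≠ j → g i j' = 0) ∧ (∀ i', i' ≠ i → g i' j = 0)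

theorem elim (M : Submonoid (Matrix (Fin n) (Fin n) K))
    (hM : ∀ (Q : Finset (Fin n)) (g : Matrix (Fin n) (Fin n) K), Q ≠ Finset.univ → g.det ≠ 0 →
      (∀ i ∈ Q, ∃ j, Proc g i j) → ∃ s j, s ∉ Q ∧ g s j ≠ 0 ∧
        ((∀ i ∈ Q, g i j = 0) → elL s (fun r => - (g r j / g s j)) ∈ M) ∧
          elR j (fun l => - (g s l / g s j)) ∈ M)
    (g : Matrix (Fin n) (Fin n) K) (hg : g.det ≠ 0) :
    ∃ U ∈ M, ∃ U' ∈ M, U.det = 1 ∧ U'.det = 1 ∧ ∃ σ : Equiv.Perm (Fin n), ∀ i j,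
      (U * g * U') i j ≠ 0 ↔ j = σ i := by
  have main : ∀ m ≤ n, ∃ U ∈ M, ∃ U' ∈ M, U.det = 1 ∧ U'.det = 1 ∧ ∃ Q : Finset (Fin n), Q.card = m ∧
      ∀ i ∈ Q, ∃ j, Proc (U * g * U') i j := by
    intro m
    induction m with
    | zero => exact fun _ => ⟨1, one_mem _, 1, one_mem _, by simp, by simp, ∅, by simp, by simp⟩
    | succ m ih =>
      intro hmn
      obtain ⟨U, hU, U', hU', hd, hd', Q, hQ, hproc⟩ := ih (by omega)
      set g0 := U * g * U' with hg0
      have hg0d : g0.det ≠ 0 := by simp [hg0, hd, hd', hg]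
      have hQne : Q ≠ Finset.univ := by
        intro h
        rw [h, Finset.card_univ, Fintype.card_fin] at hQ
        omega
      obtain ⟨s, j, hs, hsj, hL, hR⟩ := hM Q g0 hQne hg0d hproc
      have hzero : ∀ i ∈ Q, g0 i j = 0 := by
        intro i hi
        obtain ⟨p, hp1, hp2, hp3⟩ := hproc i hi
        apply hp2
        rintro rfl
        exact hsj (hp3 s (fun h => hs (h ▸ hi)))
      have hL := hL hzero
      refine ⟨_, M.mul_mem hL hU, _, M.mul_mem hU' hR, by simp [elL_det, hd], by simp [elR_det, hd'],
        insert s Q, by rw [Finset.card_insert_of_notMem hs, hQ], ?_⟩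
      have e : elL s (fun r => - (g0 r j / g0 s j)) * U * g * (U' * elR j (fun l => - (g0 s l / g0 s j)))
          = elL s (fun r => - (g0 r j / g0 s j)) * g0 * elR j (fun l => - (g0 s l / g0 s j)) := by
        simp only [hg0, Matrix.mul_assoc]
      rw [e]
      have hf : ∀ r l, (elL s (fun r => - (g0 r j / g0 s j)) * g0 *
          elR j (fun l => - (g0 s l / g0 s j))) r l =
          if r = s then (if l = j then g0 s j else 0) else g0 r l - g0 r j / g0 s j * g0 s l := by
        intro r l
        rw [mul_elR, elL_mul, elL_mul]
        by_cases hr : r = s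
        · subst hr
          by_cases hl : l = j
          · subst hl; simp
          · simp [hl]; field_simp; ring
        · by_cases hl : l = j
          · subst hl; simp [hr]; ring
          · simp [hl, hr]; field_simp; ring
      intro i hi
      rw [Finset.mem_insert] at hi
      rcases hi with rfl | hi
      · refine ⟨j, ?_, ?_, ?_⟩
        · rw [hf]; simpa using hsj
        · intro j' hj'
          rw [hf]; simp [hj']
        · intro i' hi'
          rw [hf]; simp [hi']; field_simp; ring
      · obtain ⟨p, hp1, hp2, hp3⟩ := hproc i hi
        have his : i ≠ s := fun h => hs (h ▸ hi)
        have hpj : p ≠ j := fun h => hp1 (h ▸ hzero i hi)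
        have hsp : g0 s p = 0 := hp3 s his.symm
        refine ⟨p, ?_, ?_, ?_⟩
        · rw [hf]; simpa [his, hsp] using hp1
        · intro j' hj'
          rw [hf]; simp [his, hp2 j' hj', hzero i hi]
        · intro i' hi'
          rw [hf]
          by_cases h : i' = s
          · simp [h, hpj]
          · simp [h, hp3 i' hi', hsp]
  obtain ⟨U, hU, U', hU', hd, hd', Q, hQ, hproc⟩ := main n le_rfl
  have hQu : Q = Finset.univ := (Finset.card_eq_iff_eq_univ Q).mp (by simpa using hQ)
  refine ⟨U, hU, U', hU', hd, hd', ?_⟩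
  have hproc' : ∀ i, ∃ j, Proc (U * g * U') i j := fun i => hproc i (by simp [hQu])
  choose σ hσ using hproc'
  have hinj : Function.Injective σ := by
    intro a b hab
    by_contra hne
    have := (hσ b).2.2 a hne
    rw [← hab] at this
    exact (hσ a).1 this
  refine ⟨Equiv.ofBijective σ (Finite.injective_iff_bijective.mp hinj), fun i j => ?_⟩
  rw [Equiv.ofBijective_apply]
  constructor
  · intro h
    by_contra hne
    exact h ((hσ i).2.1 j hne)
  · rintro rfl
    exact (hσ i).1

theorem row_ne_zero {g : Matrix (Fin n) (Fin n) K} (hg : g.det ≠ 0) (i : Fin n) : ∃ j, g i j ≠ 0 := by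
  by_contra h
  push Not at h
  exact hg (Matrix.det_eq_zero_of_row_eq_zero i h)

/-- block triangular matrices -/
def BT (K : Type*) [Field K] (lam : Fin n → ℝ) : Submonoid (Matrix (Fin n) (Fin n) K) where
  carrier := {U | U.BlockTriangular lam}
  mul_mem' := fun ha hb => ha.mul hb
  one_mem' := Matrix.blockTriangular_one

theorem bruhat (lam : Fin n → ℝ) (g : Matrix (Fin n) (Fin n) K) (hg : g.det ≠ 0) :
    ∃ U : Matrix (Fin n) (Fin n) K, U.BlockTriangular lam ∧
    ∃ U' : Matrix (Fin n) (Fin n) K, U'.BlockTriangular lam ∧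
    U.det = 1 ∧ U'.det = 1 ∧ ∃ σ : Equiv.Perm (Fin n), ∀ i j,
      (U * g * U') i j ≠ 0 ↔ j = σ i := by
  classical
  refine elim (BT K lam) ?_ g hg
  intro Q g hQ hg _
  have hne : (Finset.univ \ Q).Nonempty := by
    rw [Finset.sdiff_nonempty]
    intro h
    exact hQ (Finset.univ_subset_iff.mp h)
  obtain ⟨s, hs, hsmax⟩ := Finset.exists_max_image _ lam hne
  have hne2 : (Finset.univ.filter fun j => g s j ≠ 0).Nonempty := by
    obtain ⟨j, hj⟩ := row_ne_zero hg s
    exact ⟨j, by simp [hj]⟩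
  obtain ⟨j, hj, hjmin⟩ := Finset.exists_min_image _ lam hne2
  simp only [Finset.mem_sdiff, Finset.mem_univ, true_and, Finset.mem_filter] at hs hsmax hj hjmin
  refine ⟨s, j, hs, hj, ?_, ?_⟩
  · intro hz a b hab
    simp only [elL, Matrix.of_apply]
    by_cases hb : b = s
    · subst hb
      by_cases ha : a = b
      · subst ha; exact absurd hab (lt_irrefl _)
      · simp only [ha, if_true, if_false]
        have : a ∈ Q := by
          by_contra h
          exact absurd (hsmax a h) (not_le.mpr hab)
        simp [hz a this]
    · have : a ≠ b := by rintro rfl; exact absurd hab (lt_irrefl _)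
      simp [hb, this]
  · intro a b hab
    simp only [elR, elL, Matrix.transpose_apply, Matrix.of_apply]
    by_cases hb : a = j
    · subst hb
      by_cases ha : b = a
      · subst ha; exact absurd hab (lt_irrefl _)
      · simp only [ha, if_true, if_false]
        have : g s b = 0 := by
          by_contra h
          exact absurd (hjmin b h) (not_le.mpr hab)
        simp [this]
    · have : b ≠ a := by rintro rfl; exact absurd hab (lt_irrefl _)
      simp [hb, this]

/-- matrices with entries in a subring -/
def MO (O : Subring K) (n : ℕ) : Submonoid (Matrix (Fin n) (Fin n) K) where
  carrier := {U | ∀ i j, U i j ∈ O}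
  mul_mem' := fun {a b} ha hb i j => by
    rw [Matrix.mul_apply]
    exact Subring.sum_mem _ fun k _ => mul_mem (ha i k) (hb k j)
  one_mem' := fun i j => by
    rw [Matrix.one_apply]
    split
    · exact one_mem _
    · exact zero_mem _

theorem smith (O : ValuationSubring K) (g : Matrix (Fin n) (Fin n) K) (hg : g.det ≠ 0) :
    ∃ U : Matrix (Fin n) (Fin n) K, (∀ i j, U i j ∈ O) ∧
    ∃ U' : Matrix (Fin n) (Fin n) K, (∀ i j, U' i j ∈ O) ∧
    U.det = 1 ∧ U'.det = 1 ∧ ∃ σ : Equiv.Perm (Fin n), ∀ i j,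
      (U * g * U') i j ≠ 0 ↔ j = σ i := by
  refine elim (MO O.toSubring n) ?_ g hg
  intro Q g hQ hg _
  have hne : (Finset.univ \ Q).Nonempty := by
    rw [Finset.sdiff_nonempty]
    intro h
    exact hQ (Finset.univ_subset_iff.mp h)
  obtain ⟨i0, hi0⟩ := hne
  obtain ⟨⟨s, j⟩, hs, hmax⟩ := Finset.exists_max_image ((Finset.univ \ Q) ×ˢ (Finset.univ : Finset (Fin n)))
    (fun q => O.valuation (g q.1 q.2)) ⟨(i0, i0), by simpa using hi0⟩
  simp only [Finset.mem_product, Finset.mem_sdiff, Finset.mem_univ, true_and, and_true, Prod.forall] at hs hmax hi0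
  have hj : g s j ≠ 0 := by
    intro h0
    obtain ⟨l, hl⟩ := row_ne_zero hg i0
    have := hmax i0 l hi0
    rw [h0, map_zero, le_zero_iff, map_eq_zero] at this
    exact hl this
  have hle : ∀ a, O.valuation a ≤ O.valuation (g s j) → - (a / g s j) ∈ O := by
    intro a ha
    rw [neg_mem_iff, ← O.valuation_le_one_iff, map_div₀]
    exact div_le_one_of_le₀ ha zero_le
  have hone : (1 : K) ∈ O.toSubring := one_mem _
  have hzero : (0 : K) ∈ O.toSubring := zero_mem _
  refine ⟨s, j, hs, hj, ?_, ?_⟩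
  · intro hz a b
    simp only [elL, Matrix.of_apply]
    split_ifs with h1 h2 h3
    · exact hone
    · by_cases ha : a ∈ Q
      · rw [hz a ha]; simp
      · exact hle _ (hmax a j ha)
    · exact hone
    · exact hzero
  · intro a b
    simp only [elR, elL, Matrix.transpose_apply, Matrix.of_apply]
    split_ifs with h1 h2 h3
    · exact hone
    · exact hle _ (hmax s b hs)
    · exact hone
    · exact hzero

end Elim
end ZG


namespace ZG

noncomputable section Kempf
open MvPolynomial
variable {K : Type*} [Field K] {n : ℕ} {ι : Type*} [Finite ι]

theorem exists_min_norm {S : Set (Fin n → ℝ)} (hS : IsClosed S) (hne : S.Nonempty) :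
    ∃ x ∈ S, ∀ y ∈ S, ∑ i, x i ^ 2 ≤ ∑ i, y i ^ 2 := by
  let e : EuclideanSpace ℝ (Fin n) → (Fin n → ℝ) := fun x => x.ofLp
  have he : Continuous e := PiLp.continuous_ofLp 2 _
  have hS' : IsClosed (e ⁻¹' S) := hS.preimage he
  obtain ⟨y, hy⟩ := hne
  obtain ⟨x, hx, hx2⟩ := hS'.exists_infDist_eq_dist ⟨WithLp.toLp 2 y, hy⟩ 0
  refine ⟨x.ofLp, hx, fun z hz => ?_⟩
  have h1 : dist 0 x ≤ dist 0 (WithLp.toLp 2 z) := by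
    rw [← hx2]
    exact Metric.infDist_le_dist_of_mem (show e (WithLp.toLp 2 z) ∈ S from hz)
  rw [dist_zero_left, dist_zero_left] at h1
  have h2 := pow_le_pow_left₀ (norm_nonneg _) h1 2
  rw [EuclideanSpace.real_norm_sq_eq, EuclideanSpace.real_norm_sq_eq] at h2
  exact h2

theorem finite_deg (N : ℕ) : {β : Fin n × ι →₀ ℕ | β.degree = N}.Finite := by
  classical
  have := Fintype.ofFinite ι
  apply Set.Finite.subset (Finset.finite_toSet (Finset.finsuppAntidiag (Finset.univ : Finset (Fin n × ι)) N))
  intro β hβ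
  simp only [Finset.mem_coe, Finset.mem_finsuppAntidiag, Finset.subset_univ, and_true]
  have h2 : β.degree = N := hβ
  rw [← h2, Finsupp.degree_eq_sum]

theorem wt_const (t : ℝ) (β : Fin n × ι →₀ ℕ) : wt (fun _ => t) β = β.degree * t := by
  rw [wt, Finsupp.weight_apply, Finsupp.degree_apply, Finsupp.sum]
  simp [Finset.sum_mul]

theorem wt_lin (a b : ℝ) (lam mu : Fin n → ℝ) (β : Fin n × ι →₀ ℕ) :
    wt (fun i => a * lam i + b * mu i) β = a * wt lam β + b * wt mu β := by
  simp only [wt, Finsupp.weight_apply, Finsupp.sum, Finset.mul_sum, ← Finset.sum_add_distrib]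
  apply Finset.sum_congr rfl
  intro q _
  simp only [nsmul_eq_mul]
  ring

theorem kempf (w : MvPolynomial (Fin n × ι) K) (hw : w ≠ 0) (k : ℕ) (hhom : w.IsHomogeneous (n * k))
    (A0 : Matrix (Fin n) (Fin n) K) (hA0 : A0.det ≠ 0) (lam0 : Fin n → ℝ)
    (h0 : ∀ β, coeff β (act A0 w) ≠ 0 → k * ∑ i, lam0 i < wt lam0 β) :
    ∃ A : Matrix (Fin n) (Fin n) K, A.det ≠ 0 ∧ ∃ lam : Fin n → ℝ, (∃ i j, lam i < lam j) ∧
      ∀ h : Matrix (Fin n) (Fin n) K, h.det ≠ 0 → (∃ c : K, act h w = C c * w) →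
        (A⁻¹ * h * A).BlockTriangular lam := by
  classical
  let LamA : Matrix (Fin n) (Fin n) K → Set (Fin n → ℝ) := fun A =>
    {lam | WtGe lam (1 + k * ∑ i, lam i) (act A w)}
  let B0 : Set (Fin n × ι →₀ ℕ) := {β | β.degree = n * k}
  have hB0 : B0.Finite := finite_deg _
  have hsupp : ∀ A β, coeff β (act A w) ≠ 0 → β ∈ B0 := by
    intro A β hβ
    have := (act_hom A hhom) hβ
    change β.degree = n * k
    rw [Finsupp.degree_eq_weight_one]
    exact this
  let LamS : Set (Fin n × ι →₀ ℕ) → Set (Fin n → ℝ) := fun S =>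
    {lam | ∀ β ∈ S, 1 + k * ∑ i, lam i ≤ wt lam β}
  have hAS : ∀ A, LamA A = LamS {β | coeff β (act A w) ≠ 0} := fun A => rfl
  have hcont : ∀ β : Fin n × ι →₀ ℕ, Continuous fun lam : Fin n → ℝ => wt lam β := by
    intro β
    simp only [wt, Finsupp.weight_apply, Finsupp.sum]
    fun_prop
  have hSclosed : ∀ S, IsClosed (LamS S) := by
    intro S
    have : LamS S = ⋂ β ∈ S, {lam | 1 + k * ∑ i, lam i ≤ wt lam β} := by
      ext lam; simp [LamS]
    rw [this]
    exact isClosed_biInter fun β _ => isClosed_le (by fun_prop) (hcont β)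
  let 𝒮 : Set (Set (Fin n × ι →₀ ℕ)) := {S | ∃ A : Matrix (Fin n) (Fin n) K, A.det ≠ 0 ∧
    S = {β | coeff β (act A w) ≠ 0}}
  have h𝒮 : 𝒮.Finite := by
    apply hB0.finite_subsets.subset
    rintro S ⟨A, _, rfl⟩
    exact fun β hβ => hsupp A β hβ
  have hclosed : IsClosed (⋃ S ∈ 𝒮, LamS S) := h𝒮.isClosed_biUnion fun S _ => hSclosed S
  have hne : (⋃ S ∈ 𝒮, LamS S).Nonempty := by
    have hfin : {β | coeff β (act A0 w) ≠ 0}.Finite := hB0.subset fun β hβ => hsupp A0 β hβ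
    obtain ⟨ε, hε, hε2⟩ : ∃ ε : ℝ, 0 < ε ∧ ∀ β, coeff β (act A0 w) ≠ 0 →
        ε ≤ wt lam0 β - k * ∑ i, lam0 i := by
      by_cases hemp : {β | coeff β (act A0 w) ≠ 0}.Nonempty
      · obtain ⟨β, hβ, hmin⟩ := Set.exists_min_image _ (fun β => wt lam0 β - k * ∑ i, lam0 i) hfin hemp
        exact ⟨_, sub_pos.mpr (h0 β hβ), hmin⟩
      · exact ⟨1, one_pos, fun β hβ => absurd ⟨β, hβ⟩ hemp⟩
    refine ⟨fun i => ε⁻¹ * lam0 i + 0 * lam0 i, ?_⟩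
    simp only [Set.mem_iUnion]
    refine ⟨_, ⟨A0, hA0, rfl⟩, ?_⟩
    intro β hβ
    rw [wt_lin]
    have := hε2 β hβ
    simp only [zero_mul, add_zero, ← Finset.mul_sum]
    have h3 : ε⁻¹ * ε ≤ ε⁻¹ * (wt lam0 β - k * ∑ i, lam0 i) :=
      mul_le_mul_of_nonneg_left this (by positivity)
    rw [inv_mul_cancel₀ hε.ne'] at h3
    linarith
  obtain ⟨lam, hlam, hmin⟩ := exists_min_norm hclosed hne
  simp only [Set.mem_iUnion] at hlam hmin
  obtain ⟨_, ⟨A, hA, rfl⟩, hlamA⟩ := hlam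
  have hlamA : WtGe lam (1 + k * ∑ i, lam i) (act A w) := hlamA
  have hAu : IsUnit A.det := isUnit_iff_ne_zero.mpr hA
  refine ⟨A, hA, lam, ?_, ?_⟩
  · by_contra hcon
    push Not at hcon
    have hn : 0 < n ∨ n = 0 := by omega
    have hconst : ∃ t, lam = fun _ => t := by
      rcases hn with hn | hn
      · exact ⟨lam ⟨0, hn⟩, funext fun i => le_antisymm (hcon _ _) (hcon _ _)⟩
      · subst hn; exact ⟨0, funext fun i => i.elim0⟩
    obtain ⟨t, rfl⟩ := hconst
    have hne0 : act A w ≠ 0 := fun h => hw (act_inj (A := A⁻¹) (Matrix.mul_nonsing_inv A hAu) h)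
    obtain ⟨β, hβ⟩ := MvPolynomial.exists_coeff_ne_zero hne0
    have h1 := hlamA β hβ
    have h2 : β.degree = n * k := hsupp A β hβ
    rw [wt_const, h2] at h1
    simp at h1
    linarith
  · rintro h hh ⟨c, hc⟩
    set h' := A⁻¹ * h * A with hh'
    set w1 := act A w with hw1
    have e1 : act h' w1 = C c * w1 := by
      rw [hw1, act_act, hh', ← Matrix.mul_assoc, ← Matrix.mul_assoc, Matrix.mul_nonsing_inv A hAu,
        Matrix.one_mul, ← act_act, hc, map_mul, MvPolynomial.algHom_C]
      rfl
    have hd' : h'.det ≠ 0 := by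
      rw [hh', Matrix.det_mul, Matrix.det_mul]
      refine mul_ne_zero (mul_ne_zero ?_ hh) hA
      rw [Matrix.det_nonsing_inv]
      simpa using hA
    obtain ⟨U, hU, U', hU', hdU, hdU', σ, hσ⟩ := bruhat lam h' hd'
    have hUu : IsUnit U.det := by rw [hdU]; exact isUnit_one
    have hUu' : IsUnit U'.det := by rw [hdU']; exact isUnit_one
    set g' := U * h' * U' with hg'
    have hg'd : IsUnit g'.det := by
      rw [hg', Matrix.det_mul, Matrix.det_mul, hdU, hdU', one_mul, mul_one]
      exact isUnit_iff_ne_zero.mpr hd'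
    have hinvT : ∀ V : Matrix (Fin n) (Fin n) K, IsUnit V.det → V.BlockTriangular lam →
        V⁻¹.BlockTriangular lam := by
      intro V hV hVT
      haveI := Matrix.invertibleOfIsUnitDet V hV
      exact Matrix.blockTriangular_inv_of_blockTriangular hVT
    have hact : ∀ V : Matrix (Fin n) (Fin n) K, V.BlockTriangular lam → ∀ c p,
        WtGe lam c p → WtGe lam c (act V p : MvPolynomial (Fin n × ι) K) := by
      intro V hV c p hp
      refine hp.act fun i l hil => ?_
      by_contra hlt
      exact hil (hV (not_le.mp hlt))
    set p := act U⁻¹ w1 with hp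
    have hpw : WtGe lam (1 + k * ∑ i, lam i) p := hact _ (hinvT U hUu hU) _ _ hlamA
    have hgp : act g' p = C c * act U' w1 := by
      rw [hp, act_act, hg', ← Matrix.mul_assoc, ← Matrix.mul_assoc, Matrix.nonsing_inv_mul U hUu,
        Matrix.one_mul, ← act_act, e1, map_mul, MvPolynomial.algHom_C]
      rfl
    have hgpw : WtGe lam (1 + k * ∑ i, lam i) (act g' p) := by
      rw [hgp]
      have := (WtGe.C (R := K) (ι := ι) (lam := lam) c).mul (hact U' hU' _ _ hlamA)
      rwa [zero_add] at this
    have hginv : ∀ l i, g'⁻¹ l i ≠ 0 → l = σ i := by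
      intro l i hli
      obtain ⟨m, rfl⟩ := σ.surjective l
      have h1 : (g' * g'⁻¹) m i = (1 : Matrix (Fin n) (Fin n) K) m i := by
        rw [Matrix.mul_nonsing_inv g' hg'd]
      rw [Matrix.mul_apply, Finset.sum_eq_single (σ m)] at h1
      · by_contra hne
        have hmi : m ≠ i := fun h => hne (by rw [h])
        rw [Matrix.one_apply_ne hmi] at h1
        rcases mul_eq_zero.mp h1 with h | h
        · exact (hσ m (σ m)).mpr rfl h
        · exact hli h
      · intro b _ hb
        have : g' m b = 0 := by
          by_contra h
          exact hb ((hσ m b).mp h)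
        rw [this, zero_mul]
      · simp
    have hpw2 : WtGe (fun i => lam (σ i)) (1 + k * ∑ i, lam i) p := by
      have := hgpw.act (lam := fun i => lam (σ i)) (U := g'⁻¹) (fun i l hil => by
        rw [hginv i l hil])
      rwa [act_act, Matrix.mul_nonsing_inv g' hg'd, act_one] at this
    have hsum : ∑ i, lam (σ i) = ∑ i, lam i := Equiv.sum_comp σ lam
    have hsum2 : ∑ i, lam (σ i) ^ 2 = ∑ i, lam i ^ 2 := Equiv.sum_comp σ (fun i => lam i ^ 2)
    have hpA : p = act (A * U⁻¹) w := by rw [hp, hw1, act_act]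
    have hmem := hmin (fun i => (1/2) * lam i + (1/2) * lam (σ i)) ⟨_, ⟨A * U⁻¹, by
      rw [Matrix.det_mul, Matrix.det_nonsing_inv, hdU]; simpa using hA, rfl⟩, by
        intro β hβ
        rw [← hpA] at hβ
        rw [wt_lin, Finset.sum_add_distrib, ← Finset.mul_sum, ← Finset.mul_sum, hsum]
        have h1 := hpw β hβ
        have h2 := hpw2 β hβ
        linarith⟩
    have hid : ∑ i, ((1/2) * lam i + (1/2) * lam (σ i)) ^ 2 = ∑ i, lam i ^ 2 -
        (1/4) * ∑ i, (lam i - lam (σ i)) ^ 2 := by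
      have : ∑ i, ((1/2) * lam i + (1/2) * lam (σ i)) ^ 2 = ∑ i, ((1/2) * lam i ^ 2 +
          (1/2) * lam (σ i) ^ 2 - (1/4) * (lam i - lam (σ i)) ^ 2) :=
        Finset.sum_congr rfl fun i _ => by ring
      rw [this, Finset.sum_sub_distrib, Finset.sum_add_distrib, ← Finset.mul_sum, ← Finset.mul_sum,
        ← Finset.mul_sum, hsum2]
      ring
    rw [hid] at hmem
    have hz : ∑ i, (lam i - lam (σ i)) ^ 2 = 0 :=
      le_antisymm (by linarith) (Finset.sum_nonneg fun i _ => sq_nonneg _)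
    have heq : ∀ i, lam i = lam (σ i) := by
      intro i
      have := (Finset.sum_eq_zero_iff_of_nonneg fun i _ => sq_nonneg _).mp hz i (Finset.mem_univ i)
      exact sub_eq_zero.mp (pow_eq_zero_iff two_ne_zero |>.mp this)
    have hgT : g'.BlockTriangular lam := by
      intro i j hij
      by_contra h
      have := (hσ i j).mp h
      rw [this, ← heq] at hij
      exact lt_irrefl _ hij
    have : h' = U⁻¹ * g' * U'⁻¹ := by
      rw [hg', ← Matrix.mul_assoc, ← Matrix.mul_assoc, Matrix.nonsing_inv_mul U hUu, Matrix.one_mul,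
        Matrix.mul_assoc, Matrix.mul_nonsing_inv U' hUu', Matrix.mul_one]
    rw [this]
    exact ((hinvT U hUu hU).mul hgT).mul (hinvT U' hUu' hU')

end Kempf
end ZG


namespace ZG

section Gordan

theorem gordan {Γ : Type*} [LinearOrderedCommGroupWithZero Γ] : ∀ {n : ℕ} (y : Fin n → Γ)
    (_ : ∀ l, y l ≠ 0) (P : Set (Fin n → ℤ)) (_ : P.Finite)
    (_ : ∀ a ∈ P, 1 < ∏ l, y l ^ (a l)),
    ∃ lam : Fin n → ℝ, ∀ a ∈ P, 0 < ∑ l, (a l : ℝ) * lam l := by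
  intro n
  induction n with
  | zero =>
    intro y hy P hP h
    refine ⟨fun _ => 0, fun a ha => ?_⟩
    have := h a ha
    simp at this
  | succ n ih =>
    intro y hy P hP h
    let T : Set (Fin n → ℤ) := (fun a => Fin.tail a) '' {a ∈ P | a 0 = 0} ∪
      Set.image2 (fun a b => fun i => (- b 0) * a i.succ + a 0 * b i.succ) {a ∈ P | 0 < a 0} {b ∈ P | b 0 < 0}
    obtain ⟨mu, hmu⟩ := ih (fun l => y l.succ) (fun l => hy _) T
      (((hP.subset (Set.sep_subset _ _)).image _).union
        ((hP.subset (Set.sep_subset _ _)).image2 _ (hP.subset (Set.sep_subset _ _)))) (by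
      rintro _ (⟨a, ⟨ha, ha0⟩, rfl⟩ | ⟨a, ⟨ha, ha0⟩, b, ⟨hb, hb0⟩, rfl⟩)
      · have := h a ha
        rw [Fin.prod_univ_succ, ha0] at this
        simpa [Fin.tail] using this
      · have h1 := h a ha
        have h2 := h b hb
        obtain ⟨p, hp⟩ := Int.eq_ofNat_of_zero_le ha0.le
        obtain ⟨q, hq⟩ := Int.eq_ofNat_of_zero_le (neg_nonneg.mpr hb0.le)
        have hp0 : p ≠ 0 := by rintro rfl; simp at hp; omega
        have hq0 : q ≠ 0 := by rintro rfl; simp at hq; omega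
        have h3 : 1 < (∏ l, y l ^ (a l)) ^ q * (∏ l, y l ^ (b l)) ^ p :=
          one_lt_mul'' (one_lt_pow₀ h1 hq0) (one_lt_pow₀ h2 hp0)
        refine lt_of_lt_of_eq h3 ?_
        rw [← Finset.prod_pow, ← Finset.prod_pow, ← Finset.prod_mul_distrib]
        have h4 : ∀ l, (y l ^ a l) ^ q * (y l ^ b l) ^ p = y l ^ ((-b 0) * a l + a 0 * b l) := by
          intro l
          rw [zpow_add₀ (hy l), hp, hq, mul_comm (q : ℤ), mul_comm (p : ℤ), _root_.zpow_mul, _root_.zpow_mul]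
          simp
        simp only [h4]
        rw [Fin.prod_univ_succ]
        have : (-b 0) * a 0 + a 0 * b 0 = 0 := by ring
        rw [this]; simp)
    let f : (Fin (n+1) → ℤ) → ℝ := fun a => - (∑ l : Fin n, (a l.succ : ℝ) * mu l) / a 0
    have hA : {a ∈ P | 0 < a 0}.Finite := hP.subset (Set.sep_subset _ _)
    have hB : {a ∈ P | a 0 < 0}.Finite := hP.subset (Set.sep_subset _ _)
    obtain ⟨t, ht1, ht2⟩ := Order.exists_between_finsets (hA.image f).toFinset (hB.image f).toFinset (by
      intro x hx y hy
      rw [Set.Finite.mem_toFinset] at hx hy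
      obtain ⟨a, ⟨ha, ha0⟩, rfl⟩ := hx
      obtain ⟨b, ⟨hb, hb0⟩, rfl⟩ := hy
      have := hmu _ (Or.inr ⟨a, ⟨ha, ha0⟩, b, ⟨hb, hb0⟩, rfl⟩)
      have e : ∑ l : Fin n, (((-b 0) * a l.succ + a 0 * b l.succ : ℤ) : ℝ) * mu l =
        (-(b 0 : ℝ)) * (∑ l : Fin n, (a l.succ : ℝ) * mu l) + a 0 * ∑ l : Fin n, (b l.succ : ℝ) * mu l := by
        rw [Finset.mul_sum, Finset.mul_sum, ← Finset.sum_add_distrib]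
        refine Finset.sum_congr rfl fun l _ => ?_
        push_cast; ring
      rw [e] at this
      have ha1 : (0 : ℝ) < a 0 := by exact_mod_cast ha0
      have hb1 : (0 : ℝ) < -(b 0 : ℝ) := by
        have : (b 0 : ℝ) < 0 := by exact_mod_cast hb0
        linarith
      have hfb : f b = (∑ l : Fin n, (b l.succ : ℝ) * mu l) / (-(b 0 : ℝ)) := by
        simp only [f]; rw [neg_div, div_neg]
      rw [hfb, div_lt_div_iff₀ ha1 hb1]
      linarith)
    refine ⟨Fin.cons t mu, fun a ha => ?_⟩
    rw [Fin.sum_univ_succ]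
    simp only [Fin.cons_zero, Fin.cons_succ]
    rcases lt_trichotomy (a 0) 0 with h0 | h0 | h0
    · have := ht2 (f a) (by rw [Set.Finite.mem_toFinset]; exact ⟨a, ⟨ha, h0⟩, rfl⟩)
      have h1 : (a 0 : ℝ) < 0 := by exact_mod_cast h0
      simp only [f] at this
      rw [lt_div_iff_of_neg h1] at this
      linarith
    · have := hmu _ (Or.inl ⟨a, ⟨ha, h0⟩, rfl⟩)
      rw [h0]
      simpa [Fin.tail] using this
    · have := ht1 (f a) (by rw [Set.Finite.mem_toFinset]; exact ⟨a, ⟨ha, h0⟩, rfl⟩)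
      have h1 : 0 < (a 0 : ℝ) := by exact_mod_cast h0
      simp only [f] at this
      rw [div_lt_iff₀ h1] at this
      linarith

end Gordan
end ZG


namespace ZG

section Burnside
variable {F : Type*} [Field F] {n : ℕ}

theorem burnside_aux [IsAlgClosed F] {V : Type*} [AddCommGroup V] [Module F V] [FiniteDimensional F V]
    [Nontrivial V]
    (A : Subalgebra F (Module.End F V))
    (hA : ∀ W : Submodule F V, (∀ a ∈ A, ∀ v ∈ W, a v ∈ W) → W = ⊥ ∨ W = ⊤) : A = ⊤ := by
  have hsub : ∀ W : Submodule A V, W = ⊥ ∨ W = ⊤ := by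
    intro W
    rcases hA (W.restrictScalars F) (fun a ha v hv => W.smul_mem ⟨a, ha⟩ hv) with h | h
    · left
      rwa [Submodule.restrictScalars_eq_bot_iff] at h
    · right
      rwa [Submodule.restrictScalars_eq_top_iff] at h
  haveI : IsSimpleModule A V := { 
    exists_pair_ne := ⟨⊥, ⊤, bot_ne_top⟩
    eq_bot_or_eq_top := hsub }
  have hschur : ∀ f : Module.End A V, ∃ c : F, ∀ v, f v = c • v := by
    intro f
    obtain ⟨c, hc⟩ := Module.End.exists_eigenvalue (f.restrictScalars F)
    refine ⟨c, ?_⟩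
    obtain ⟨v, hv⟩ := hc.exists_hasEigenvector
    have h1 : (LinearMap.ker (f - c • LinearMap.id : Module.End A V)) ≠ ⊥ := by
      intro h
      have : v ∈ LinearMap.ker (f - c • LinearMap.id : Module.End A V) := by
        simp only [LinearMap.mem_ker, LinearMap.sub_apply, LinearMap.smul_apply, LinearMap.id_apply]
        rw [sub_eq_zero]
        exact hv.apply_eq_smul
      rw [h] at this
      exact hv.2 this
    have h2 := (hsub _).resolve_left h1
    intro v
    have : v ∈ LinearMap.ker (f - c • LinearMap.id : Module.End A V) := h2 ▸ Submodule.mem_top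
    simpa [sub_eq_zero] using this
  rw [eq_top_iff]
  intro T _
  let T' : Module.End (Module.End A V) V := {
    toFun := T
    map_add' := map_add T
    map_smul' := by
      intro f v
      obtain ⟨c, hc⟩ := hschur f
      simp only [Module.End.smul_def, RingHom.id_apply, hc, map_smul] }
  obtain ⟨s, hs⟩ := (Module.Finite.fg_top : (⊤ : Submodule F V).FG)
  obtain ⟨r, hr⟩ := jacobson_density (R := A) T' s
  have : T = r := by
    apply LinearMap.ext_on (s := (s : Set V)) hs
    intro m hm
    exact hr m hm
  rw [this]
  exact r.2

theorem burnside [IsAlgClosed F] (H : Subgroup (GL (Fin n) F)) (hirr : IrredOn H)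
    (S : Subalgebra F (Matrix (Fin n) (Fin n) F)) (hS : ∀ h ∈ H, (h : Matrix (Fin n) (Fin n) F) ∈ S) :
    S = ⊤ := by
  haveI : Nonempty (Fin n) := ⟨⟨0, hirr.1⟩⟩
  have := burnside_aux (S.map (Matrix.toLinAlgEquiv' : _ ≃ₐ[F] Module.End F (Fin n → F)).toAlgHom) (by
    intro W hW
    apply hirr.2 W
    intro g hg v hv
    have := hW _ ⟨_, hS g hg, rfl⟩ v hv
    simpa using this)
  rw [eq_top_iff]
  intro M _
  have h2 : Matrix.toLinAlgEquiv' M ∈ S.map (Matrix.toLinAlgEquiv' : _ ≃ₐ[F] Module.End F (Fin n → F)).toAlgHom := by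
    rw [this]; trivial
  obtain ⟨M', hM', he⟩ := h2
  have := Matrix.toLinAlgEquiv'.injective he
  rwa [← this]

end Burnside
end ZG


namespace ZG

section Misc
variable {F : Type*} [Field F] 

theorem common_eigen [IsAlgClosed F] {V : Type*} [AddCommGroup V] [Module F V]
    (E : Submodule F V) [FiniteDimensional F E] (hE : E ≠ ⊥) {I : Type*} (T : I → V →ₗ[F] V)
    (hT : ∀ i, ∀ v ∈ E, T i v ∈ E) (hcomm : ∀ i j, ∀ v ∈ E, T i (T j v) = T j (T i v)) :
    ∃ w ∈ E, w ≠ 0 ∧ ∀ i, ∃ c : F, T i w = c • w := by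
  -- minimal dimension stable
  obtain ⟨d, hd⟩ : ∃ d, d = Module.finrank F E := ⟨_, rfl⟩
  induction d using Nat.strong_induction_on generalizing E with
  | _ d ih =>
  by_cases h : ∃ i, ¬ ∃ c : F, ∀ v ∈ E, T i v = c • v
  · obtain ⟨i, hi⟩ := h
    let f : Module.End F E := (T i).restrict (hT i)
    haveI : Nontrivial E := Submodule.nontrivial_iff_ne_bot.mpr hE
    obtain ⟨c, hc⟩ := Module.End.exists_eigenvalue f
    obtain ⟨v, hv⟩ := hc.exists_hasEigenvector
    let E' : Submodule F V := E ⊓ LinearMap.ker (T i - c • LinearMap.id)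
    have hle : E' ≤ E := inf_le_left
    have hmem : ∀ x, x ∈ E' ↔ x ∈ E ∧ T i x = c • x := by
      intro x; simp [E', sub_eq_zero]
    have hne : E' ≠ ⊥ := by
      intro h0
      have h1 : (v : V) ∈ E' := by
        rw [hmem]
        exact ⟨v.2, congrArg Subtype.val hv.apply_eq_smul⟩
      rw [h0, Submodule.mem_bot] at h1
      exact hv.2 (Subtype.ext h1)
    have hlt : E' < E := lt_of_le_of_ne hle (fun h0 => hi ⟨c, fun x hx => by
      rw [← h0] at hx
      exact ((hmem x).mp hx).2⟩)
    haveI : FiniteDimensional F E' := Submodule.finiteDimensional_of_le hle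
    obtain ⟨w, hw, h1, h2⟩ := ih (Module.finrank F E') (hd ▸ Submodule.finrank_lt_finrank_of_lt hlt) E' hne
      (fun j x hx => by
        rw [hmem] at hx ⊢
        exact ⟨hT j x hx.1, by rw [hcomm i j x hx.1, hx.2, map_smul]⟩)
      (fun j k x hx => hcomm j k x (hle hx)) rfl
    exact ⟨w, hle hw, h1, h2⟩
  · push Not at h
    obtain ⟨w, hw, hw0⟩ := Submodule.exists_mem_ne_zero_of_ne_bot hE
    exact ⟨w, hw, hw0, fun i => (h i).imp fun c hc => hc w hw⟩

theorem algebraic_in [IsAlgClosed F] {K : Type*} [Field K] [Algebra F K] (t : K)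
    (ht : IsIntegral F t) : ∃ c : F, algebraMap F K c = t :=
  minpoly.mem_range_of_degree_eq_one F t
    (IsAlgClosed.degree_eq_one_of_irreducible F (minpoly.irreducible ht))

theorem exists_valuation [IsAlgClosed F] {K : Type*} [Field K] [Algebra F K] (t : K)
    (ht : ∀ c : F, algebraMap F K c ≠ t) :
    ∃ O : ValuationSubring K, (∀ c : F, algebraMap F K c ∈ O) ∧ t ∉ O := by
  by_contra hcon
  push Not at hcon
  have h1 := iInf_valuationSubring_superset (s := Set.range (algebraMap F K))
  have h2 : t ∈ (integralClosure (Subring.closure (Set.range (algebraMap F K))) K).toSubring := by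
    rw [← h1]
    simp only [Subring.mem_iInf]
    rintro ⟨V, hV⟩
    exact hcon V fun c => hV ⟨c, rfl⟩
  have h3 : IsIntegral (Subring.closure (Set.range (algebraMap F K))) t := h2
  have hcl : Subring.closure (Set.range (algebraMap F K)) = (algebraMap F K).range := by
    rw [← RingHom.coe_range, Subring.closure_eq]
  rw [hcl] at h3
  letI : Algebra F (algebraMap F K).range := (algebraMap F K).rangeRestrict.toAlgebra
  haveI : IsScalarTower F (algebraMap F K).range K := IsScalarTower.of_algebraMap_eq fun x => rfl
  haveI : Algebra.IsIntegral F (algebraMap F K).range :=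
    Algebra.isIntegral_of_surjective (algebraMap F K).rangeRestrict_surjective
  obtain ⟨c, hc⟩ := algebraic_in (F := F) t (isIntegral_trans t h3)
  exact ht c hc

end Misc
end ZG


namespace ZG

noncomputable section Val
open MvPolynomial
variable {K : Type*} [Field K] {n : ℕ} {ι : Type*}

/-- Monomial-wise bound of the values of the coefficients. -/
def VB {Γ : Type*} [LinearOrderedCommGroupWithZero Γ] (v : Valuation K Γ) (y : Fin n → Γ)
    (p : MvPolynomial (Fin n × ι) K) : Prop :=
  ∀ β, v (coeff β p) ≤ β.prod (fun q e => y q.1 ^ e)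

section
variable {Γ : Type*} [LinearOrderedCommGroupWithZero Γ] {v : Valuation K Γ} {y : Fin n → Γ}
  {p q : MvPolynomial (Fin n × ι) K}

theorem VB.add (hp : VB v y p) (hq : VB v y q) : VB v y (p + q) := by
  intro β
  rw [coeff_add]
  exact v.map_add_le (hp β) (hq β)

theorem VB.zero : VB v y (0 : MvPolynomial (Fin n × ι) K) := by
  intro β
  simp

theorem VB.sum {α : Type*} (s : Finset α) (f : α → MvPolynomial (Fin n × ι) K)
    (h : ∀ a ∈ s, VB v y (f a)) : VB v y (∑ a ∈ s, f a) :=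
  Finset.sum_induction f (VB v y) (fun _ _ => VB.add) VB.zero h

theorem VB.mul (hp : VB v y p) (hq : VB v y q) : VB v y (p * q) := by
  classical
  intro β
  rw [coeff_mul]
  apply v.map_sum_le
  intro x hx
  rw [Finset.HasAntidiagonal.mem_antidiagonal] at hx
  rw [map_mul, ← hx, Finsupp.prod_add_index' (by simp) (fun q a b => pow_add _ _ _)]
  exact mul_le_mul' (hp _) (hq _)

theorem VB.C {a : K} (ha : v a ≤ 1) : VB v y (C a : MvPolynomial (Fin n × ι) K) := by
  classical
  intro β
  rw [coeff_C]
  split_ifs with h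
  · rw [← h]; simpa using ha
  · simp

theorem VB.CX {a : K} (q : Fin n × ι) (ha : v a ≤ y q.1) :
    VB v y (MvPolynomial.C a * X q : MvPolynomial (Fin n × ι) K) := by
  classical
  intro β
  rw [coeff_C_mul, coeff_X]
  split_ifs with h
  · rw [← h]; simpa using ha
  · simp

theorem VB.act {O : ValuationSubring K} {y : Fin n → O.ValueGroup}
    (g : Matrix (Fin n) (Fin n) K) (hg : ∀ i j, O.valuation (g i j) ≤ y j)
    (r : MvPolynomial (Fin n × ι) O.toSubring) :
    VB O.valuation y (act g (map O.toSubring.subtype r)) := by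
  induction r using MvPolynomial.induction_on with
  | C a =>
    rw [map_C, algHom_C]
    exact VB.C (O.valuation_le_one a)
  | add p q hp hq => rw [map_add, map_add]; exact hp.add hq
  | mul_X p q hp =>
    rw [map_mul, map_mul, map_X, act_X]
    exact hp.mul (VB.sum _ _ fun l _ => VB.CX _ (hg _ _))
end

theorem det_monomial {Γ : Type*} [LinearOrderedCommGroupWithZero Γ] (v : Valuation K Γ)
    (g : Matrix (Fin n) (Fin n) K) (σ : Equiv.Perm (Fin n)) (hσ : ∀ i j, g i j ≠ 0 ↔ j = σ i) :
    v g.det = ∏ l, v (g (σ.symm l) l) := by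
  have h1 : g.submatrix σ.symm id = Matrix.diagonal (fun l => g (σ.symm l) l) := by
    ext i j
    by_cases h : i = j
    · subst h; simp
    · rw [Matrix.diagonal_apply_ne _ h, Matrix.submatrix_apply, id]
      by_contra h2
      rw [← ne_eq, hσ] at h2
      simp at h2
      exact h h2.symm
  have h2 := Matrix.det_permute σ.symm g
  rw [h1, Matrix.det_diagonal] at h2
  have h3 := congrArg v h2
  rw [map_prod, map_mul] at h3
  rw [h3]
  have : v (((Equiv.Perm.sign σ.symm : ℤˣ) : ℤ) : K) = 1 := by
    rcases Int.units_eq_one_or (Equiv.Perm.sign σ.symm) with h | h <;> rw [h] <;> simp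
  rw [this, one_mul]

theorem triangular_absurd {F : Type*} [Field F] [IsAlgClosed F] (H : Subgroup (GL (Fin n) F))
    (hirr : IrredOn H) (φ : F →+* K) (A : Matrix (Fin n) (Fin n) K) (hA : A.det ≠ 0)
    (lam : Fin n → ℝ) (i0 j0 : Fin n) (hlt : lam i0 < lam j0)
    (hT : ∀ h ∈ H, (A⁻¹ * (h : Matrix (Fin n) (Fin n) F).map φ * A).BlockTriangular lam) : False := by
  have hAu : IsUnit A.det := isUnit_iff_ne_zero.mpr hA
  let S : Subalgebra F (Matrix (Fin n) (Fin n) F) := {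
    carrier := {M | (A⁻¹ * M.map φ * A).BlockTriangular lam}
    mul_mem' := by
      intro a b ha hb
      have : A⁻¹ * (a * b).map φ * A = (A⁻¹ * a.map φ * A) * (A⁻¹ * b.map φ * A) := by
        rw [Matrix.map_mul]
        simp only [Matrix.mul_assoc]
        rw [Matrix.mul_nonsing_inv_cancel_left _ _ hAu]
      change (A⁻¹ * (a * b).map φ * A).BlockTriangular lam
      rw [this]
      exact Matrix.BlockTriangular.mul ha hb
    add_mem' := by
      intro a b ha hb
      have : A⁻¹ * (a + b).map φ * A = (A⁻¹ * a.map φ * A) + (A⁻¹ * b.map φ * A) := by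
        rw [Matrix.map_add _ (map_add φ), Matrix.mul_add, Matrix.add_mul]
      change (A⁻¹ * (a + b).map φ * A).BlockTriangular lam
      rw [this]
      exact Matrix.BlockTriangular.add ha hb
    algebraMap_mem' := by
      intro c
      have h1 : ((algebraMap F (Matrix (Fin n) (Fin n) F)) c).map φ = φ c • 1 := by
        rw [Matrix.algebraMap_eq_diagonal, Matrix.smul_one_eq_diagonal, Matrix.diagonal_map (map_zero φ)]
        rfl
      change (A⁻¹ * ((algebraMap F (Matrix (Fin n) (Fin n) F)) c).map φ * A).BlockTriangular lam
      rw [h1, Matrix.mul_smul, Matrix.mul_one, Matrix.smul_mul, Matrix.nonsing_inv_mul _ hAu,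
        Matrix.smul_one_eq_diagonal]
      exact Matrix.blockTriangular_diagonal _ }
  have hS := burnside H hirr S hT
  have hzero : ∀ a b, A⁻¹ j0 a * A b i0 = 0 := by
    intro a b
    have h1 : Matrix.single a b (1 : F) ∈ S := by rw [hS]; trivial
    have h2 := h1 hlt
    rw [Matrix.map_single, map_one, Matrix.mul_assoc, Matrix.mul_apply, Finset.sum_eq_single a] at h2
    · simpa using h2
    · intro c _ hc
      simp [hc]
    · simp
  have hAi : A⁻¹.det ≠ 0 := by
    rw [Matrix.det_nonsing_inv]
    simpa using hA
  obtain ⟨a, ha⟩ := row_ne_zero hAi j0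
  obtain ⟨b, hb⟩ := row_ne_zero (g := Aᵀ) (by rwa [Matrix.det_transpose]) i0
  rcases mul_eq_zero.mp (hzero a b) with h | h
  · exact ha h
  · exact hb h

end Val
end ZG


namespace ZG

noncomputable section Val2
open MvPolynomial
variable {F K : Type*} [Field F] [Field K] [Algebra F K] {n : ℕ} {ι : Type*}

theorem lift_poly {σ : Type*} (O : Subring K) (p : MvPolynomial σ K) (hp : ∀ β, coeff β p ∈ O) :
    ∃ q : MvPolynomial σ O, MvPolynomial.map O.subtype q = p := by
  have : p ∈ Set.range (MvPolynomial.map (σ := σ) O.subtype) := by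
    rw [MvPolynomial.mem_range_map_iff_coeffs_subset]
    intro x hx
    rw [Finset.mem_coe, MvPolynomial.mem_coeffs_iff] at hx
    obtain ⟨β, _, rfl⟩ := hx
    exact ⟨⟨_, hp β⟩, rfl⟩
  exact this

theorem val_scale (O : ValuationSubring K) (γ : Matrix (Fin n) (Fin n) K) [Finite ι] (D : ℕ)
    (M : Submodule F (MvPolynomial (Fin n × ι) F)) [FiniteDimensional F M]
    (hFO : ∀ c : F, algebraMap F K c ∈ O)
    (hhom : ∀ m ∈ M, m.IsHomogeneous D) (e : K)
    (hnon : ∃ m ∈ M, ∃ α, e * coeff α (act γ (MvPolynomial.map (algebraMap F K) m)) ∉ O) :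
    ∃ c : K, O.valuation c < 1 ∧
      (∀ m ∈ M, ∀ α, (c * e) * coeff α (act γ (MvPolynomial.map (algebraMap F K) m)) ∈ O) ∧
      ∃ m ∈ M, ∃ α, (c * e) * coeff α (act γ (MvPolynomial.map (algebraMap F K) m)) = 1 := by
  classical
  obtain ⟨m0, hm0, α0, h0⟩ := hnon
  obtain ⟨s, hs⟩ := (Submodule.fg_iff_finiteDimensional M).mpr inferInstance
  let f : MvPolynomial (Fin n × ι) F × (Fin n × ι →₀ ℕ) → K := fun x =>
    e * coeff x.2 (act γ (MvPolynomial.map (algebraMap F K) x.1))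
  have hB := finite_deg (n := n) (ι := ι) D
  have hsM : ∀ m ∈ insert m0 s, m ∈ M := by
    intro m hm
    rw [Finset.mem_insert] at hm
    rcases hm with rfl | hm
    · exact hm0
    · rw [← hs]; exact Submodule.subset_span hm
  have hdeg : ∀ m ∈ M, ∀ α, coeff α (act γ (MvPolynomial.map (algebraMap F K) m)) ≠ 0 → α.degree = D := by
    intro m hm α hα
    have := (act_hom γ ((hhom m hm).map (algebraMap F K))) hα
    rw [Finsupp.degree_eq_weight_one]
    exact this
  have h0' : coeff α0 (act γ (MvPolynomial.map (algebraMap F K) m0)) ≠ 0 := by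
    intro h
    rw [h, mul_zero] at h0
    exact h0 O.zero_mem
  obtain ⟨x, hx, hmax⟩ := Finset.exists_max_image ((insert m0 s) ×ˢ hB.toFinset)
    (fun x => O.valuation (f x)) ⟨(m0, α0), by
      rw [Finset.mem_product]
      refine ⟨Finset.mem_insert_self _ _, ?_⟩
      rw [Set.Finite.mem_toFinset]
      exact hdeg m0 hm0 α0 h0'⟩
  rw [Finset.mem_product] at hx
  have hx1 : 1 < O.valuation (f x) := by
    refine lt_of_lt_of_le ?_ (hmax (m0, α0) ?_)
    · rw [← not_le, O.valuation_le_one_iff]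
      exact h0
    · rw [Finset.mem_product]
      refine ⟨Finset.mem_insert_self _ _, ?_⟩
      rw [Set.Finite.mem_toFinset]
      exact hdeg m0 hm0 α0 h0'
  have hfx : f x ≠ 0 := by
    intro h
    rw [h, map_zero] at hx1
    exact not_lt_zero hx1
  have hbase : ∀ m ∈ s, ∀ α, ((f x)⁻¹ * e) * coeff α (act γ (MvPolynomial.map (algebraMap F K) m)) ∈ O := by
    intro m hm α
    by_cases hz : coeff α (act γ (MvPolynomial.map (algebraMap F K) m)) = 0
    · rw [hz, mul_zero]; exact O.zero_mem
    rw [mul_assoc, ← O.valuation_le_one_iff, map_mul, map_inv₀]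
    have hmM := hsM m (Finset.mem_insert_of_mem hm)
    have := hmax (m, α) (by
      rw [Finset.mem_product]
      refine ⟨Finset.mem_insert_of_mem hm, ?_⟩
      rw [Set.Finite.mem_toFinset]
      exact hdeg m hmM α hz)
    rw [inv_mul_le_iff₀ (zero_lt_iff.mpr (O.valuation.ne_zero_iff.mpr hfx)), mul_one]
    exact this
  refine ⟨(f x)⁻¹, ?_, ?_, x.1, hsM _ hx.1, x.2, ?_⟩
  · rw [map_inv₀]
    exact inv_lt_one_of_one_lt₀ hx1
  · intro m hm
    rw [← hs] at hm
    induction hm using Submodule.span_induction with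
    | mem m hm => exact hbase m hm
    | zero => intro α; simp
    | add a b _ _ ha hb =>
      intro α
      rw [map_add, map_add, coeff_add, mul_add]
      exact O.add_mem _ _ (ha α) (hb α)
    | smul c a _ ha =>
      intro α
      rw [MvPolynomial.smul_eq_C_mul, map_mul, map_mul, map_C, algHom_C]
      change _ * coeff α (C _ * _) ∈ O
      rw [coeff_C_mul, mul_left_comm]
      exact O.mul_mem _ _ (hFO c) (ha α)
  · rw [mul_assoc]
    exact inv_mul_cancel₀ hfx

end Val2
end ZG


namespace ZG

noncomputable section Val3
open MvPolynomial
variable {F K k : Type*} [Field F] [Field K] [Field k] [Algebra F K] [Algebra F k] {n : ℕ} {ι : Type*}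

theorem val_rho (O : Subring K) (φ0 : F →+* O)
    (hφ0 : ∀ c, (φ0 c : K) = algebraMap F K c) (res : O →+* k)
    (hres : ∀ c, algebraMap F k c = res (φ0 c))
    (γ : Matrix (Fin n) (Fin n) K)
    (M : Submodule F (MvPolynomial (Fin n × ι) F))
    (a : K) (hO : ∀ m ∈ M, ∃ q : MvPolynomial (Fin n × ι) O,
      MvPolynomial.map O.subtype q = C a * act γ (MvPolynomial.map (algebraMap F K) m)) :
    ∃ q : M → MvPolynomial (Fin n × ι) O,
      (∀ m, MvPolynomial.map O.subtype (q m) = C a * act γ (MvPolynomial.map (algebraMap F K) m.1)) ∧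
      ∃ ρ : M →ₗ[F] MvPolynomial (Fin n × ι) k, ∀ m, ρ m = MvPolynomial.map res (q m) := by
  have hinj : Function.Injective (MvPolynomial.map (σ := Fin n × ι) O.subtype) :=
    map_injective _ Subtype.val_injective
  choose q hq using fun m : M => hO m.1 m.2
  refine ⟨q, hq, ⟨⟨fun m => MvPolynomial.map res (q m), ?_⟩, ?_⟩, fun m => rfl⟩
  · intro x y
    have : q (x + y) = q x + q y := hinj (by
      rw [map_add, hq, hq, hq, Submodule.coe_add, map_add, map_add, mul_add])
    rw [this, map_add]
  · intro c x
    have : q (c • x) = C (φ0 c) * q x := hinj (by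
      rw [map_mul, hq, hq, map_C, Submodule.coe_smul, MvPolynomial.smul_eq_C_mul, map_mul, map_mul, map_C,
        algHom_C, mul_left_comm]
      congr 2
      exact (hφ0 c).symm)
    dsimp only
    rw [this, map_mul, map_C, ← hres, ← MvPolynomial.smul_eq_C_mul, algebraMap_smul]
    rfl

theorem val_eigen [IsAlgClosed F] (O : Subring K) (φ0 : F →+* O)
    (hφ0 : ∀ c, (φ0 c : K) = algebraMap F K c) (res : O →+* k)
    (hres : ∀ c, algebraMap F k c = res (φ0 c)) (H : Subgroup (GL (Fin n) F))
    (γ : Matrix (Fin n) (Fin n) K)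
    (M : Submodule F (MvPolynomial (Fin n × ι) F)) [FiniteDimensional F M]
    (hst : ∀ h ∈ H, ∀ m ∈ M, act (h : Matrix (Fin n) (Fin n) F) m ∈ M)
    (hcomm : ∀ h ∈ H, ∀ h' ∈ H, ∀ m ∈ M, act (h : Matrix (Fin n) (Fin n) F)
      (act (h' : Matrix (Fin n) (Fin n) F) m) = act (h' : Matrix (Fin n) (Fin n) F)
      (act (h : Matrix (Fin n) (Fin n) F) m))
    (hγc : ∀ h ∈ H, ∀ m ∈ M, act ((h : Matrix (Fin n) (Fin n) F).map (algebraMap F K))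
      (act γ (MvPolynomial.map (algebraMap F K) m)) =
        act γ (MvPolynomial.map (algebraMap F K) (act (h : Matrix (Fin n) (Fin n) F) m)))
    (a : K) (hO : ∀ m ∈ M, ∃ q : MvPolynomial (Fin n × ι) O,
      MvPolynomial.map O.subtype q = C a * act γ (MvPolynomial.map (algebraMap F K) m))
    (h1 : ∃ m ∈ M, ∃ α, a * coeff α (act γ (MvPolynomial.map (algebraMap F K) m)) = 1) :
    ∃ m ∈ M, ∃ q : MvPolynomial (Fin n × ι) O,
      MvPolynomial.map O.subtype q = C a * act γ (MvPolynomial.map (algebraMap F K) m) ∧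
      MvPolynomial.map res q ≠ 0 ∧ ∀ h ∈ H, ∃ c,
        act ((h : Matrix (Fin n) (Fin n) F).map (algebraMap F k))
          (MvPolynomial.map res q) = C c * (MvPolynomial.map res q) := by
  have hinj : Function.Injective (MvPolynomial.map (σ := Fin n × ι) O.subtype) :=
    map_injective _ Subtype.val_injective
  obtain ⟨q, hq, ρ, hρ⟩ := val_rho O φ0 hφ0 res hres γ M a hO
  let T : H → MvPolynomial (Fin n × ι) k →ₗ[F] MvPolynomial (Fin n × ι) k := fun h =>
    (act ((h.1 : Matrix (Fin n) (Fin n) F).map (algebraMap F k))).toLinearMap.restrictScalars F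
  have hTa : ∀ h p, T h p = act ((h.1 : Matrix (Fin n) (Fin n) F).map (algebraMap F k)) p := fun _ _ => rfl
  clear_value T
  have hT : ∀ (h : H) (m : M), T h (ρ m) = ρ ⟨_, hst h.1 h.2 m.1 m.2⟩ := by
    intro h m
    have e : act ((h.1 : Matrix (Fin n) (Fin n) F).map φ0) (q m) = q ⟨_, hst h.1 h.2 m.1 m.2⟩ := by
      apply hinj
      rw [hq, act_map, hq, map_mul, algHom_C, ← hγc h.1 h.2 m.1 m.2, Matrix.map_map]
      have e2 : (h.1 : Matrix (Fin n) (Fin n) F).map (O.subtype ∘ φ0) =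
          (h.1 : Matrix (Fin n) (Fin n) F).map (algebraMap F K) := by
        ext i j
        exact hφ0 _
      rw [e2]
      rfl
    have e3 : (h.1 : Matrix (Fin n) (Fin n) F).map (res ∘ φ0) =
          (h.1 : Matrix (Fin n) (Fin n) F).map (algebraMap F k) := by
        ext i j
        exact (hres _).symm
    rw [hρ, hρ, ← e, act_map, Matrix.map_map, e3, hTa]
  obtain ⟨m1, hm1, α1, h1⟩ := h1
  have hE : LinearMap.range ρ ≠ ⊥ := by
    intro h
    have h2 : ρ ⟨m1, hm1⟩ = 0 := by
      have : ρ ⟨m1, hm1⟩ ∈ LinearMap.range ρ := ⟨_, rfl⟩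
      rwa [h, Submodule.mem_bot] at this
    rw [hρ] at h2
    have h3 := congrArg (coeff α1) h2
    rw [coeff_map, coeff_zero] at h3
    have h4 : coeff α1 (q ⟨m1, hm1⟩) = 1 := by
      apply Subtype.val_injective
      have := congrArg (coeff α1) (hq ⟨m1, hm1⟩)
      rw [coeff_map, coeff_C_mul, h1] at this
      exact this
    rw [h4, map_one] at h3
    exact one_ne_zero h3
  have hTr : ∀ h, ∀ v ∈ LinearMap.range ρ, T h v ∈ LinearMap.range ρ := by
    rintro h _ ⟨m, rfl⟩
    rw [hT]
    exact LinearMap.mem_range_self _ _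
  have hTc : ∀ h h', ∀ v ∈ LinearMap.range ρ, T h (T h' v) = T h' (T h v) := by
    rintro h h' _ ⟨m, rfl⟩
    rw [hT, hT, hT, hT]
    exact congrArg ρ (Subtype.ext (hcomm h.1 h.2 h'.1 h'.2 m.1 m.2))
  have hfd : FiniteDimensional F (LinearMap.range ρ) := inferInstance
  obtain ⟨w, hwr, hw0, hw⟩ := common_eigen (LinearMap.range ρ) hE T hTr hTc
  obtain ⟨m, rfl⟩ := hwr
  rw [hρ] at hw0
  refine ⟨m.1, m.2, q m, hq m, hw0, fun h hh => ?_⟩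
  obtain ⟨c, hc⟩ := hw ⟨h, hh⟩
  refine ⟨algebraMap F _ c, ?_⟩
  rw [← MvPolynomial.smul_eq_C_mul, algebraMap_smul]
  rw [hTa, hρ] at hc
  exact hc

end Val3
end ZG


namespace ZG

noncomputable section Val4
open MvPolynomial
variable {F K k : Type*} [Field F] [Field K] [Field k] [Algebra F K] [Algebra F k] {n : ℕ} {ι : Type*}

theorem val_bound [Fintype ι] (O : ValuationSubring K) (γ : Matrix (Fin n) (Fin n) K) (hγ : γ.det ≠ 0)
    (k0 : ℕ) (m0 : MvPolynomial (Fin n × ι) O.toSubring) (c : K) (hc : O.valuation c < 1) :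
    ∃ U' : Matrix (Fin n) (Fin n) O.toSubring, U'.det = 1 ∧ ∃ y : Fin n → O.ValueGroup,
      (∀ l, y l ≠ 0) ∧ ∀ β, O.valuation (coeff β (act (U'.map O.toSubring.subtype)
        (C (c * (γ.det ^ k0)⁻¹) * act γ (MvPolynomial.map O.toSubring.subtype m0)))) = 1 →
        1 < ∏ l, y l ^ (((∑ j, β (l, j) : ℕ) : ℤ) - k0) := by
  classical
  obtain ⟨U, hU, U', hU', hdU, hdU', σ, hσ⟩ := smith O γ hγ
  obtain ⟨V, rfl⟩ : ∃ V : Matrix (Fin n) (Fin n) O.toSubring, V.map O.toSubring.subtype = U :=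
    ⟨fun i j => ⟨U i j, hU i j⟩, rfl⟩
  obtain ⟨V', rfl⟩ : ∃ V : Matrix (Fin n) (Fin n) O.toSubring, V.map O.toSubring.subtype = U' :=
    ⟨fun i j => ⟨U' i j, hU' i j⟩, rfl⟩
  have hdet : ∀ W : Matrix (Fin n) (Fin n) O.toSubring, (W.map O.toSubring.subtype).det = 1 → W.det = 1 := by
    intro W hW
    apply Subtype.val_injective
    have := RingHom.map_det O.toSubring.subtype W
    rw [RingHom.mapMatrix_apply, hW] at this
    exact this
  set g := V.map O.toSubring.subtype * γ * V'.map O.toSubring.subtype with hg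
  have hy : ∀ l, O.valuation (g (σ.symm l) l) ≠ 0 := by
    intro l
    rw [Valuation.ne_zero_iff, hσ]
    simp
  refine ⟨V', hdet V' hdU', fun l => O.valuation (g (σ.symm l) l), hy, ?_⟩
  intro β hβ
  have hVi : V.adjugate.map O.toSubring.subtype * V.map O.toSubring.subtype = 1 := by
    rw [← Matrix.map_mul, Matrix.adjugate_mul, hdet V hdU, one_smul]
    exact Matrix.map_one _ (map_zero _) (map_one _)
  have e1 : act (V'.map O.toSubring.subtype) (act γ (MvPolynomial.map O.toSubring.subtype m0)) =
      act g (MvPolynomial.map O.toSubring.subtype (act V.adjugate m0)) := by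
    rw [act_map, act_act, act_act, hg, ← Matrix.mul_assoc, ← Matrix.mul_assoc, hVi, Matrix.one_mul]
  rw [map_mul, algHom_C, e1] at hβ
  change O.valuation (coeff β (C _ * _)) = 1 at hβ
  rw [coeff_C_mul, map_mul, map_mul, map_inv₀, map_pow] at hβ
  have hb := VB.act (O := O) (y := fun l => O.valuation (g (σ.symm l) l)) g (by
    intro i j
    by_cases h : j = σ i
    · subst h; simp
    · have : g i j = 0 := by
        by_contra h2
        exact h ((hσ i j).mp h2)
      rw [this]; simp) (act V.adjugate m0) β
  have hdg : O.valuation γ.det = ∏ l, O.valuation (g (σ.symm l) l) := by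
    rw [← det_monomial O.valuation g σ hσ, hg, Matrix.det_mul, Matrix.det_mul, hdU, hdU', one_mul, mul_one]
  have hprod : β.prod (fun q e => O.valuation (g (σ.symm q.1) q.1) ^ e) =
      ∏ l, O.valuation (g (σ.symm l) l) ^ (∑ j, β (l, j)) := by
    rw [Finsupp.prod_fintype _ _ (by simp), Fintype.prod_prod_type]
    simp only [Finset.prod_pow_eq_pow_sum]
  rw [hprod] at hb
  have hz : ∀ l, O.valuation (g (σ.symm l) l) ^ (((∑ j, β (l, j) : ℕ) : ℤ) - k0) =
      O.valuation (g (σ.symm l) l) ^ (∑ j, β (l, j)) * (O.valuation (g (σ.symm l) l) ^ k0)⁻¹ := by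
    intro l
    rw [zpow_sub₀ (hy l), zpow_natCast, zpow_natCast, div_eq_mul_inv]
  simp only [hz]
  rw [Finset.prod_mul_distrib, Finset.prod_inv_distrib, Finset.prod_pow, ← hdg]
  set P := ∏ l, O.valuation (g (σ.symm l) l) ^ (∑ j, β (l, j))
  set d := O.valuation γ.det ^ k0
  have hd : d ≠ 0 := pow_ne_zero _ ((Valuation.ne_zero_iff _).mpr hγ)
  have hP : P ≠ 0 := Finset.prod_ne_zero_iff.mpr fun l _ => pow_ne_zero _ (hy l)
  have hPd : 0 < P * d⁻¹ := zero_lt_iff.mpr (mul_ne_zero hP (inv_ne_zero hd))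
  calc 1 = O.valuation c * d⁻¹ * O.valuation (coeff β (act g (MvPolynomial.map O.toSubring.subtype (act V.adjugate m0)))) := hβ.symm
    _ ≤ O.valuation c * d⁻¹ * P := mul_le_mul_right hb _
    _ = O.valuation c * (P * d⁻¹) := by rw [mul_assoc, mul_comm d⁻¹]
    _ < 1 * (P * d⁻¹) := mul_lt_mul_of_pos_right hc hPd
    _ = _ := one_mul _

theorem val_main [IsAlgClosed F] [Fintype ι] (O : ValuationSubring K) (hFO : ∀ c : F, algebraMap F K c ∈ O)
    (res : O.toSubring →+* k) (hres : ∀ c : F, algebraMap F k c = res ⟨algebraMap F K c, hFO c⟩)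
    (hres1 : ∀ x, res x ≠ 0 → O.valuation (x : K) = 1)
    (H : Subgroup (GL (Fin n) F)) (hirr : IrredOn H)
    (γ : Matrix (Fin n) (Fin n) K) (hγ : γ.det ≠ 0) (k0 : ℕ)
    (M : Submodule F (MvPolynomial (Fin n × ι) F)) [FiniteDimensional F M]
    (hhom : ∀ m ∈ M, m.IsHomogeneous (n * k0))
    (hst : ∀ h ∈ H, ∀ m ∈ M, act (h : Matrix (Fin n) (Fin n) F) m ∈ M)
    (hcomm : ∀ h ∈ H, ∀ h' ∈ H, ∀ m ∈ M, act (h : Matrix (Fin n) (Fin n) F)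
      (act (h' : Matrix (Fin n) (Fin n) F) m) = act (h' : Matrix (Fin n) (Fin n) F)
      (act (h : Matrix (Fin n) (Fin n) F) m))
    (hγc : ∀ h ∈ H, ∀ m ∈ M, act ((h : Matrix (Fin n) (Fin n) F).map (algebraMap F K))
      (act γ (MvPolynomial.map (algebraMap F K) m)) =
        act γ (MvPolynomial.map (algebraMap F K) (act (h : Matrix (Fin n) (Fin n) F) m)))
    (hnon : ∃ m ∈ M, ∃ α, (γ.det ^ k0)⁻¹ * coeff α (act γ (MvPolynomial.map (algebraMap F K) m)) ∉ O) :
    False := by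
  classical
  obtain ⟨c, hc, hO, h1⟩ := val_scale O γ (n * k0) M hFO hhom _ hnon
  let φ0 : F →+* O.toSubring := (algebraMap F K).codRestrict O.toSubring hFO
  obtain ⟨m, hm, q, hq, hw, hwH⟩ := val_eigen O.toSubring φ0 (fun _ => rfl) res hres H γ M hst hcomm hγc
    (c * (γ.det ^ k0)⁻¹) (fun m hm => lift_poly _ _ (fun β => by rw [coeff_C_mul]; exact hO m hm β)) h1
  have hmm : MvPolynomial.map (algebraMap F K) m =
      MvPolynomial.map O.toSubring.subtype (MvPolynomial.map φ0 m) := by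
    rw [MvPolynomial.map_map]; rfl
  set w := MvPolynomial.map res q with hwdef
  have hwhom : w.IsHomogeneous (n * k0) := by
    intro β hβ
    have h2 : coeff β q ≠ 0 := by
      intro h
      rw [hwdef, coeff_map, h, map_zero] at hβ
      exact hβ rfl
    have h3 : coeff β (act γ (MvPolynomial.map (algebraMap F K) m)) ≠ 0 := by
      intro h
      have := congrArg (coeff β) hq
      rw [coeff_map, coeff_C_mul, h, mul_zero] at this
      exact h2 (Subtype.val_injective this)
    exact (act_hom γ ((hhom m hm).map (algebraMap F K))) h3
  obtain ⟨U', hU', y, hy, hbd⟩ := val_bound O γ hγ k0 (MvPolynomial.map φ0 m) c hc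
  rw [← hmm, ← hq, ← act_map] at hbd
  have hdU : (U'.map res).det = 1 := by
    have := RingHom.map_det res U'
    rw [hU', map_one, RingHom.mapMatrix_apply] at this
    exact this.symm
  have hsup : ∀ β, coeff β (act (U'.map res) w) ≠ 0 → 1 < ∏ l, y l ^ (((∑ j, β (l, j) : ℕ) : ℤ) - k0) := by
    intro β hβ
    apply hbd
    rw [hwdef, ← act_map, coeff_map] at hβ
    rw [coeff_map]
    exact hres1 _ hβ
  obtain ⟨lam0, hlam0⟩ := gordan y hy
    ((fun (β : Fin n × ι →₀ ℕ) l => ((∑ j, β (l, j) : ℕ) : ℤ) - k0) '' ((act (U'.map res) w).support : Set _))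
    ((Finset.finite_toSet _).image _) (by
      rintro _ ⟨β, hβ, rfl⟩
      rw [Finset.mem_coe, mem_support_iff] at hβ
      exact hsup β hβ)
  obtain ⟨A, hA, lam, ⟨i, j, hij⟩, hT⟩ := kempf w hw k0 hwhom (U'.map res) (by rw [hdU]; exact one_ne_zero) lam0 (by
    intro β hβ
    have := hlam0 _ ⟨β, by rw [Finset.mem_coe, mem_support_iff]; exact hβ, rfl⟩
    have e : wt lam0 β = ∑ l, ((∑ j, β (l, j) : ℕ) : ℝ) * lam0 l := by
      rw [wt, Finsupp.weight_apply, Finsupp.sum_fintype _ _ (by simp), Fintype.sum_prod_type]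
      refine Finset.sum_congr rfl fun l _ => ?_
      push_cast
      rw [Finset.sum_mul]
      simp
    rw [e]
    simp only [Int.cast_sub, Int.cast_natCast, sub_mul, Finset.sum_sub_distrib, ← Finset.mul_sum] at this
    linarith)
  refine triangular_absurd H hirr (algebraMap F k) A hA lam i j hij fun h hh => hT _ ?_ (hwH h hh)
  have h2 := RingHom.map_det (algebraMap F k) (h : Matrix (Fin n) (Fin n) F)
  rw [RingHom.mapMatrix_apply] at h2
  rw [← h2]
  simp only [ne_eq, map_eq_zero]
  exact (Matrix.isUnits_det_units h).ne_zero

end Val4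
end ZG


namespace ZG

noncomputable section Val5
open MvPolynomial
variable {F : Type*} [Field F] {n : ℕ} {ι : Type*}

/-- action of GL -/
abbrev actG (g : GL (Fin n) F) : MvPolynomial (Fin n × ι) F →ₐ[F] MvPolynomial (Fin n × ι) F :=
  act (g : Matrix (Fin n) (Fin n) F)

theorem actG_mul (g h : GL (Fin n) F) (p : MvPolynomial (Fin n × ι) F) :
    actG (g * h) p = actG h (actG g p) := by
  rw [actG, actG, actG, act_act]; rfl

theorem actG_one (p : MvPolynomial (Fin n × ι) F) : actG (1 : GL (Fin n) F) p = p := by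
  rw [actG, Units.val_one, act_one]

theorem comm_mem (H : Subgroup (GL (Fin n) F)) {a b : GL (Fin n) F} (ha : a ∈ H) (hb : b ∈ H) :
    a * b * a⁻¹ * b⁻¹ ∈ ⁅H, H⁆ := Subgroup.commutator_mem_commutator ha hb

theorem der_le (H : Subgroup (GL (Fin n) F)) : ⁅H, H⁆ ≤ H := by
  rw [Subgroup.commutator_le]
  intro a ha b hb
  exact H.mul_mem (H.mul_mem (H.mul_mem ha hb) (H.inv_mem ha)) (H.inv_mem hb)

theorem der_conj (H : Subgroup (GL (Fin n) F)) {h d : GL (Fin n) F} (hh : h ∈ H) (hd : d ∈ ⁅H, H⁆) :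
    h * d * h⁻¹ ∈ ⁅H, H⁆ := by
  have h1 := comm_mem H hh (der_le H hd)
  have := Subgroup.mul_mem _ h1 hd
  simpa [mul_assoc] using this

/-- homogeneous semi-invariants -/
def semi (H : Subgroup (GL (Fin n) F)) (ι : Type*) (s : ℕ) (ψ : GL (Fin n) F → F) :
    Submodule F (MvPolynomial (Fin n × ι) F) where
  carrier := {m | m.IsHomogeneous s ∧ ∀ d ∈ ⁅H, H⁆, actG d m = ψ d • m}
  add_mem' := fun {a b} ha hb => ⟨ha.1.add hb.1, fun d hd => by
    rw [map_add, ha.2 d hd, hb.2 d hd, smul_add]⟩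
  zero_mem' := ⟨isHomogeneous_zero _ _ _, fun d _ => by simp⟩
  smul_mem' := fun c m hm => ⟨(homogeneousSubmodule _ F s).smul_mem c hm.1, fun d hd => by
    rw [map_smul, hm.2 d hd, smul_comm]⟩

theorem mem_semi {H : Subgroup (GL (Fin n) F)} {s : ℕ} {ψ : GL (Fin n) F → F} {m} :
    m ∈ semi H ι s ψ ↔ m.IsHomogeneous s ∧ ∀ d ∈ ⁅H, H⁆, actG d m = ψ d • m := Iff.rfl

instance semi_fin [Finite ι] (H : Subgroup (GL (Fin n) F)) (s : ℕ) (ψ : GL (Fin n) F → F) :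
    FiniteDimensional F (semi H ι s ψ) := by
  apply Submodule.finiteDimensional_of_le (S₂ := restrictTotalDegree (Fin n × ι) F s)
  intro m hm
  rw [mem_restrictTotalDegree]
  exact hm.1.totalDegree_le

theorem semi_stable {H : Subgroup (GL (Fin n) F)} {s : ℕ} {ψ : GL (Fin n) F → F}
    (hψ : ∀ h ∈ H, ∀ d ∈ ⁅H, H⁆, ψ (h * d * h⁻¹) = ψ d) {h : GL (Fin n) F} (hh : h ∈ H)
    {m : MvPolynomial (Fin n × ι) F} (hm : m ∈ semi H ι s ψ) : actG h m ∈ semi H ι s ψ := by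
  refine ⟨act_hom _ hm.1, fun d hd => ?_⟩
  rw [← actG_mul]
  have : h * d = (h * d * h⁻¹) * h := by group
  rw [this, actG_mul, hm.2 _ (der_conj H hh hd), hψ h hh d hd, map_smul]

theorem val_thm_aux [IsAlgClosed F] [Fintype ι] (H : Subgroup (GL (Fin n) F)) (hirr : IrredOn H)
    {K : Type*} [Field K] [Algebra F K] (π : MvPolynomial (Fin n × Fin n) F →ₐ[F] K)
    (hπ : ∀ p, π p = 0 ↔ ∀ h ∈ H, evG h p = 0)
    (k0 : ℕ) (f : MvPolynomial (Fin n × ι) F) (hf : f ∈ semi H ι (n * k0) (fun _ => 1))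
    (h0 : GL (Fin n) F) (hh0 : h0 ∈ H) (hne : ∀ c : F, actG h0 f ≠ C c * f) : False := by
  classical
  let γ0 : Matrix (Fin n) (Fin n) (MvPolynomial (Fin n × Fin n) F) := fun i j => X (i, j)
  have hev : ∀ h : GL (Fin n) F, γ0.map (evG h) = (h : Matrix (Fin n) (Fin n) F) := by
    intro h
    ext i j
    change evG h (X (i, j)) = _
    simp [evG]
  have hevC : ∀ h : GL (Fin n) F, (evG h).comp (C : F →+* MvPolynomial (Fin n × Fin n) F) = RingHom.id F := by
    intro h
    ext c
    simp [evG]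
  have hπC : π.toRingHom.comp (C : F →+* MvPolynomial (Fin n × Fin n) F) = algebraMap F K := by
    ext c
    simp
  let γ : Matrix (Fin n) (Fin n) K := γ0.map π.toRingHom
  have hdet0 : ∀ h : GL (Fin n) F, evG h γ0.det = (h : Matrix (Fin n) (Fin n) F).det := by
    intro h
    have := RingHom.map_det (evG h) γ0
    rw [this, RingHom.mapMatrix_apply, hev]
  have hdet : π γ0.det = γ.det := by
    have := RingHom.map_det π.toRingHom γ0
    exact this
  have hγ : γ.det ≠ 0 := by
    rw [← hdet, ne_eq, hπ]
    intro h
    have := h 1 H.one_mem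
    rw [hdet0] at this
    simp at this
  -- generic action
  have hgen : ∀ m : MvPolynomial (Fin n × ι) F,
      MvPolynomial.map π.toRingHom (act γ0 (MvPolynomial.map C m)) = act γ (MvPolynomial.map (algebraMap F K) m) := by
    intro m
    rw [act_map, MvPolynomial.map_map, hπC]
  have hgenH : ∀ (h : GL (Fin n) F) (m : MvPolynomial (Fin n × ι) F),
      MvPolynomial.map (evG h) (act γ0 (MvPolynomial.map C m)) = actG h m := by
    intro h m
    rw [act_map, MvPolynomial.map_map, hevC, hev, MvPolynomial.map_id]
  have htrans : ∀ P Q : MvPolynomial (Fin n × ι) (MvPolynomial (Fin n × Fin n) F),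
      (∀ h ∈ H, MvPolynomial.map (evG h) P = MvPolynomial.map (evG h) Q) →
      MvPolynomial.map π.toRingHom P = MvPolynomial.map π.toRingHom Q := by
    intro P Q hPQ
    ext β
    rw [coeff_map, coeff_map, ← sub_eq_zero, ← map_sub]
    refine (hπ _).mpr fun h hh => ?_
    have := congrArg (coeff β) (hPQ h hh)
    rw [coeff_map, coeff_map] at this
    rw [map_sub, this, sub_self]
  have hcomm : ∀ h ∈ H, ∀ h' ∈ H, ∀ m ∈ semi H ι (n * k0) (fun _ => 1),
      actG h (actG h' m) = actG h' (actG h m) := by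
    intro h hh h' hh' m hm
    rw [← actG_mul, ← actG_mul]
    have : h' * h = (h' * h * h'⁻¹ * h⁻¹) * (h * h') := by group
    rw [this, actG_mul, hm.2 _ (comm_mem H hh' hh), one_smul]
  have hnon : ∃ α, ∀ c : F, algebraMap F K c ≠
      (γ.det ^ k0)⁻¹ * coeff α (act γ (MvPolynomial.map (algebraMap F K) f)) := by
    by_contra hcon
    push Not at hcon
    choose c hc using hcon
    have key : ∀ α, ∀ h ∈ H, coeff α (actG h f) = c α * (h : Matrix (Fin n) (Fin n) F).det ^ k0 := by
      intro α h hh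
      have h1 : π (coeff α (act γ0 (MvPolynomial.map C f)) - C (c α) * γ0.det ^ k0) = 0 := by
        rw [map_sub, map_mul, map_pow, hdet, algHom_C, hc α]
        have h2 := congrArg (coeff α) (hgen f)
        rw [coeff_map] at h2
        change π _ = _ at h2
        rw [h2]
        field_simp
        ring
      have h3 := (hπ _).mp h1 h hh
      rw [map_sub, map_mul, map_pow, hdet0] at h3
      have h4 := congrArg (coeff α) (hgenH h f)
      rw [coeff_map] at h4
      rw [h4] at h3
      have h5 : evG h (C (c α)) = c α := congrArg (fun φ : F →+* F => φ (c α)) (hevC h)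
      rw [h5] at h3
      exact sub_eq_zero.mp h3
    apply hne ((h0 : Matrix (Fin n) (Fin n) F).det ^ k0)
    ext α
    have h1 := key α 1 H.one_mem
    rw [actG_one] at h1
    rw [key α h0 hh0, coeff_C_mul, h1]
    simp [mul_comm]
  obtain ⟨α, hα⟩ := hnon
  obtain ⟨O, hFO, ht⟩ := exists_valuation _ hα
  let res : O.toSubring →+* IsLocalRing.ResidueField O := (IsLocalRing.residue O : O →+* _)
  letI : Algebra F (IsLocalRing.ResidueField O) :=
    (res.comp ((algebraMap F K).codRestrict O.toSubring hFO)).toAlgebra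
  refine val_main (k := IsLocalRing.ResidueField O) O hFO res (fun c => rfl) ?_ H hirr γ hγ k0
    (semi H ι (n * k0) (fun _ => 1)) (fun m hm => hm.1)
    (fun h hh m hm => semi_stable (fun _ _ _ _ => rfl) hh hm) hcomm ?_ ⟨f, hf, α, ht⟩
  · intro x hx
    let x' : O := x
    have : ¬ x' ∈ IsLocalRing.maximalIdeal O := fun h => hx ((IsLocalRing.residue_eq_zero_iff x').mpr h)
    rw [O.valuation_lt_one_iff] at this
    exact (O.valuation_lt_one_or_eq_one x').resolve_left this
  · intro h hh m hm
    have := htrans (act ((h : Matrix (Fin n) (Fin n) F).map C) (act γ0 (MvPolynomial.map C m)))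
      (act γ0 (MvPolynomial.map C (actG h m))) (by
        intro h' hh'
        rw [hgenH, act_map, hgenH, Matrix.map_map]
        have e : (h : Matrix (Fin n) (Fin n) F).map (evG h' ∘ C) = (h : Matrix (Fin n) (Fin n) F) := by
          ext i j
          simp [evG]
        rw [e]
        exact hcomm h hh h' hh' m hm)
    rw [hgen, act_map, hgen, Matrix.map_map] at this
    have e : (h : Matrix (Fin n) (Fin n) F).map (π.toRingHom ∘ C) =
        (h : Matrix (Fin n) (Fin n) F).map (algebraMap F K) := by
      rw [← hπC]; rfl
    rw [e] at this
    exact this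

theorem val_thm [IsAlgClosed F] [Fintype ι] (H : Subgroup (GL (Fin n) F)) (hirr : IrredOn H)
    (hH : IsIrreducible (H : Set (GL (Fin n) F)))
    (k0 : ℕ) (f : MvPolynomial (Fin n × ι) F) (hf : f ∈ semi H ι (n * k0) (fun _ => 1))
    (h0 : GL (Fin n) F) (hh0 : h0 ∈ H) (hne : ∀ c : F, actG h0 f ≠ C c * f) : False := by
  haveI := van_prime hH
  refine val_thm_aux H hirr (K := FractionRing (MvPolynomial (Fin n × Fin n) F ⧸ van (H : Set (GL (Fin n) F))))
    ((IsScalarTower.toAlgHom F (MvPolynomial (Fin n × Fin n) F ⧸ van (H : Set (GL (Fin n) F))) _).comp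
      (Ideal.Quotient.mkₐ F _)) ?_ k0 f hf h0 hh0 hne
  intro p
  rw [AlgHom.comp_apply, IsScalarTower.coe_toAlgHom', FaithfulSMul.algebraMap_eq_zero_iff,
    Ideal.Quotient.mkₐ_eq_mk, Ideal.Quotient.eq_zero_iff_mem]
  exact Iff.rfl

end Val5
end ZG


namespace ZG

noncomputable section Phi
open MvPolynomial
universe u
variable {F : Type u} [Field F] {n : ℕ}

theorem scal_eval (c : Fˣ) (d : GL (Fin n) F) {f : MvPolynomial (Fin n × Fin n) F} {r : ℕ}
    (hf : f.IsHomogeneous r) : evG (scalarGL n c * d) f = (c : F) ^ r * evG d f := by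
  have h2 : (fun q : Fin n × Fin n => ((scalarGL n c * d : GL (Fin n) F) : Matrix (Fin n) (Fin n) F) q.1 q.2)
    = (c : F) • (fun q : Fin n × Fin n => (d : Matrix (Fin n) (Fin n) F) q.1 q.2) := by
    funext q
    rw [Units.val_mul, scalarGL_coe]
    simp
  unfold evG
  rw [h2, MvPolynomial.eval_eq, MvPolynomial.eval_eq, Finset.mul_sum]
  apply Finset.sum_congr rfl
  intro β hβ
  have hdeg : ∑ i ∈ β.support, β i = r := by
    have := hf (mem_support_iff.mp hβ)
    simpa [Finsupp.weight_apply, Finsupp.sum] using this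
  simp only [Pi.smul_apply, smul_eq_mul, mul_pow, Finset.prod_mul_distrib, Finset.prod_pow_eq_pow_sum]
  rw [hdeg]
  ring

theorem homog_red [Infinite F] (D : Subgroup (GL (Fin n) F)) (p : MvPolynomial (Fin n × Fin n) F)
    (hp : ∀ c : Fˣ, ∀ d ∈ D, evG (scalarGL n c * d) p = 0) (h0 : GL (Fin n) F)
    (hh : evG h0 p ≠ 0) : ∃ r, ∃ f : MvPolynomial (Fin n × Fin n) F, f.IsHomogeneous r ∧
      (∀ d ∈ D, evG d f = 0) ∧ evG h0 f ≠ 0 := by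
  by_contra hcon
  push Not at hcon
  apply hh
  rw [← sum_homogeneousComponent p, map_sum]
  apply Finset.sum_eq_zero
  intro r hr
  refine hcon r _ (homogeneousComponent_isHomogeneous r p) ?_
  intro d hd
  have h1 : (∑ r ∈ Finset.range (p.totalDegree + 1),
      Polynomial.monomial r (evG d (homogeneousComponent r p))) = 0 := by
    apply poly_zero_units
    intro c
    rw [Polynomial.eval_finsetSum]
    have := hp c d hd
    rw [← sum_homogeneousComponent p, map_sum] at this
    rw [← this]
    apply Finset.sum_congr rfl
    intro s _
    rw [scal_eval c d (homogeneousComponent_isHomogeneous s p), Polynomial.eval_monomial, mul_comm]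
  have := congrArg (fun q => Polynomial.coeff q r) h1
  simp only [Polynomial.finsetSum_coeff, Polynomial.coeff_monomial, Finset.sum_ite_eq',
    Polynomial.coeff_zero] at this
  simpa [hr] using this

/-- homogeneous forms vanishing on D -/
def JJ (D : Subgroup (GL (Fin n) F)) (r : ℕ) : Submodule F (MvPolynomial (Fin n × Fin n) F) where
  carrier := {m | m.IsHomogeneous r ∧ ∀ d ∈ D, evG d m = 0}
  add_mem' := fun {a b} ha hb => ⟨ha.1.add hb.1, fun d hd => by
    rw [map_add, ha.2 d hd, hb.2 d hd, add_zero]⟩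
  zero_mem' := ⟨isHomogeneous_zero _ _ _, fun d _ => by simp⟩
  smul_mem' := fun c m hm => ⟨(homogeneousSubmodule _ F r).smul_mem c hm.1, fun d hd => by
    rw [smul_eq_C_mul, map_mul, hm.2 d hd, mul_zero]⟩

instance JJ_fin (D : Subgroup (GL (Fin n) F)) (r : ℕ) : FiniteDimensional F (JJ D r) := by
  apply Submodule.finiteDimensional_of_le (S₂ := restrictTotalDegree (Fin n × Fin n) F r)
  intro m hm
  rw [mem_restrictTotalDegree]
  exact hm.1.totalDegree_le

/-- right translation -/
def ract (B : Matrix (Fin n) (Fin n) F) :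
    MvPolynomial (Fin n × Fin n) F →ₐ[F] MvPolynomial (Fin n × Fin n) F :=
  aeval fun q => ∑ l, X (q.1, l) * C (B l q.2)

theorem ract_eval (B : Matrix (Fin n) (Fin n) F) (x : Matrix (Fin n) (Fin n) F)
    (p : MvPolynomial (Fin n × Fin n) F) :
    eval (fun q => x q.1 q.2) (ract B p) = eval (fun q => (x * B) q.1 q.2) p := by
  induction p using MvPolynomial.induction_on with
  | C a => simp [ract]
  | add p q hp hq => simp [hp, hq]
  | mul_X p q hp =>
    rw [map_mul, map_mul, map_mul, hp]
    congr 1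
    simp [ract, Matrix.mul_apply]

theorem lact_eval (B : Matrix (Fin n) (Fin n) F) (x : Matrix (Fin n) (Fin n) F)
    (p : MvPolynomial (Fin n × Fin n) F) :
    eval (fun q => x q.1 q.2) (act B p) = eval (fun q => (B * x) q.1 q.2) p := by
  rw [act_eval]; rfl

theorem ract_hom (B : Matrix (Fin n) (Fin n) F) {p : MvPolynomial (Fin n × Fin n) F} {N : ℕ}
    (hp : p.IsHomogeneous N) : (ract B p).IsHomogeneous N := by
  have := hp.aeval (fun q : Fin n × Fin n => ∑ l, X (R := F) (q.1, l) * C (B l q.2)) (n := 1) (fun q => by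
    apply IsHomogeneous.sum
    intro l _
    have := (isHomogeneous_X F (q.1, l)).mul (isHomogeneous_C (Fin n × Fin n) (B l q.2))
    simpa using this)
  simpa [ract] using this

theorem ext_mat [Infinite F] {p q : MvPolynomial (Fin n × Fin n) F}
    (h : ∀ x : Matrix (Fin n) (Fin n) F, eval (fun q => x q.1 q.2) p = eval (fun q => x q.1 q.2) q) :
    p = q := by
  apply MvPolynomial.funext
  intro x
  exact h (fun i j => x (i, j))

theorem LJ_mem {D : Subgroup (GL (Fin n) F)} {r : ℕ} {d : GL (Fin n) F} (hd : d ∈ D)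
    (m) (hm : m ∈ JJ D r) : (actG d).toLinearMap m ∈ JJ D r := by
  refine ⟨act_hom _ hm.1, fun d' hd' => ?_⟩
  have := hm.2 (d * d') (D.mul_mem hd hd')
  rw [← this]
  exact lact_eval _ _ _

/-- conjugation -/
def cc (h : GL (Fin n) F) : MvPolynomial (Fin n × Fin n) F →ₗ[F] MvPolynomial (Fin n × Fin n) F :=
  (actG h⁻¹).toLinearMap ∘ₗ (ract (h : Matrix (Fin n) (Fin n) F)).toLinearMap

theorem cc_eval (h : GL (Fin n) F) (x : Matrix (Fin n) (Fin n) F) (p) :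
    eval (fun q => x q.1 q.2) (cc h p) = eval (fun q =>
      (((h⁻¹ : GL (Fin n) F) : Matrix (Fin n) (Fin n) F) * x * (h : Matrix (Fin n) (Fin n) F)) q.1 q.2) p := by
  change eval (fun q => x q.1 q.2) (act _ (ract _ p)) = _
  rw [lact_eval, ract_eval]

theorem CJ_mem {H : Subgroup (GL (Fin n) F)} {r : ℕ} {h : GL (Fin n) F} (hh : h ∈ H)
    (m) (hm : m ∈ JJ ⁅H, H⁆ r) : cc h m ∈ JJ ⁅H, H⁆ r := by
  refine ⟨act_hom _ (ract_hom _ hm.1), fun d' hd' => ?_⟩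
  have := hm.2 (h⁻¹ * d' * h) (by simpa using der_conj H (H.inv_mem hh) hd')
  rw [← this]
  exact cc_eval _ _ _

theorem cc_inv [Infinite F] (h : GL (Fin n) F) (m : MvPolynomial (Fin n × Fin n) F) :
    cc h (cc h⁻¹ m) = m := by
  apply ext_mat
  intro x
  rw [cc_eval, cc_eval, inv_inv]
  have : (h : Matrix (Fin n) (Fin n) F) * (((h⁻¹ : GL (Fin n) F) : Matrix (Fin n) (Fin n) F) * x *
    (h : Matrix (Fin n) (Fin n) F)) * ((h⁻¹ : GL (Fin n) F) : Matrix (Fin n) (Fin n) F) = x := by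
    rw [← mul_assoc, ← mul_assoc, Units.mul_inv, one_mul, mul_assoc, Units.mul_inv, mul_one]
  rw [this]

theorem cc_conj [Infinite F] (h d : GL (Fin n) F) (m : MvPolynomial (Fin n × Fin n) F) :
    actG (h * d * h⁻¹) m = cc h (actG d (cc h⁻¹ m)) := by
  apply ext_mat
  intro x
  rw [cc_eval, lact_eval, lact_eval, cc_eval, inv_inv, Units.val_mul, Units.val_mul]
  have : (h : Matrix (Fin n) (Fin n) F) * ((d : Matrix (Fin n) (Fin n) F) * (((h⁻¹ : GL (Fin n) F) : Matrix (Fin n) (Fin n) F) * x *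
    (h : Matrix (Fin n) (Fin n) F))) * ((h⁻¹ : GL (Fin n) F) : Matrix (Fin n) (Fin n) F) =
    (h : Matrix (Fin n) (Fin n) F) * (d : Matrix (Fin n) (Fin n) F) * ((h⁻¹ : GL (Fin n) F) : Matrix (Fin n) (Fin n) F) * x := by
    simp only [← mul_assoc]
    rw [mul_assoc _ (h : Matrix (Fin n) (Fin n) F), Units.mul_inv, mul_one]
  rw [this]

theorem det_of_conj {V : Type*} [AddCommGroup V] [Module F V] (A B P Q : V →ₗ[F] V)
    (h1 : ∀ v, P (Q v) = v) (h2 : ∀ v, A v = P (B (Q v))) : LinearMap.det A = LinearMap.det B := by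
  have e1 : P ∘ₗ Q = LinearMap.id := LinearMap.ext h1
  have e2 : A = P ∘ₗ B ∘ₗ Q := LinearMap.ext h2
  have e3 := congrArg LinearMap.det e1
  rw [LinearMap.det_comp, LinearMap.det_id] at e3
  rw [e2, LinearMap.det_comp, LinearMap.det_comp, mul_left_comm, e3, mul_one]

open Classical in
/-- determinant character -/
def psi (D : Subgroup (GL (Fin n) F)) (r : ℕ) (d : GL (Fin n) F) : F :=
  if hd : d ∈ D then LinearMap.det ((actG d).toLinearMap.restrict (LJ_mem (r := r) hd)) else 1

theorem psi_conj [Infinite F] (H : Subgroup (GL (Fin n) F)) (r : ℕ) :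
    ∀ h ∈ H, ∀ d ∈ ⁅H, H⁆, psi ⁅H, H⁆ r (h * d * h⁻¹) = psi ⁅H, H⁆ r d := by
  intro h hh d hd
  have hd' := der_conj H hh hd
  rw [psi, psi, dif_pos hd, dif_pos hd']
  refine det_of_conj _ _ ((cc h).restrict (CJ_mem hh)) ((cc h⁻¹).restrict (CJ_mem (H.inv_mem hh))) ?_ ?_
  · intro m
    apply Subtype.ext
    exact cc_inv h m.1
  · intro m
    apply Subtype.ext
    exact cc_conj h d m.1

theorem dual_pick {V T : Type*} [AddCommGroup V] [Module F V] [FiniteDimensional F V]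
    (S : T → Module.Dual F V) (hS : ∀ v, (∀ t, S t v = 0) → v = 0) (t0 : T) (h0 : S t0 ≠ 0)
    {e : ℕ} (b : Module.Basis (Fin e) F V) :
    ∃ Y : Fin e → T, (∃ j, Y j = t0) ∧ (Matrix.of fun i j => S (Y j) (b i)).det ≠ 0 := by
  have hspan : ⊤ ≤ Submodule.span F (Set.range S) := by
    by_contra hcon
    have hlt : Submodule.span F (Set.range S) < ⊤ := lt_of_le_of_ne le_top (fun h => hcon h.ge)
    have h2 : (Submodule.span F (Set.range S)).dualCoannihilator ≠ ⊥ := by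
      intro hb
      have := Subspace.finrank_add_finrank_dualCoannihilator_eq (Submodule.span F (Set.range S))
      rw [hb, finrank_bot, add_zero] at this
      have h3 := Submodule.finrank_lt hlt.ne
      rw [Subspace.dual_finrank_eq] at h3
      omega
    obtain ⟨v, hv, hv0⟩ := Submodule.exists_mem_ne_zero_of_ne_bot h2
    apply hv0
    apply hS
    intro t
    exact (Submodule.mem_dualCoannihilator v).mp hv _ (Submodule.subset_span ⟨t, rfl⟩)
  have hli : LinearIndepOn F id ({S t0} : Set (Module.Dual F V)) := by
    exact LinearIndepOn.singleton h0
  have hst : ({S t0} : Set (Module.Dual F V)) ⊆ Set.range S := by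
    rintro _ rfl
    exact ⟨t0, rfl⟩
  let c0 := Module.Basis.extendLe hli hst hspan
  let σ := c0.indexEquiv b.dualBasis
  let c := c0.reindex σ
  have hc : ∀ j, c j ∈ Set.range S := by
    intro j
    have : c j = c0 (σ.symm j) := c0.reindex_apply σ j
    rw [this, Module.Basis.extendLe_apply_self]
    exact hli.extend_subset hst (σ.symm j).2
  have hj0 : ∃ j, c j = S t0 := by
    refine ⟨σ ⟨S t0, hli.subset_extend hst rfl⟩, ?_⟩
    rw [c0.reindex_apply, Equiv.symm_apply_apply, Module.Basis.extendLe_apply_self]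
  obtain ⟨j0, hj0⟩ := hj0
  choose Y0 hY0 using hc
  refine ⟨Function.update Y0 j0 t0, ⟨j0, by simp⟩, ?_⟩
  have hY : ∀ j, S (Function.update Y0 j0 t0 j) = c j := by
    intro j
    by_cases h : j = j0
    · subst h; simp [hj0]
    · simp [h, hY0]
  have h5 : (Matrix.of fun i j => S (Function.update Y0 j0 t0 j) (b i)) = b.dualBasis.toMatrix c := by
    ext i j
    rw [Matrix.of_apply, hY, Module.Basis.toMatrix_apply]
    simp
  rw [h5]
  have := b.dualBasis.isUnit_det c
  exact this.ne_zero

end Phi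
end ZG


namespace ZG

noncomputable section Fin
universe u
variable {F : Type u} [Field F] {n : ℕ}

theorem conn_iff (S : Set (GL (Fin n) F)) : GLZConnected S ↔ IsConnected S := by
  unfold GLZConnected IsConnected
  rw [isPreconnected_closed_iff]
  simp only [isClosed_iff_glz]

theorem scalarGL_inj (hn : 0 < n) {c d : Fˣ} (h : (scalarGL n c : GL (Fin n) F) = scalarGL n d) :
    c = d := by
  have := congrArg (fun g : GL (Fin n) F => (g : Matrix (Fin n) (Fin n) F) ⟨0, hn⟩ ⟨0, hn⟩) h
  simp [scalarGL_coe] at this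
  exact Units.ext this

/-- saturation as a subgroup -/
def satG (G : Subgroup (GL (Fin n) F)) : Subgroup (GL (Fin n) F) where
  carrier := scalarSaturation (G : Set (GL (Fin n) F))
  mul_mem' := by
    rintro _ _ ⟨g, hg, c, rfl⟩ ⟨g', hg', c', rfl⟩
    refine ⟨g * g', mul_mem hg hg', c * c', ?_⟩
    rw [scalarGL_mul, mul_assoc, ← mul_assoc g, ← scalarGL_comm c' g]
    simp only [mul_assoc]
  one_mem' := ⟨1, one_mem _, 1, by simp [scalarGL_one]⟩
  inv_mem' := by
    rintro _ ⟨g, hg, c, rfl⟩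
    refine ⟨g⁻¹, inv_mem hg, c⁻¹, ?_⟩
    rw [scalarGL_comm c, scalarGL_inv]
    simp

/-- closure as a subgroup -/
def clG (S : Subgroup (GL (Fin n) F)) : Subgroup (GL (Fin n) F) where
  carrier := closure (S : Set (GL (Fin n) F))
  mul_mem' := by
    have h1 : ∀ x ∈ S, ∀ y ∈ closure (S : Set (GL (Fin n) F)),
        x * y ∈ closure (S : Set (GL (Fin n) F)) := by
      intro x hx
      have : closure (S : Set (GL (Fin n) F)) ⊆
          (fun y => x * y) ⁻¹' closure (S : Set (GL (Fin n) F)) :=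
        closure_minimal (fun y hy => subset_closure (mul_mem hx hy))
          (isClosed_closure.preimage (cont_mul_left x))
      exact fun y hy => this hy
    intro x y hx hy
    have : closure (S : Set (GL (Fin n) F)) ⊆
          (fun x => x * y) ⁻¹' closure (S : Set (GL (Fin n) F)) :=
        closure_minimal (fun x hx => h1 x hx y hy)
          (isClosed_closure.preimage (cont_mul_right y))
    exact this hx
  one_mem' := subset_closure (one_mem S)
  inv_mem' := by
    intro x hx
    have : closure (S : Set (GL (Fin n) F)) ⊆
          (fun x => x⁻¹) ⁻¹' closure (S : Set (GL (Fin n) F)) :=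
        closure_minimal (fun x hx => subset_closure (inv_mem hx))
          (isClosed_closure.preimage cont_inv)
    exact this hx

/-- main theorem A -/
def ThmA (F : Type u) [Field F] (n : ℕ) : Prop := ∀ H : Subgroup (GL (Fin n) F),
  IsClosed (H : Set (GL (Fin n) F)) → IsIrreducible (H : Set (GL (Fin n) F)) →
    (∀ c : Fˣ, scalarGL n c ∈ H) → IrredOn H →
    ∀ h ∈ H, ∃ c : Fˣ, ∃ d ∈ ⁅H, H⁆, h = scalarGL n c * d

theorem final (hA : ThmA F n) (G : Subgroup (GL (Fin n) F))
    (hclosed : GLZClosed (G : Set (GL (Fin n) F)))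
    (hirr : IrredOn G)
    (hconn : GLZConnected (scalarSaturation (G : Set (GL (Fin n) F))))
    (N : ℕ)
    (hcard : Nat.card (centerSet (G : Set (GL (Fin n) F))) = N) :
    (∀ z ∈ G, ∃ ζ : Fˣ, ζ ^ N = 1 ∧ ∃ g ∈ derSubgroup G, z = scalarGL n ζ * g) ∧
    Nat.card (G ⧸ (idCompSubgroup G).subgroupOf G) ∣ N := by
  have hcl : IsClosed (G : Set (GL (Fin n) F)) := (isClosed_iff_glz _).mpr hclosed
  have hS : IsIrreducible (satG G : Set (GL (Fin n) F)) :=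
    irr_of_conn (satG G) ((conn_iff _).mp hconn).2
  set H := clG (satG G) with hHdef
  have hGS : ∀ g ∈ G, g ∈ satG G := fun g hg => ⟨g, hg, 1, by simp [scalarGL_one]⟩
  have hSH : ∀ g ∈ satG G, g ∈ H := fun g hg => subset_closure hg
  have hHirr : IsIrreducible (H : Set (GL (Fin n) F)) := hS.closure
  have hH := hA H isClosed_closure hHirr (fun c => hSH _ ⟨1, one_mem _, c, by simp⟩)
    ⟨hirr.1, fun W hW => hirr.2 W fun g hg => hW g (hSH _ (hGS g hg))⟩
  -- commutators lie in G
  have hSS : ∀ x ∈ satG G, ∀ y ∈ satG G, x * y * x⁻¹ * y⁻¹ ∈ G := by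
    rintro _ ⟨g, hg, c, rfl⟩ _ ⟨g', hg', c', rfl⟩
    have : scalarGL n c * g * (scalarGL n c' * g') * (scalarGL n c * g)⁻¹ * (scalarGL n c' * g')⁻¹
        = g * g' * g⁻¹ * g'⁻¹ := by
      rw [scalarGL_comm c g, scalarGL_comm c' g', _root_.mul_inv_rev, _root_.mul_inv_rev]
      have e1 := scalarGL_comm c (n := n) g'
      have e2 := scalarGL_comm c' (n := n) g⁻¹
      have e3 := scalarGL_comm c (n := n) (scalarGL n c')
      calc _ = g * (scalarGL n c * g') * scalarGL n c' * (scalarGL n c)⁻¹ * g⁻¹ * (scalarGL n c')⁻¹ * g'⁻¹ := by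
            simp only [mul_assoc]
        _ = g * g' * (scalarGL n c * scalarGL n c') * (scalarGL n c)⁻¹ * g⁻¹ * (scalarGL n c')⁻¹ * g'⁻¹ := by
            rw [e1]; simp only [mul_assoc]
        _ = g * g' * (scalarGL n c' * g⁻¹) * (scalarGL n c')⁻¹ * g'⁻¹ := by
            rw [e3]; simp only [mul_assoc, mul_inv_cancel_left]
        _ = _ := by rw [e2]; simp [mul_assoc]
    rw [this]
    exact mul_mem (mul_mem (mul_mem hg hg') (inv_mem hg)) (inv_mem hg')
  have hSH' : ∀ x ∈ satG G, ∀ y ∈ H, x * y * x⁻¹ * y⁻¹ ∈ G := by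
    intro x hx
    have : closure (satG G : Set (GL (Fin n) F)) ⊆
        (fun y => x * y * x⁻¹ * y⁻¹) ⁻¹' (G : Set (GL (Fin n) F)) :=
      closure_minimal (fun y hy => hSS x hx y hy) (hcl.preimage (cont_comm_left x))
    exact fun y hy => this hy
  have hHH : ∀ x ∈ H, ∀ y ∈ H, x * y * x⁻¹ * y⁻¹ ∈ G := by
    intro x hx y hy
    have : closure (satG G : Set (GL (Fin n) F)) ⊆
        (fun x => x * y * x⁻¹ * y⁻¹) ⁻¹' (G : Set (GL (Fin n) F)) :=
      closure_minimal (fun x hx => hSH' x hx y hy) (hcl.preimage (cont_comm_right y))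
    exact this hx
  have hstep : ∀ y ∈ identityComponent G, ∀ a ∈ H, ∀ b ∈ H,
      a * b * a⁻¹ * b⁻¹ * y ∈ identityComponent G := by
    rintro y ⟨S0, ⟨hS0G, hS0c, hS01⟩, hy⟩ a ha b hb
    let T : Set (GL (Fin n) F) := (fun x => a * x * a⁻¹ * x⁻¹ * y) '' (H : Set (GL (Fin n) F))
    have hT : IsPreconnected T := by
      apply hHirr.2.isPreconnected.image
      exact ((cont_mul_right y).comp (cont_comm_left a)).continuousOn
    have hyT : y ∈ T := ⟨1, one_mem H, by simp⟩
    refine ⟨S0 ∪ T, ⟨?_, ?_, Or.inl hS01⟩, Or.inr ⟨b, hb, rfl⟩⟩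
    · apply Set.union_subset hS0G
      rintro _ ⟨x, hx, rfl⟩
      exact mul_mem (hHH a ha x hx) (hS0G hy)
    · rw [conn_iff] at hS0c ⊢
      exact ⟨⟨1, Or.inl hS01⟩, IsPreconnected.union y hy hyT hS0c.2 hT⟩
  have h1C : (1 : GL (Fin n) F) ∈ identityComponent G :=
    ⟨{1}, ⟨by simp, (conn_iff _).mpr isConnected_singleton, rfl⟩, rfl⟩
  have hDC : ∀ d ∈ ⁅H, H⁆, d ∈ identityComponent G := by
    intro d hd
    rw [Subgroup.commutator_def] at hd
    induction hd using Subgroup.closure_induction_left with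
    | one => exact h1C
    | mul_left x hx y hy ih =>
      obtain ⟨a, ha, b, hb, rfl⟩ := hx
      exact hstep y ih a ha b hb
    | inv_mul_cancel x hx y hy ih =>
      obtain ⟨a, ha, b, hb, rfl⟩ := hx
      rw [commutatorElement_inv]
      exact hstep y ih b hb a ha
  have hDI : ⁅H, H⁆ ≤ idCompSubgroup G := fun d hd => Subgroup.subset_closure (hDC d hd)
  have hDG : ⁅H, H⁆ ≤ G := by
    rw [Subgroup.commutator_le]
    exact fun a ha b hb => hHH a ha b hb
  have hDD : ⁅H, H⁆ ≤ derSubgroup G := by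
    refine le_trans ?_ (Subgroup.commutator_mono hDI hDI)
    refine Subgroup.commutator_le.mpr ?_
    intro a ha b hb
    obtain ⟨c, d, hd, rfl⟩ := hH a ha
    obtain ⟨c', d', hd', rfl⟩ := hH b hb
    have : scalarGL n c * d * (scalarGL n c' * d') * (scalarGL n c * d)⁻¹ * (scalarGL n c' * d')⁻¹
        = d * d' * d⁻¹ * d'⁻¹ := by
      have e0 := scalarGL_comm c (n := n) d
      have e1 := scalarGL_comm c (n := n) d'
      have e2 := scalarGL_comm c' (n := n) d⁻¹
      have e3 := scalarGL_comm c (n := n) (scalarGL n c')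
      have e4 := scalarGL_comm c' (n := n) d'
      rw [e0, e4, _root_.mul_inv_rev, _root_.mul_inv_rev]
      calc _ = d * (scalarGL n c * d') * scalarGL n c' * (scalarGL n c)⁻¹ * d⁻¹ * (scalarGL n c')⁻¹ * d'⁻¹ := by
            simp only [mul_assoc]
        _ = d * d' * (scalarGL n c * scalarGL n c') * (scalarGL n c)⁻¹ * d⁻¹ * (scalarGL n c')⁻¹ * d'⁻¹ := by
            rw [e1]; simp only [mul_assoc]
        _ = d * d' * (scalarGL n c' * d⁻¹) * (scalarGL n c')⁻¹ * d'⁻¹ := by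
            rw [e3]; simp only [mul_assoc, mul_inv_cancel_left]
        _ = _ := by rw [e2]; simp [mul_assoc]
    change scalarGL n c * d * (scalarGL n c' * d') * (scalarGL n c * d)⁻¹ *
      (scalarGL n c' * d')⁻¹ ∈ _
    rw [this]
    exact Subgroup.commutator_mem_commutator hd hd'
  have hZ : Nat.card (Subgroup.center G) = N := by
    rw [← hcard]
    refine Nat.card_congr ⟨fun z => ⟨z.1.1, z.1.2, fun g hg => ?_⟩, fun z => ⟨⟨z.1, z.2.1⟩, ?_⟩, ?_, ?_⟩
    · exact (congrArg Subtype.val (Subgroup.mem_center_iff.mp z.2 ⟨g, hg⟩)).symm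
    · rw [Subgroup.mem_center_iff]
      exact fun g => Subtype.ext (z.2.2 g.1 g.2).symm
    · intro z; rfl
    · intro z; rfl
  have hdec : ∀ z ∈ G, ∃ c : Fˣ, ∃ d ∈ ⁅H, H⁆, z = scalarGL n c * d ∧ scalarGL n c ∈ G := by
    intro z hz
    obtain ⟨c, d, hd, e⟩ := hH z (hSH z (hGS z hz))
    refine ⟨c, d, hd, e, ?_⟩
    have : scalarGL n c = z * d⁻¹ := by rw [e]; simp
    rw [this]
    exact mul_mem hz (inv_mem (hDG hd))
  have hcen : ∀ c : Fˣ, ∀ h : scalarGL n c ∈ G, (⟨scalarGL n c, h⟩ : G) ∈ Subgroup.center G := by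
    intro c h
    rw [Subgroup.mem_center_iff]
    exact fun g => Subtype.ext (scalarGL_comm c g.1).symm
  constructor
  · intro z hz
    obtain ⟨c, d, hd, e, hcG⟩ := hdec z hz
    refine ⟨c, ?_, d, hDD hd, e⟩
    have h1 : (⟨⟨scalarGL n c, hcG⟩, hcen c hcG⟩ : Subgroup.center G) ^ Nat.card (Subgroup.center G) = 1 :=
      pow_card_eq_one'
    rw [hZ] at h1
    have h2 : (scalarGL n c : GL (Fin n) F) ^ N = 1 :=
      congrArg (fun x : Subgroup.center G => ((x : G) : GL (Fin n) F)) h1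
    apply scalarGL_inj hirr.1
    rw [scalarGL_one, ← h2]
    exact map_pow _ _ _
  · set K := (idCompSubgroup G).subgroupOf G
    have : MulAction.IsPretransitive (Subgroup.center G) (G ⧸ K) := by
      have hb : ∀ q : G ⧸ K, ∃ z : Subgroup.center G, z • ((1 : G) : G ⧸ K) = q := by
        intro q
        induction q using QuotientGroup.induction_on with
        | H g =>
          obtain ⟨c, d, hd, e, hcG⟩ := hdec g.1 g.2
          refine ⟨⟨⟨scalarGL n c, hcG⟩, hcen c hcG⟩, ?_⟩
          change ((⟨scalarGL n c, hcG⟩ * 1 : G) : G ⧸ K) = (g : G ⧸ K)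
          rw [QuotientGroup.eq, Subgroup.mem_subgroupOf]
          have : ((((⟨scalarGL n c, hcG⟩ : G) * 1)⁻¹ * g : G) : GL (Fin n) F) = d := by
            simp [e]
          rw [this]
          exact hDI hd
      constructor
      intro x y
      obtain ⟨z, rfl⟩ := hb x
      obtain ⟨z', rfl⟩ := hb y
      exact ⟨z' * z⁻¹, by simp [mul_smul]⟩
    have h2 := MulAction.index_stabilizer_of_transitive (Subgroup.center G) ((1 : G) : G ⧸ K)
    rw [← h2, ← hZ]
    exact Subgroup.index_dvd_card _

end Fin
end ZG


namespace ZG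

noncomputable section Phi2
open MvPolynomial
universe u
variable {F : Type u} [Field F] {n : ℕ}


theorem det_change {V R : Type*} [AddCommGroup V] [Module F V] [CommRing R] [Algebra F R] {e : ℕ}
    (b : Module.Basis (Fin e) F V) (u : Fin e → V →ₗ[F] R) (L : V →ₗ[F] V) :
    (Matrix.of fun i j => u j (L (b i))).det =
      algebraMap F R (LinearMap.det L) * (Matrix.of fun i j => u j (b i)).det := by
  have h1 : (Matrix.of fun i j => u j (L (b i))) =
      ((LinearMap.toMatrix b b L)ᵀ.map (algebraMap F R)) * (Matrix.of fun i j => u j (b i)) := by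
    ext i j
    rw [Matrix.mul_apply, Matrix.of_apply, ← b.sum_repr (L (b i)), map_sum]
    apply Finset.sum_congr rfl
    intro k _
    rw [map_smul, Algebra.smul_def]
    simp [LinearMap.toMatrix_apply]
  rw [h1, Matrix.det_mul, ← LinearMap.det_toMatrix b]
  congr 1
  have := RingHom.map_det (algebraMap F R) (LinearMap.toMatrix b b L)ᵀ
  rw [Matrix.det_transpose] at this
  rw [this]; rfl

/-- the j-th copy -/
def tau {e : ℕ} (j : Fin e) : Fin n × Fin n → Fin n × (Fin n × Fin e) := fun q => (q.1, (q.2, j))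

theorem act_rename {e : ℕ} (j : Fin e) (A : Matrix (Fin n) (Fin n) F)
    (p : MvPolynomial (Fin n × Fin n) F) : act A (rename (tau j) p) = rename (tau j) (act A p) := by
  induction p using MvPolynomial.induction_on with
  | C a => simp [act]
  | add p q hp hq => simp [hp, hq]
  | mul_X p q hp => simp [hp, tau]

/-- the determinant form -/
def PhiP {D : Subgroup (GL (Fin n) F)} {r e : ℕ} (b : Module.Basis (Fin e) F (JJ D r)) :
    MvPolynomial (Fin n × (Fin n × Fin e)) F :=
  (Matrix.of fun i j : Fin e => rename (tau j) (b i : MvPolynomial (Fin n × Fin n) F)).det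

theorem PhiP_hom {D : Subgroup (GL (Fin n) F)} {r e : ℕ} (b : Module.Basis (Fin e) F (JJ D r)) :
    (PhiP b).IsHomogeneous (e * r) := by
  rw [PhiP, Matrix.det_apply']
  apply IsHomogeneous.sum
  intro σ _
  have h1 : (∏ i : Fin e, rename (tau i) (b (σ i) : MvPolynomial (Fin n × Fin n) F)).IsHomogeneous
      (∑ _i : Fin e, r) := by
    apply IsHomogeneous.prod
    intro i _
    exact (b (σ i)).2.1.rename_isHomogeneous
  rw [Finset.sum_const, Finset.card_univ, Fintype.card_fin, smul_eq_mul] at h1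
  have h2 := (isHomogeneous_C (Fin n × (Fin n × Fin e)) ((Equiv.Perm.sign σ : ℤ) : F)).mul h1
  rw [zero_add] at h2
  simpa using h2

theorem act_PhiP {D : Subgroup (GL (Fin n) F)} {r e : ℕ} (b : Module.Basis (Fin e) F (JJ D r))
    (A : Matrix (Fin n) (Fin n) F) : act A (PhiP b) =
    (Matrix.of fun i j : Fin e => rename (tau j) (act A (b i : MvPolynomial (Fin n × Fin n) F))).det := by
  rw [PhiP, AlgHom.map_det]
  congr 1
  ext1 i j
  exact act_rename j A _

theorem PhiP_semi {D : Subgroup (GL (Fin n) F)} {r e : ℕ} (b : Module.Basis (Fin e) F (JJ D r))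
    {d : GL (Fin n) F} (hd : d ∈ D) : actG d (PhiP b) = psi D r d • PhiP b := by
  rw [actG, act_PhiP, psi, dif_pos hd]
  have := det_change b (fun j : Fin e => (rename (tau j) : _ →ₐ[F] MvPolynomial (Fin n × (Fin n × Fin e)) F).toLinearMap
    ∘ₗ (JJ D r).subtype) ((actG d).toLinearMap.restrict (LJ_mem (r := r) hd))
  rw [Algebra.smul_def]
  exact this

theorem PhiP_eval {D : Subgroup (GL (Fin n) F)} {r e : ℕ} (b : Module.Basis (Fin e) F (JJ D r))
    (Y : Fin e → Matrix (Fin n) (Fin n) F) :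
    eval (fun q : Fin n × (Fin n × Fin e) => Y q.2.2 q.1 q.2.1) (PhiP b) =
    (Matrix.of fun i j : Fin e => eval (fun q => Y j q.1 q.2) (b i : MvPolynomial (Fin n × Fin n) F)).det := by
  rw [PhiP, RingHom.map_det]
  congr 1
  ext1 i j
  change eval _ (rename _ _) = _
  rw [eval_rename]
  rfl

theorem JJ_sep [Infinite F] {D : Subgroup (GL (Fin n) F)} {r : ℕ} (f : JJ D r)
    (h : ∀ g : GL (Fin n) F, evG g (f : MvPolynomial (Fin n × Fin n) F) = 0) : f = 0 := by
  apply Subtype.ext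
  have h1 : (f : MvPolynomial (Fin n × Fin n) F) * detP F n = 0 := by
    apply ext_mat
    intro x
    rw [map_mul, map_zero]
    by_cases hx : x.det = 0
    · have : eval (fun q => x q.1 q.2) (detP F n) = x.det := by
        unfold detP
        rw [RingHom.map_det]
        congr 1
        ext1 i j
        simp
      rw [this, hx, mul_zero]
    · have := h (Matrix.GeneralLinearGroup.mkOfDetNeZero x hx)
      have h3 : eval (fun q => x q.1 q.2) (f : MvPolynomial (Fin n × Fin n) F) = 0 := this
      rw [h3, zero_mul]
  rcases mul_eq_zero.mp h1 with h2 | h2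
  · exact h2
  · have := evG_detP (1 : GL (Fin n) F)
    rw [h2] at this
    simp at this

/-- evaluation functional -/
def evD (D : Subgroup (GL (Fin n) F)) (r : ℕ) (g : GL (Fin n) F) : Module.Dual F (JJ D r) where
  toFun f := evG g f
  map_add' := fun a b => map_add (evG g) _ _
  map_smul' := fun c a => by
    change evG g (c • (a : MvPolynomial _ F)) = c * evG g a
    rw [smul_eq_C_mul, map_mul]
    congr 1
    simp [evG]

theorem Phi_exists [Infinite F] {D : Subgroup (GL (Fin n) F)} {r : ℕ} (h0 : GL (Fin n) F)
    (f : MvPolynomial (Fin n × Fin n) F) (hf : f ∈ JJ D r) (hf0 : evG h0 f ≠ 0) {e : ℕ}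
    (b : Module.Basis (Fin e) F (JJ D r)) : ∃ x : Fin n × (Fin n × Fin e) → F,
      eval x (PhiP b) = 0 ∧ eval x (actG h0 (PhiP b)) ≠ 0 := by
  obtain ⟨Y, ⟨j0, hj0⟩, hdet⟩ := dual_pick (evD D r) (fun v hv => JJ_sep v hv) h0
    (fun h => hf0 (DFunLike.congr_fun h (⟨f, hf⟩ : JJ D r))) b
  refine ⟨fun q => ((h0⁻¹ * Y q.2.2 : GL (Fin n) F) : Matrix (Fin n) (Fin n) F) q.1 q.2.1, ?_, ?_⟩
  · have := PhiP_eval b (fun j => ((h0⁻¹ * Y j : GL (Fin n) F) : Matrix (Fin n) (Fin n) F))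
    refine this.trans ?_
    apply Matrix.det_eq_zero_of_column_eq_zero j0
    intro i
    have h1 := (b i).2.2 1 D.one_mem
    rw [Matrix.of_apply, hj0, inv_mul_cancel]
    exact h1
  · rw [act_eval]
    have h1 : (fun q : Fin n × (Fin n × Fin e) => ∑ l, (h0 : Matrix (Fin n) (Fin n) F) q.1 l *
        ((h0⁻¹ * Y q.2.2 : GL (Fin n) F) : Matrix (Fin n) (Fin n) F) l q.2.1)
        = (fun q : Fin n × (Fin n × Fin e) => (Y q.2.2 : Matrix (Fin n) (Fin n) F) q.1 q.2.1) := by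
      funext q
      rw [← Matrix.mul_apply, ← Units.val_mul, mul_inv_cancel_left]
    have h2 := PhiP_eval b (fun j => (Y j : Matrix (Fin n) (Fin n) F))
    intro h3
    apply hdet
    rw [← h3]
    refine h2.symm.trans ?_
    exact congrArg (fun x => eval x (PhiP b)) h1.symm

theorem psi_pow (H : Subgroup (GL (Fin n) F)) (ι : Type*) [Finite ι] (s : ℕ) (ψ : GL (Fin n) F → F)
    (hψ : ∀ h ∈ H, ∀ d ∈ ⁅H, H⁆, ψ (h * d * h⁻¹) = ψ d) :
    ∀ d ∈ ⁅H, H⁆, ψ d ^ Module.finrank F (semi H ι s ψ) = 1 := by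
  let R : H → (semi H ι s ψ →ₗ[F] semi H ι s ψ) := fun h =>
    (actG (h : GL (Fin n) F)).toLinearMap.restrict (fun m hm => semi_stable hψ h.2 hm)
  have R1 : R 1 = LinearMap.id := by
    ext1 m
    apply Subtype.ext
    exact actG_one _
  have R2 : ∀ a b, R (a * b) = R b ∘ₗ R a := by
    intro a b
    ext1 m
    apply Subtype.ext
    exact actG_mul _ _ _
  let δ : H →* F := {
    toFun := fun h => LinearMap.det (R h)
    map_one' := by rw [R1, LinearMap.det_id]
    map_mul' := fun a b => by rw [R2, LinearMap.det_comp, mul_comm] }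
  have hker : ⁅H, H⁆ ≤ (MonoidHom.ker δ).map H.subtype := by
    rw [Subgroup.commutator_le]
    intro a ha b hb
    refine ⟨(⟨a, ha⟩ : H) * (⟨b, hb⟩ : H) * (⟨a, ha⟩ : H)⁻¹ * (⟨b, hb⟩ : H)⁻¹, ?_, rfl⟩
    rw [SetLike.mem_coe, MonoidHom.mem_ker, map_mul, map_mul, map_mul]
    have e1 : δ ⟨a, ha⟩ * δ (⟨a, ha⟩ : H)⁻¹ = 1 := by rw [← map_mul, mul_inv_cancel, map_one]
    have e2 : δ ⟨b, hb⟩ * δ (⟨b, hb⟩ : H)⁻¹ = 1 := by rw [← map_mul, mul_inv_cancel, map_one]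
    calc _ = (δ ⟨a, ha⟩ * δ (⟨a, ha⟩ : H)⁻¹) * (δ ⟨b, hb⟩ * δ (⟨b, hb⟩ : H)⁻¹) := by ring
      _ = 1 := by rw [e1, e2, one_mul]
  intro d hd
  obtain ⟨x, hx, rfl⟩ := hker hd
  have h1 : LinearMap.det (R x) = 1 := hx
  have h2 : R x = ψ (x : GL (Fin n) F) • LinearMap.id := by
    ext1 m
    apply Subtype.ext
    exact m.2.2 _ hd
  rw [h2, LinearMap.det_smul, LinearMap.det_id, mul_one] at h1
  exact h1

theorem semi_pow {H : Subgroup (GL (Fin n) F)} {ι : Type*} {s : ℕ} {ψ : GL (Fin n) F → F}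
    {f : MvPolynomial (Fin n × ι) F} (hf : f ∈ semi H ι s ψ) (E : ℕ)
    (hE : ∀ d ∈ ⁅H, H⁆, ψ d ^ E = 1) :
    f ^ (n * E) ∈ semi H ι (n * (s * E)) (fun _ => 1) := by
  refine ⟨?_, fun d hd => ?_⟩
  · have := hf.1.pow (n * E)
    have h2 : s * (n * E) = n * (s * E) := by ring
    rwa [h2] at this
  · rw [map_pow, hf.2 d hd, smul_pow, mul_comm n E, pow_mul, hE d hd, one_pow]

theorem dense_thm [IsAlgClosed F] (H : Subgroup (GL (Fin n) F)) (hirr : IrredOn H)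
    (hH : IsIrreducible (H : Set (GL (Fin n) F))) :
    ∀ p, (∀ c : Fˣ, ∀ d ∈ ⁅H, H⁆, evG (scalarGL n c * d) p = 0) → ∀ h ∈ H, evG h p = 0 := by
  have : Infinite F := IsAlgClosed.instInfinite
  intro p hp h0 hh0
  by_contra hne
  obtain ⟨r, f, hf, hfD, hf0⟩ := homog_red ⁅H, H⁆ p hp h0 hne
  let b := Module.finBasis F (JJ ⁅H, H⁆ r)
  obtain ⟨x, hx1, hx2⟩ := Phi_exists h0 f ⟨hf, hfD⟩ hf0 b
  have hmem : PhiP b ∈ semi H (Fin n × Fin (Module.finrank F (JJ ⁅H, H⁆ r)))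
      (Module.finrank F (JJ ⁅H, H⁆ r) * r) (psi ⁅H, H⁆ r) :=
    ⟨PhiP_hom b, fun d hd => PhiP_semi b hd⟩
  have hE := psi_pow H (Fin n × Fin (Module.finrank F (JJ ⁅H, H⁆ r)))
    (Module.finrank F (JJ ⁅H, H⁆ r) * r) (psi ⁅H, H⁆ r) (psi_conj H r)
  have hPhi0 : PhiP b ≠ 0 := by
    intro h
    rw [h, map_zero, map_zero] at hx2
    exact hx2 rfl
  have hEpos : 0 < Module.finrank F (semi H (Fin n × Fin (Module.finrank F (JJ ⁅H, H⁆ r)))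
      (Module.finrank F (JJ ⁅H, H⁆ r) * r) (psi ⁅H, H⁆ r)) := by
    rw [Module.finrank_pos_iff_exists_ne_zero]
    exact ⟨⟨PhiP b, hmem⟩, fun h => hPhi0 (congrArg Subtype.val h)⟩
  refine val_thm H hirr hH _ _ (semi_pow hmem _ hE) h0 hh0 ?_
  intro c hc
  have := congrArg (eval x) hc
  rw [map_pow, map_pow, map_mul, map_pow, hx1, zero_pow (Nat.mul_pos hirr.1 hEpos).ne', mul_zero] at this
  exact hx2 (pow_eq_zero_iff (Nat.mul_pos hirr.1 hEpos).ne' |>.mp this)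

theorem thmA [IsAlgClosed F] : ThmA F n := by
  intro H hc hH hs hirr
  exact part2 hirr.1 H hc hH hs (dense_thm H hirr hH)

end Phi2
end ZG

open Matrix in
/-- Let `G ⊆ GL_n(F)` be a closed subgroup acting irreducibly on `F^n`
with `G/Z(G)` connected (encoded via the scalar saturation), and suppose the center
`Z(G)` is finite of order `N`.  Then every element of `G` is `ζ·g` with `ζ` an `N`-th
root of unity (as a scalar matrix) and `g ∈ G^der`, and the order of the component group
`G/G°` divides `N`. -/
theorem scalar_times_derived_and_component_group {F : Type*} [Field F] [IsAlgClosed F]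
    {n : ℕ} (G : Subgroup (GL (Fin n) F))
    (hclosed : GLZClosed (G : Set (GL (Fin n) F)))
    (hirr : IrredOn G)
    (hconn : GLZConnected (scalarSaturation (G : Set (GL (Fin n) F))))
    (N : ℕ) (hN : 0 < N)
    (hZfin : (centerSet (G : Set (GL (Fin n) F))).Finite)
    (hcard : Nat.card (centerSet (G : Set (GL (Fin n) F))) = N) :
    (∀ z ∈ G, ∃ ζ : Fˣ, ζ ^ N = 1 ∧ ∃ g ∈ derSubgroup G, z = scalarGL n ζ * g) ∧
    Nat.card (G ⧸ (idCompSubgroup G).subgroupOf G) ∣ N := by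
  exact ZG.final ZG.thmA G hclosed hirr hconn N hcard
end

section
/- Let G be a connected reductive group over an algebraically closed field F and let V be a finite-dimensional representation of G with zero weight multiplicity n₀ = 0 (the zero weight space for a maximal torus of G is trivial). Then the set { g ∈ G : 1 is an eigenvalue of g on V } is a proper Zariski-closed conjugation-invariant subset of G. -/
open Matrix

noncomputable section
open Matrix
variable {F : Type*} [Field F] {n m : ℕ}

/-- A torus in `G ⊆ GL_n(F)`: a Zariski-closed, Zariski-connected subgroup of `G` that is
simultaneously diagonalizable. -/
def IsTorusIn (G T : Subgroup (GL (Fin n) F)) : Prop :=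
  T ≤ G ∧ GLZClosed (T : Set (GL (Fin n) F)) ∧ GLZConnected (T : Set (GL (Fin n) F)) ∧
  ∃ P : GL (Fin n) F, ∀ t ∈ T, ∃ d : Fin n → F,
    ((P * t * P⁻¹ : GL (Fin n) F) : Matrix (Fin n) (Fin n) F) = Matrix.diagonal d

/-- A maximal torus of `G`. -/
def IsMaximalTorusIn (G T : Subgroup (GL (Fin n) F)) : Prop :=
  IsTorusIn G T ∧ ∀ T' : Subgroup (GL (Fin n) F), IsTorusIn G T' → T ≤ T' → T' = T

/-- A homomorphism `ρ : G → GL_m(F)` on a subgroup `G ⊆ GL_n(F)` is algebraic: its matrix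
entries are given by polynomials in the matrix entries of `g` and in `det(g)⁻¹`. -/
def IsAlgebraicOn (G : Subgroup (GL (Fin n) F)) (ρ : G →* GL (Fin m) F) : Prop :=
  ∃ P : Fin m × Fin m → MvPolynomial ((Fin n × Fin n) ⊕ Unit) F,
    ∀ (g : G) (i j : Fin m),
      (ρ g : Matrix (Fin m) (Fin m) F) i j =
        MvPolynomial.eval
          (Sum.elim (fun q => ((g : GL (Fin n) F) : Matrix (Fin n) (Fin n) F) q.1 q.2)
            (fun _ => (((g : GL (Fin n) F) : Matrix (Fin n) (Fin n) F).det)⁻¹))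
          (P (i, j))

end

section Helpers

theorem glz_iff {F : Type*} [Field F] {n : ℕ} (S : Set (GL (Fin n) F)) :
    GLZClosed S ↔ ∃ I : Set (MvPolynomial (Fin n × Fin n) F),
      S = {g : GL (Fin n) F | ∀ p ∈ I, MvPolynomial.eval
        (fun q => (g : Matrix (Fin n) (Fin n) F) q.1 q.2) p = 0} := by
  constructor
  · rintro ⟨C, ⟨I, rfl⟩, rfl⟩
    exact ⟨I, rfl⟩
  · rintro ⟨I, rfl⟩
    exact ⟨_, ⟨I, rfl⟩, rfl⟩

theorem glz_union {F : Type*} [Field F] {n : ℕ} {S U : Set (GL (Fin n) F)}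
    (hS : GLZClosed S) (hU : GLZClosed U) : GLZClosed (S ∪ U) := by
  rw [glz_iff] at *
  obtain ⟨I, rfl⟩ := hS
  obtain ⟨J, rfl⟩ := hU
  refine ⟨{r | ∃ p ∈ I, ∃ q ∈ J, r = p * q}, ?_⟩
  ext g
  simp only [Set.mem_union, Set.mem_ofPred_eq]
  constructor
  · rintro (h | h) r ⟨p, hp, q, hq, rfl⟩
    · simp [h p hp]
    · simp [h q hq]
  · intro h
    by_contra! hc
    obtain ⟨⟨p, hp, hp0⟩, q, hq, hq0⟩ := hc
    have := h _ ⟨p, hp, q, hq, rfl⟩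
    rw [map_mul] at this
    exact (mul_ne_zero hp0 hq0) this

theorem glz_empty {F : Type*} [Field F] {n : ℕ} : GLZClosed (∅ : Set (GL (Fin n) F)) := by
  rw [glz_iff]
  refine ⟨{1}, ?_⟩
  ext g
  simp

theorem glz_biUnion {F : Type*} [Field F] {n : ℕ} {ι : Type*} (s : Finset ι)
    (C : ι → Set (GL (Fin n) F)) (h : ∀ i ∈ s, GLZClosed (C i)) :
    GLZClosed (⋃ i ∈ s, C i) := by
  classical
  induction s using Finset.induction_on with
  | empty => simpa using glz_empty
  | insert a s ha ih =>
    rw [Finset.set_biUnion_insert]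
    exact glz_union (h a (by simp)) (ih fun i hi => h i (by simp [hi]))

theorem glz_iInter {F : Type*} [Field F] {n : ℕ} {ι : Type*}
    (C : ι → Set (GL (Fin n) F)) (h : ∀ i, GLZClosed (C i)) :
    GLZClosed (⋂ i, C i) := by
  simp only [glz_iff] at *
  choose I hI using h
  refine ⟨⋃ i, I i, ?_⟩
  ext g
  simp only [Set.mem_iInter, Set.mem_ofPred_eq, Set.mem_iUnion]
  constructor
  · rintro h p ⟨i, hp⟩
    have := h i
    rw [hI i] at this
    exact this p hp
  · intro h i
    rw [hI i]
    exact fun p hp => h p ⟨i, hp⟩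

theorem glz_translate {F : Type*} [Field F] {n : ℕ} {S : Set (GL (Fin n) F)}
    (hS : GLZClosed S) (a : GL (Fin n) F) : GLZClosed {g | a * g ∈ S} := by
  rw [glz_iff] at *
  obtain ⟨I, rfl⟩ := hS
  let φ : MvPolynomial (Fin n × Fin n) F →ₐ[F] MvPolynomial (Fin n × Fin n) F :=
    MvPolynomial.aeval fun q => ∑ k, MvPolynomial.C ((a : Matrix (Fin n) (Fin n) F) q.1 k) *
      MvPolynomial.X (k, q.2)
  have key : ∀ (g : GL (Fin n) F) (p : MvPolynomial (Fin n × Fin n) F),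
      MvPolynomial.eval (fun q => (g : Matrix (Fin n) (Fin n) F) q.1 q.2) (φ p) =
      MvPolynomial.eval
        (fun q => ((a * g : GL (Fin n) F) : Matrix (Fin n) (Fin n) F) q.1 q.2) p := by
    intro g p
    induction p using MvPolynomial.induction_on with
    | C c => simp [φ]
    | add p q hp hq => rw [map_add, map_add, map_add, hp, hq]
    | mul_X p q hp =>
      rw [map_mul, map_mul, map_mul, hp]
      congr 1
      simp [φ, Matrix.mul_apply]
  refine ⟨Set.image φ I, ?_⟩
  ext g
  simp only [Set.mem_ofPred_eq, Set.forall_mem_image, key]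

theorem glz_clear {F : Type*} [Field F] {n : ℕ} (q : MvPolynomial ((Fin n × Fin n) ⊕ Unit) F) :
    ∃ (k : ℕ) (p : MvPolynomial (Fin n × Fin n) F), ∀ g : GL (Fin n) F,
      MvPolynomial.eval (fun q => (g : Matrix (Fin n) (Fin n) F) q.1 q.2) p =
      (g : Matrix (Fin n) (Fin n) F).det ^ k * MvPolynomial.eval
        (Sum.elim (fun q => (g : Matrix (Fin n) (Fin n) F) q.1 q.2)
            (fun _ => ((g : Matrix (Fin n) (Fin n) F).det)⁻¹)) q := by
  obtain ⟨D, hD⟩ : ∃ D : MvPolynomial (Fin n × Fin n) F, ∀ g : GL (Fin n) F,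
      MvPolynomial.eval (fun q => (g : Matrix (Fin n) (Fin n) F) q.1 q.2) D =
      (g : Matrix (Fin n) (Fin n) F).det := by
    refine ⟨(Matrix.of fun i j => MvPolynomial.X (i, j)).det, fun g => ?_⟩
    rw [RingHom.map_det]
    congr 1
    ext i j
    simp
  induction q using MvPolynomial.induction_on with
  | C c => exact ⟨0, MvPolynomial.C c, by simp⟩
  | add q r hq hr =>
    obtain ⟨k, p, hp⟩ := hq
    obtain ⟨l, s, hs⟩ := hr
    refine ⟨k + l, p * D ^ l + s * D ^ k, fun g => ?_⟩
    simp only [map_add, map_mul, map_pow, hp, hs, hD]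
    ring
  | mul_X q i hq =>
    obtain ⟨k, p, hp⟩ := hq
    rcases i with i | i
    · refine ⟨k, p * MvPolynomial.X i, fun g => ?_⟩
      simp only [map_mul, hp, MvPolynomial.eval_X, Sum.elim_inl]
      ring
    · refine ⟨k + 1, p, fun g => ?_⟩
      have hg : (g : Matrix (Fin n) (Fin n) F).det ≠ 0 :=
        ((Matrix.isUnit_iff_isUnit_det _).1 g.isUnit).ne_zero
      simp only [map_mul, hp, MvPolynomial.eval_X, Sum.elim_inr]
      rw [pow_succ, mul_comm (MvPolynomial.eval _ q), ← mul_assoc, mul_assoc (_ ^ k),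
        mul_inv_cancel₀ hg, mul_one]

theorem glz_zero {F : Type*} [Field F] {n : ℕ} (q : MvPolynomial ((Fin n × Fin n) ⊕ Unit) F) :
    GLZClosed {g : GL (Fin n) F | MvPolynomial.eval
        (Sum.elim (fun q => (g : Matrix (Fin n) (Fin n) F) q.1 q.2)
            (fun _ => ((g : Matrix (Fin n) (Fin n) F).det)⁻¹)) q = 0} := by
  obtain ⟨k, p, hp⟩ := glz_clear q
  rw [glz_iff]
  refine ⟨{p}, ?_⟩
  ext g
  have hg : (g : Matrix (Fin n) (Fin n) F).det ≠ 0 :=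
    ((Matrix.isUnit_iff_isUnit_det _).1 g.isUnit).ne_zero
  simp [hp, hg]

/-- A relatively closed finite index subgroup of a connected group is everything. -/
theorem conn_finiteIndex {F : Type*} [Field F] {n : ℕ} (T : Subgroup (GL (Fin n) F))
    (hc : GLZConnected (T : Set (GL (Fin n) F))) (K : Subgroup T) (hK : K.FiniteIndex)
    (C : Set (GL (Fin n) F)) (hC : GLZClosed C) (hKC : ∀ t : T, t ∈ K ↔ (t : GL (Fin n) F) ∈ C) :
    K = ⊤ := by
  classical
  have hfin : Finite (T ⧸ K) := inferInstance
  have := Fintype.ofFinite (T ⧸ K)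
  let s : Finset (T ⧸ K) := Finset.univ.filter (· ≠ ((1 : T) : T ⧸ K))
  let D : T ⧸ K → Set (GL (Fin n) F) := fun x => {g | ((x.out : T) : GL (Fin n) F)⁻¹ * g ∈ C}
  have hD : ∀ x (t : T), (t : GL (Fin n) F) ∈ D x ↔ x = (t : T ⧸ K) := by
    intro x t
    have h1 : (t : GL (Fin n) F) ∈ D x ↔ (x.out)⁻¹ * t ∈ K := by
      rw [hKC]; simp [D]
    rw [h1, ← QuotientGroup.eq, QuotientGroup.out_eq']
  by_contra hne
  obtain ⟨t, ht⟩ : ∃ t : T, t ∉ K := by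
    by_contra! h
    exact hne ((Subgroup.eq_top_iff' K).2 h)
  have hmem : ∀ t : T, (t : T ⧸ K) = ((1 : T) : T ⧸ K) ↔ t ∈ K := by
    intro t
    rw [eq_comm, QuotientGroup.eq]; simp
  have hV : ∀ t : T, (t : GL (Fin n) F) ∈ (⋃ x ∈ s, D x) ↔ t ∉ K := by
    intro t
    simp only [Set.mem_iUnion, hD, s, Finset.mem_filter, Finset.mem_univ, true_and,
      exists_prop, exists_eq_right, ne_eq, hmem]
  obtain ⟨x, hxT, hxC, hxV⟩ := hc.2 C (⋃ x ∈ s, D x) hC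
    (glz_biUnion _ _ fun x _ => glz_translate hC _) (by
      intro g hg
      by_cases h : (⟨g, hg⟩ : T) ∈ K
      · exact Or.inl ((hKC _).1 h)
      · exact Or.inr ((hV ⟨g, hg⟩).2 h))
    ⟨1, T.one_mem, (hKC 1).1 K.one_mem⟩ ⟨t, t.2, (hV t).2 ht⟩
  exact (hV ⟨x, hxT⟩).1 hxV ((hKC ⟨x, hxT⟩).2 hxC)

theorem common_eigenvector {F V ι : Type*} [Field F] [IsAlgClosed F] [AddCommGroup V]
    [Module F V] [FiniteDimensional F V] (f : ι → Module.End F V)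
    (hf : ∀ i j v, f i (f j v) = f j (f i v)) :
    ∀ (d : ℕ) (W : Submodule F V), Module.finrank F W = d → W ≠ ⊥ →
      (∀ i, ∀ w ∈ W, f i w ∈ W) →
      ∃ v ∈ W, v ≠ 0 ∧ ∃ χ : ι → F, ∀ i, f i v = χ i • v := by
  intro d
  induction d using Nat.strong_induction_on with
  | _ d ih =>
  intro W hd hW hinv
  by_cases h : ∀ i, ∃ c : F, ∀ w ∈ W, f i w = c • w
  · choose χ hχ using h
    obtain ⟨v, hv, hv0⟩ := Submodule.exists_mem_ne_zero_of_ne_bot hW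
    exact ⟨v, hv, hv0, χ, fun i => hχ i v hv⟩
  · push Not at h
    obtain ⟨i, hi⟩ := h
    have : Nontrivial W := Submodule.nontrivial_iff_ne_bot.2 hW
    obtain ⟨c, hc⟩ := Module.End.exists_eigenvalue ((f i).restrict (hinv i))
    obtain ⟨w, hw⟩ := hc.exists_hasEigenvector
    have hw1 : f i w = c • (w : V) := congrArg Subtype.val hw.apply_eq_smul
    let W' := W ⊓ Module.End.eigenspace (f i) c
    have hlt : W' < W := by
      refine lt_of_le_of_ne inf_le_left fun heq => ?_
      obtain ⟨x, hx, hne⟩ := hi c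
      rw [← heq] at hx
      exact hne (Module.End.mem_eigenspace_iff.1 hx.2)
    obtain ⟨v, hv, r⟩ := ih _ (hd ▸ Submodule.finrank_lt_finrank_of_lt hlt) W' rfl (by
      intro hb
      have : (w : V) ∈ W' := ⟨w.2, Module.End.mem_eigenspace_iff.2 hw1⟩
      rw [hb, Submodule.mem_bot] at this
      exact hw.2 (Subtype.ext this)) (by
      intro j x hx
      refine ⟨hinv j x hx.1, Module.End.mem_eigenspace_iff.2 ?_⟩
      rw [hf, Module.End.mem_eigenspace_iff.1 hx.2, map_smul])
    exact ⟨v, hv.1, r⟩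

theorem finite_weights {F V ι : Type*} [Field F] [AddCommGroup V]
    [Module F V] [FiniteDimensional F V] (f : ι → Module.End F V)
    (hf : ∀ i j v, f i (f j v) = f j (f i v)) :
    {χ : ι → F | ∃ v : V, v ≠ 0 ∧ ∀ i, f i v = χ i • v}.Finite := by
  have hind := Module.End.independent_iInf_maxGenEigenspace_of_forall_mapsTo f
    (fun i j c => Module.End.mapsTo_maxGenEigenspace_of_comm
      (LinearMap.ext fun v => hf j i v) c)
  refine (WellFoundedGT.finite_ne_bot_of_iSupIndep hind).subset ?_
  rintro χ ⟨v, hv, h⟩ hb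
  apply hv
  have : v ∈ ⨅ i, (f i).maxGenEigenspace (χ i) := by
    rw [Submodule.mem_iInf]
    intro i
    rw [Module.End.mem_maxGenEigenspace]
    exact ⟨1, by simp [h i]⟩
  rw [hb] at this
  simpa using this

open Pointwise in
theorem finiteIndex_of_cover {T ι : Type*} [Group T] (s : Finset ι) (H : ι → Subgroup T)
    (h : ∀ t : T, ∃ i ∈ s, t ∈ H i) : ∃ i ∈ s, (H i).FiniteIndex := by
  refine Subgroup.exists_finiteIndex_of_leftCoset_cover (g := fun _ => (1 : T)) ?_
  rw [Set.eq_univ_iff_forall]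
  intro t
  obtain ⟨i, hi, ht⟩ := h t
  simp only [Set.mem_iUnion, one_smul]
  exact ⟨i, hi, ht⟩

end Helpers

open Matrix in
/-- Let `G ⊆ GL_n(F)` be connected reductive, and `V = F^m` a
finite-dimensional algebraic representation `ρ` of `G` whose zero weight multiplicity is
`0` (the fixed space of a maximal torus `T` of `G` is trivial).  Then
`{ g ∈ G : 1 is an eigenvalue of ρ(g) on V }` is a proper, relatively Zariski-closed,
conjugation-invariant subset of `G`. -/
theorem eigenvalue_one_locus_of_no_zero_weight {F : Type*} [Field F] [IsAlgClosed F]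
    {n m : ℕ} (G : Subgroup (GL (Fin n) F))
    (hclosed : GLZClosed (G : Set (GL (Fin n) F)))
    (hconn : GLZConnected (G : Set (GL (Fin n) F)))
    (hred : LinearlyReductiveOn (G : Set (GL (Fin n) F)))
    (ρ : G →* GL (Fin m) F) (halg : IsAlgebraicOn G ρ)
    (T : Subgroup (GL (Fin n) F)) (hT : IsMaximalTorusIn G T)
    (hwt0 : ∀ v : Fin m → F,
      (∀ t : G, (t : GL (Fin n) F) ∈ T →
        Matrix.mulVec ((ρ t : GL (Fin m) F) : Matrix (Fin m) (Fin m) F) v = v) → v = 0) :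
    let Y : Set (GL (Fin n) F) := {g : GL (Fin n) F | ∃ hg : g ∈ G, ∃ v : Fin m → F,
      v ≠ 0 ∧ Matrix.mulVec ((ρ ⟨g, hg⟩ : GL (Fin m) F) : Matrix (Fin m) (Fin m) F) v = v}
    (∃ C : Set (GL (Fin n) F), GLZClosed C ∧ Y = (G : Set (GL (Fin n) F)) ∩ C) ∧
    Y ⊂ (G : Set (GL (Fin n) F)) ∧
    (∀ g ∈ Y, ∀ h ∈ G, h * g * h⁻¹ ∈ Y) := by
  intro Y
  obtain ⟨P, hP⟩ := halg
  refine ⟨?_, ⟨fun g hg => hg.1, fun hGY => ?_⟩, ?_⟩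
  · refine ⟨_, glz_zero ((Matrix.of fun i j => P (i, j)) - 1).det, ?_⟩
    have key : ∀ g (hg : g ∈ G), MvPolynomial.eval
        (Sum.elim (fun q => (g : Matrix (Fin n) (Fin n) F) q.1 q.2)
            (fun _ => ((g : Matrix (Fin n) (Fin n) F).det)⁻¹))
            ((Matrix.of fun i j => P (i, j)) - 1).det =
        ((ρ ⟨g, hg⟩ : Matrix (Fin m) (Fin m) F) - 1).det := by
      intro g hg
      rw [RingHom.map_det]
      congr 1
      ext i j
      by_cases hij : i = j <;> simp [hP ⟨g, hg⟩, hij]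
    ext g
    simp only [Set.mem_inter_iff, Set.mem_ofPred_eq, SetLike.mem_coe, Y]
    rw [← exists_prop]
    refine exists_congr fun hg => ?_
    rw [key g hg, ← Matrix.exists_mulVec_eq_zero_iff]
    simp only [Matrix.sub_mulVec, Matrix.one_mulVec, sub_eq_zero]
  · obtain ⟨⟨hTG, -, hTc, Q, hQ⟩, -⟩ := hT
    have hcomm : ∀ s t : T, s * t = t * s := by
      intro s t
      obtain ⟨d, hd⟩ := hQ s s.2
      obtain ⟨e, he⟩ := hQ t t.2
      have h1 : (Q * s * Q⁻¹) * (Q * t * Q⁻¹) = (Q * t * Q⁻¹) * (Q * s * Q⁻¹ : GL (Fin n) F) := by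
        apply Units.ext
        rw [Units.val_mul (Q * s * Q⁻¹ : GL (Fin n) F), Units.val_mul (Q * t * Q⁻¹ : GL (Fin n) F),
          hd, he, Matrix.diagonal_mul_diagonal,
          Matrix.diagonal_mul_diagonal]
        simp only [mul_comm]
      have h2 : Q * (s * t : GL (Fin n) F) * Q⁻¹ = Q * (t * s : GL (Fin n) F) * Q⁻¹ := by
        simpa [mul_assoc] using h1
      exact Subtype.ext (mul_left_cancel (mul_right_cancel h2))
    let φ : T →* GL (Fin m) F := ρ.comp (Subgroup.inclusion hTG)
    let f : T → Module.End F (Fin m → F) :=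
      fun t => Matrix.mulVecLin (φ t : Matrix (Fin m) (Fin m) F)
    have fmul : ∀ s t v, f (s * t) v = f s (f t v) := by
      intro s t v
      simp [f, Matrix.mulVec_mulVec]
    have fone : ∀ v, f 1 v = v := by
      intro v
      simp [f]
    have hf : ∀ s t v, f s (f t v) = f t (f s v) := by
      intro s t v
      rw [← fmul, hcomm, fmul]
    let Stab : (Fin m → F) → Subgroup T := fun v =>
      { carrier := {t | f t v = v}
        one_mem' := fone v
        mul_mem' := by
          intro s t hs ht
          simp only [Set.mem_ofPred_eq] at *
          rw [fmul, ht, hs]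
        inv_mem' := by
          intro s hs
          simp only [Set.mem_ofPred_eq] at *
          conv_lhs => rw [← hs]
          rw [← fmul, inv_mul_cancel, fone] }
    have hStab : ∀ v t, t ∈ Stab v ↔ f t v = v := fun v t => Iff.rfl
    have hfin := finite_weights f hf
    let Λ := {χ : T → F | ∃ v : Fin m → F, v ≠ 0 ∧ ∀ i, f i v = χ i • v}
    have hex : ∀ χ : T → F, ∃ v : Fin m → F, χ ∈ Λ → v ≠ 0 ∧ ∀ i, f i v = χ i • v := by
      intro χ
      by_cases h : χ ∈ Λ
      · obtain ⟨v, hv⟩ := h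
        exact ⟨v, fun _ => hv⟩
      · exact ⟨0, fun h' => absurd h' h⟩
    choose vec hvec using hex
    have hcover : ∀ t : T, ∃ χ ∈ hfin.toFinset, t ∈ Stab (vec χ) := by
      intro t
      obtain ⟨hg, v, hv0, hv⟩ := hGY (hTG t.2)
      have hv' : f t v = (1 : F) • v := by rw [one_smul]; exact hv
      obtain ⟨w, hw, hw0, χ, hχ⟩ := common_eigenvector f hf _
        (Module.End.eigenspace (f t) 1) rfl
        (fun hb => hv0 (by
          have : v ∈ Module.End.eigenspace (f t) 1 := Module.End.mem_eigenspace_iff.2 hv'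
          rw [hb] at this
          simpa using this))
        (fun s x hx => Module.End.mem_eigenspace_iff.2 (by
          rw [hf, Module.End.mem_eigenspace_iff.1 hx, map_smul]))
      have hΛ : χ ∈ Λ := ⟨w, hw0, hχ⟩
      have h1 : χ t = 1 := by
        have := (hχ t).symm.trans (Module.End.mem_eigenspace_iff.1 hw)
        exact smul_left_injective F hw0 this
      refine ⟨χ, hfin.mem_toFinset.2 hΛ, ?_⟩
      change f t (vec χ) = vec χ
      rw [(hvec χ hΛ).2, h1, one_smul]
    obtain ⟨χ, hχ, hfi⟩ := finiteIndex_of_cover hfin.toFinset (fun χ => Stab (vec χ)) hcover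
    have hΛ : χ ∈ Λ := hfin.mem_toFinset.1 hχ
    obtain ⟨R, hR⟩ : ∃ R : Fin m → MvPolynomial ((Fin n × Fin n) ⊕ Unit) F,
        R = fun i => (∑ j, P (i, j) * MvPolynomial.C (vec χ j)) - MvPolynomial.C (vec χ i) :=
      ⟨_, rfl⟩
    have hC := glz_iInter _ fun i : Fin m => glz_zero (R i)
    have htop : Stab (vec χ) = ⊤ := by
      refine conn_finiteIndex T hTc (Stab (vec χ)) hfi _ hC fun t => ?_
      rw [hStab, funext_iff]
      simp only [Set.mem_iInter, Set.mem_ofPred_eq, hR, map_sub, map_sum, map_mul,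
        MvPolynomial.eval_C, sub_eq_zero]
      refine forall_congr' fun i => ?_
      have : f t (vec χ) i = ∑ j, (ρ ⟨t, hTG t.2⟩ : Matrix (Fin m) (Fin m) F) i j * vec χ j := rfl
      rw [this]
      simp only [hP ⟨t, hTG t.2⟩]
    refine (hvec χ hΛ).1 (hwt0 _ fun t ht => ?_)
    have : (⟨t, ht⟩ : T) ∈ Stab (vec χ) := by rw [htop]; trivial
    exact this
  · rintro g ⟨hg, v, hv0, hv⟩ h hh
    refine ⟨G.mul_mem (G.mul_mem hh hg) (G.inv_mem hh),
      (ρ ⟨h, hh⟩ : Matrix (Fin m) (Fin m) F) *ᵥ v, ?_, ?_⟩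
    · intro h0
      apply hv0
      have := congrArg (fun w => ((ρ ⟨h, hh⟩)⁻¹ : GL (Fin m) F).val *ᵥ w) h0
      simpa only [Matrix.mulVec_mulVec, ← Units.val_mul, inv_mul_cancel, Units.val_one,
        Matrix.one_mulVec, Matrix.mulVec_zero] using this
    · have e : (⟨h * g * h⁻¹, G.mul_mem (G.mul_mem hh hg) (G.inv_mem hh)⟩ : G) =
        ⟨h, hh⟩ * ⟨g, hg⟩ * ⟨h, hh⟩⁻¹ := rfl
      rw [e, Matrix.mulVec_mulVec, ← Units.val_mul, ← map_mul, inv_mul_cancel_right, map_mul,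
        Units.val_mul, ← Matrix.mulVec_mulVec, hv]
end
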